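/- arXiv:1810.00915 — 3 statements merged into one kernel-verified Lean document; each statement's English description precedes it below -/
import Mathlib

section
/- Let n and k be positive integers with n ≥ 2k+2, and let F be an intersecting family of k-element subsets of [n]. Then the minimum degree of F satisfies δ(F) ≤ C(n-2, k-2). -/
/-!
The degrees `d x` of an intersecting family `F` of `k`-subsets of an `n`-set add up to `k |F|`. If
they all lie between `δ` and `|F|`, then summing `0 ≤ (d x - δ) (|F| - d x)` over the points bounds
`∑ x, d x ^ 2` from above by `k |F| ^ 2 - (n - k) δ |F|`.

A spectral inequality bounds the same sum from below. For suitable `p` and `β ≥ 0` the matrix with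
entries `|S ∩ T| - k`, plus `p` on the diagonal and `β` at disjoint pairs, is positive semidefinite;
its value at the indicator of `F`, where disjoint pairs contribute nothing, is
`∑ x, d x ^ 2 - k |F| ^ 2 + p |F|`. One can take `p = (n - k) (n - 2).choose (k - 2)`, and then
comparing both bounds gives `δ ≤ (n - 2).choose (k - 2)`.

No diagonalisation is needed for semidefiniteness. The matrix commutes with all permutations of the
points, so applying `1 - (a b)` preserves its eigenspaces. Hence every eigenspace contains the
constant function, a difference of two point stars, or an eigenvector negated by two disjoint
transpositions. The first two eigenvalues are explicit. A function of the third kind is killed by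
the overlap part, and its cancellations leave so few disjoint pairs that their total effect is at
most `p`.
-/

open Finset Equiv Matrix
open scoped Pointwise

section SMul

variable {G X : Type*} [SMul G X] {g : G} {v : X → ℝ}

/-- `v` lies in the `-1`-eigenspace of the permutation operator of `g` on functions. -/
def NegatedBy (g : G) (v : X → ℝ) : Prop :=
  ∀ x, v (g • x) = -v x

/-- The image of `v` under `1 - g`, where `g` acts on functions by `v ↦ v ∘ (g • ·)`. -/
def smulDiff (g : G) (v : X → ℝ) : X → ℝ :=
  fun x => v x - v (g • x)

lemma smulDiff_eq_zero_iff : smulDiff g v = 0 ↔ ∀ x, v (g • x) = v x := by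
  simp only [funext_iff, smulDiff, Pi.zero_apply, sub_eq_zero, eq_comm]

lemma NegatedBy.apply_eq_zero (hv : NegatedBy g v) {x : X} (hx : g • x = x) : v x = 0 := by
  have hneg := hv x
  rw [hx] at hneg
  linarith

end SMul

section MulAction

variable {G X : Type*} [Monoid G] [MulAction G X] {g h : G} {v : X → ℝ}

lemma negatedBy_smulDiff (hg : g * g = 1) (v : X → ℝ) : NegatedBy g (smulDiff g v) := by
  intro x
  rw [smulDiff, smulDiff, smul_smul, hg, one_smul, neg_sub]

lemma NegatedBy.smulDiff_of_commute (hv : NegatedBy g v) (hgh : Commute g h) :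
    NegatedBy g (smulDiff h v) := by
  intro x
  rw [smulDiff, smulDiff, smul_smul, ← hgh.eq, mul_smul, hv, hv]
  ring

end MulAction

section GroupAction

variable {G X : Type*} [Group G] [MulAction G X] [Fintype X] {g : G} {v : X → ℝ}

lemma NegatedBy.sum_eq_zero (hv : NegatedBy g v) : ∑ x, v x = 0 := by
  have hsum : ∑ x, v (g • x) = ∑ x, v x := Equiv.sum_comp (MulAction.toPerm g) v
  simp only [hv _, sum_neg_distrib] at hsum
  linarith

lemma mulVec_comp_smul {M : Matrix X X ℝ} (hM : ∀ x y, M (g • x) (g • y) = M x y)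
    (v : X → ℝ) (x : X) : (M *ᵥ fun y => v (g • y)) x = (M *ᵥ v) (g • x) := by
  simp only [mulVec, dotProduct, ← hM x]
  exact Equiv.sum_comp (MulAction.toPerm g) fun y => M (g • x) y * v y

lemma smulDiff_mem_eigenspace [DecidableEq X] {M : Matrix X X ℝ}
    (hM : ∀ x y, M (g • x) (g • y) = M x y) {θ : ℝ}
    (hv : v ∈ Module.End.eigenspace (toLin' M) θ) :
    smulDiff g v ∈ Module.End.eigenspace (toLin' M) θ := by
  refine sub_mem hv (Module.End.mem_eigenspace_iff.2 (funext fun x => ?_))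
  rw [Module.End.mem_eigenspace_iff, toLin'_apply] at hv
  rw [toLin'_apply, mulVec_comp_smul hM, hv, Pi.smul_apply, Pi.smul_apply]

end GroupAction

section SwapInvariant

variable {α : Type*} [DecidableEq α] {k : ℕ} {i j : α} {v : Set.powersetCard α k → ℝ}

lemma mem_swap_smul {x : α} {S : Finset α} : x ∈ swap i j • S ↔ swap i j x ∈ S := by
  rw [← Finset.inv_smul_mem_iff, swap_inv, Perm.smul_def]

lemma swap_smul_eq_self {S : Finset α} (h : i ∈ S ↔ j ∈ S) : swap i j • S = S := by
  ext x
  rw [mem_swap_smul, swap_apply_def]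
  grind

lemma swap_smul_sdiff {S T : Finset α} (hjS : j ∉ S) (hjT : j ∈ T) :
    (swap i j • S) \ T = (S \ T).erase i := by
  ext x
  rw [mem_sdiff, mem_swap_smul, mem_erase, mem_sdiff, swap_apply_def]
  grind

lemma disjoint_swap_swap {a b : α} (hia : i ≠ a) (hib : i ≠ b) (hja : j ≠ a) (hjb : j ≠ b) :
    Perm.Disjoint (swap i j) (swap a b) := by
  intro x
  simp only [swap_apply_def]
  grind

lemma NegatedBy.mem_iff_notMem (hv : NegatedBy (swap i j) v) {S : Set.powersetCard α k}
    (hS : v S ≠ 0) : i ∈ S.1 ↔ j ∉ S.1 := by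
  by_contra h
  exact hS (hv.apply_eq_zero (Subtype.ext (swap_smul_eq_self (by tauto))))

lemma NegatedBy.exists_forall_disjoint_mem (hv : NegatedBy (swap i j) v)
    {S : Set.powersetCard α k} (hS : v S ≠ 0) :
    ∃ c, swap i j c ≠ c ∧ c ∉ S.1 ∧ ∀ T, v T ≠ 0 → Disjoint T.1 S.1 → c ∈ T.1 := by
  have hiff := hv.mem_iff_notMem hS
  have hij : i ≠ j := by
    rintro rfl
    tauto
  by_cases hi : i ∈ S.1
  · refine ⟨j, by simpa using hij, hiff.1 hi, fun T hT hTS => of_not_not fun hj => ?_⟩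
    exact disjoint_left.1 hTS ((hv.mem_iff_notMem hT).2 hj) hi
  · have hj : j ∈ S.1 := of_not_not fun hj => hi (hiff.2 hj)
    exact ⟨i, by simpa using hij.symm, hi, fun T hT hTS =>
      (hv.mem_iff_notMem hT).2 (disjoint_right.1 hTS hj)⟩

lemma eq_of_forall_swap_smul_eq {Z : Set α}
    (hv : ∀ a ∉ Z, ∀ b ∉ Z, ∀ S, v (swap a b • S) = v S) {S T : Set.powersetCard α k}
    (hST : ∀ z ∈ Z, z ∈ S.1 ↔ z ∈ T.1) : v S = v T := by
  induction hm : #(S.1 \ T.1) generalizing S with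
  | zero =>
    rw [Finset.card_eq_zero, sdiff_eq_empty_iff_subset] at hm
    rw [Set.powersetCard.eq_iff_subset.2 hm]
  | succ m ih =>
    have hcard : #(T.1 \ S.1) = m + 1 := by
      rw [← hm, card_sdiff_comm (S.2.trans T.2.symm)]
    obtain ⟨a, ha⟩ : (S.1 \ T.1).Nonempty := card_pos.1 (by omega)
    obtain ⟨b, hb⟩ : (T.1 \ S.1).Nonempty := card_pos.1 (by omega)
    have ha' := mem_sdiff.1 ha
    have hb' := mem_sdiff.1 hb
    have haZ : a ∉ Z := fun h => ha'.2 ((hST a h).1 ha'.1)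
    have hbZ : b ∉ Z := fun h => hb'.2 ((hST b h).2 hb'.1)
    rw [← hv a haZ b hbZ S]
    apply ih
    · intro z hz
      have hswap : swap a b z = z :=
        swap_apply_of_ne_of_ne (fun h => haZ (h ▸ hz)) (fun h => hbZ (h ▸ hz))
      rw [Set.powersetCard.coe_smul, mem_swap_smul, hswap, hST z hz]
    · rw [Set.powersetCard.coe_smul, swap_smul_sdiff hb'.2 hb'.1, card_erase_of_mem ha, hm,
        Nat.add_sub_cancel]

/-- The difference of the indicator functions of `i ∈ S` and `j ∈ S`; these functions span the
space of all `S ↦ ∑ x ∈ S, c x` with `∑ x, c x = 0`. -/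
def pointDiff (i j : α) : Set.powersetCard α k → ℝ :=
  fun S => (if i ∈ S.1 then 1 else 0) - (if j ∈ S.1 then 1 else 0)

lemma negatedBy_pointDiff (i j : α) :
    NegatedBy (swap i j) (pointDiff i j : Set.powersetCard α k → ℝ) := by
  intro S
  simp only [pointDiff, Set.powersetCard.coe_smul, mem_swap_smul, swap_apply_left,
    swap_apply_right, neg_sub]

lemma NegatedBy.exists_eq_smul_pointDiff (hv : NegatedBy (swap i j) v)
    (hinv : ∀ a b, Perm.Disjoint (swap i j) (swap a b) → ∀ S, v (swap a b • S) = v S) :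
    ∃ c : ℝ, v = c • pointDiff i j := by
  have heq : ∀ S T : Set.powersetCard α k,
      i ∈ S.1 → j ∉ S.1 → i ∈ T.1 → j ∉ T.1 → v S = v T := by
    intro S T hiS hjS hiT hjT
    refine eq_of_forall_swap_smul_eq (Z := {i, j}) (fun a ha b hb => hinv a b ?_) ?_
    · apply disjoint_swap_swap <;> grind
    · grind
  obtain ⟨c, hc⟩ : ∃ c, ∀ T : Set.powersetCard α k, i ∈ T.1 → j ∉ T.1 → v T = c := by
    by_cases h : ∃ S : Set.powersetCard α k, i ∈ S.1 ∧ j ∉ S.1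
    · obtain ⟨S, hiS, hjS⟩ := h
      exact ⟨v S, fun T hiT hjT => heq T S hiT hjT hiS hjS⟩
    · exact ⟨0, fun T hiT hjT => (h ⟨T, hiT, hjT⟩).elim⟩
  refine ⟨c, funext fun T => ?_⟩
  rw [Pi.smul_apply, smul_eq_mul, pointDiff]
  by_cases hi : i ∈ T.1 <;> by_cases hj : j ∈ T.1
  · have : v T = 0 := of_not_not fun h => ((hv.mem_iff_notMem h).1 hi) hj
    simp [hi, hj, this]
  · simp [hi, hj, hc T hi hj]
  · have := hc (swap i j • T) (by simpa [mem_swap_smul]) (by simpa [mem_swap_smul])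
    simp [hi, hj, ← this, hv T]
  · have : v T = 0 := of_not_not fun h => hi ((hv.mem_iff_notMem h).2 hj)
    simp [hi, hj, this]

-- The three cases correspond to the trivial, the standard and all further irreducible constituents;
-- the last are those on which some `(1 - (a b)) (1 - (i j))` with disjoint swaps does not vanish.
lemma exists_ne_zero_mem_of_smulDiff_mem {U : Submodule ℝ (Set.powersetCard α k → ℝ)}
    (hU : ∀ a b : α, ∀ v ∈ U, smulDiff (swap a b) v ∈ U) (hne : U ≠ ⊥) :
    ∃ w ∈ U, w ≠ 0 ∧ (w = 1 ∨ (∃ i j : α, w = pointDiff i j) ∨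
      ∃ i j a b : α, Perm.Disjoint (swap i j) (swap a b) ∧
        NegatedBy (swap i j) w ∧ NegatedBy (swap a b) w) := by
  have of_smul : ∀ {c : ℝ} {w}, c • w ∈ U → c • w ≠ 0 → w ∈ U ∧ w ≠ 0 := fun hmem h0 =>
    ⟨(U.smul_mem_iff (left_ne_zero_of_smul h0)).1 hmem, right_ne_zero_of_smul h0⟩
  obtain ⟨v, hv, hv0⟩ := U.exists_mem_ne_zero_of_ne_bot hne
  by_cases hinv : ∀ a b : α, smulDiff (swap a b) v = 0
  · obtain ⟨S, -⟩ := Function.ne_iff.1 hv0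
    have hconst : v = v S • 1 := funext fun T => by
      simpa using eq_of_forall_swap_smul_eq (Z := ∅)
        (fun a _ b _ => smulDiff_eq_zero_iff.1 (hinv a b)) (by simp)
    rw [hconst] at hv hv0
    obtain ⟨hmem, h0⟩ := of_smul hv hv0
    exact ⟨1, hmem, h0, .inl rfl⟩
  push Not at hinv
  obtain ⟨i, j, hu0⟩ := hinv
  have hneg := negatedBy_smulDiff (swap_mul_self i j) v
  by_cases hinv' : ∀ a b : α, Perm.Disjoint (swap i j) (swap a b) →
      smulDiff (swap a b) (smulDiff (swap i j) v) = 0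
  · obtain ⟨c, hc⟩ := hneg.exists_eq_smul_pointDiff
      fun a b hab => smulDiff_eq_zero_iff.1 (hinv' a b hab)
    obtain ⟨hmem, h0⟩ := of_smul (hc ▸ hU i j v hv) (hc ▸ hu0)
    exact ⟨_, hmem, h0, .inr (.inl ⟨i, j, rfl⟩)⟩
  · push Not at hinv'
    obtain ⟨a, b, hab, hw0⟩ := hinv'
    exact ⟨_, hU a b _ (hU i j v hv), hw0, .inr (.inr ⟨i, j, a, b, hab,
      hneg.smulDiff_of_commute hab.commute, negatedBy_smulDiff (swap_mul_self a b) _⟩)⟩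

end SwapInvariant

section Counting

variable {α : Type*} [Fintype α] [DecidableEq α] {k : ℕ} {v : Set.powersetCard α k → ℝ}

lemma card_filter_subset_disjoint {P Q : Finset α} (hPQ : Disjoint P Q) (hP : #P ≤ k) :
    #{T : Set.powersetCard α k | P ⊆ T.1 ∧ Disjoint T.1 Q} =
      (Fintype.card α - #Q - #P).choose (k - #P) := by
  rw [← card_compl, ← card_filter_powersetCard_subset _ _ _ (subset_compl_iff_disjoint_right.2 hPQ)
    hP, ← card_map (Function.Embedding.subtype _)]
  congr 1
  ext T
  simp only [mem_map, mem_filter, mem_univ, true_and, mem_powersetCard,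
    subset_compl_iff_disjoint_right, Function.Embedding.subtype_apply, Subtype.exists,
    Set.powersetCard.mem_iff, exists_and_left, exists_prop, exists_eq_right_right]
  tauto

lemma card_filter_mem_disjoint (hk : 1 ≤ k) {i : α} {Q : Finset α} (hi : i ∉ Q) :
    #{T : Set.powersetCard α k | i ∈ T.1 ∧ Disjoint T.1 Q} =
      (Fintype.card α - #Q - 1).choose (k - 1) := by
  simpa using card_filter_subset_disjoint (disjoint_singleton_left.2 hi) (by simpa)

/-- The degree of `x` in the weighted family giving each `k`-set `T` the weight `v T`. -/
def weightedDegree (v : Set.powersetCard α k → ℝ) (x : α) : ℝ :=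
  ∑ T with x ∈ T.1, v T

/-- The adjacency operator of the Kneser graph, whose edges join disjoint `k`-sets. -/
def kneserSum (v : Set.powersetCard α k → ℝ) (S : Set.powersetCard α k) : ℝ :=
  ∑ T with Disjoint T.1 S.1, v T

lemma sum_mul_sum_eq_sum_mul_weightedDegree (v : Set.powersetCard α k → ℝ) (g : α → ℝ) :
    ∑ S, v S * ∑ x ∈ S.1, g x = ∑ x, g x * weightedDegree v x := by
  simp only [weightedDegree, mul_sum]
  simp only [mul_comm (g _)]
  exact sum_comm' fun S x => by simp only [mem_univ, mem_filter, true_and, and_true]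

lemma weightedDegree_one (hk : 1 ≤ k) (x : α) :
    weightedDegree (1 : Set.powersetCard α k → ℝ) x = (Fintype.card α - 1).choose (k - 1) := by
  simpa [weightedDegree] using card_filter_mem_disjoint hk (notMem_empty x)

lemma NegatedBy.weightedDegree_eq_zero {σ : Perm α} (hv : NegatedBy σ v) {x : α} (hx : σ x = x) :
    weightedDegree v x = 0 := by
  rw [weightedDegree, sum_filter]
  refine NegatedBy.sum_eq_zero (g := σ) fun T => ?_
  have hmem : x ∈ (σ • T).1 ↔ x ∈ T.1 := by
    rw [Set.powersetCard.coe_smul]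
    nth_rw 1 [← hx]
    exact smul_mem_smul_finset_iff σ
  simp only [hmem, hv T]
  split_ifs <;> simp

lemma weightedDegree_pointDiff_left (hk : 1 ≤ k) {i j : α} (hij : i ≠ j) :
    weightedDegree (pointDiff i j : Set.powersetCard α k → ℝ) i =
      (Fintype.card α - 2).choose (k - 1) := by
  have hcount := card_filter_mem_disjoint hk (notMem_singleton.2 hij)
  rw [card_singleton, Nat.sub_sub] at hcount
  rw [← hcount, weightedDegree, sum_filter, ← sum_boole]
  refine sum_congr rfl fun T _ => ?_
  by_cases hi : i ∈ T.1 <;> by_cases hj : j ∈ T.1 <;> simp [pointDiff, hi, hj]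

lemma weightedDegree_pointDiff (hk : 1 ≤ k) {i j : α} (hij : i ≠ j) (x : α) :
    weightedDegree (pointDiff i j : Set.powersetCard α k → ℝ) x =
      (Fintype.card α - 2).choose (k - 1) *
        ((if x = i then 1 else 0) - (if x = j then 1 else 0)) := by
  rcases eq_or_ne x i with rfl | hi
  · simp [weightedDegree_pointDiff_left hk hij, hij]
  rcases eq_or_ne x j with rfl | hj
  · have hswap : (pointDiff i x : Set.powersetCard α k → ℝ) = -pointDiff x i := by
      ext S
      simp [pointDiff]
    have hdeg := weightedDegree_pointDiff_left hk hij.symm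
    simp only [weightedDegree] at hdeg
    simp [weightedDegree, hswap, hdeg, hi]
  · rw [(negatedBy_pointDiff i j).weightedDegree_eq_zero (swap_apply_of_ne_of_ne hi hj)]
    simp [hi, hj]

lemma sum_weightedDegree_pointDiff (hk : 1 ≤ k) {i j : α} (hij : i ≠ j)
    (S : Set.powersetCard α k) :
    ∑ x ∈ S.1, weightedDegree (pointDiff i j : Set.powersetCard α k → ℝ) x =
      (Fintype.card α - 2).choose (k - 1) * pointDiff i j S := by
  simp only [weightedDegree_pointDiff hk hij, ← mul_sum, sum_sub_distrib, sum_ite_eq', pointDiff]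

lemma kneserSum_one (S : Set.powersetCard α k) :
    kneserSum 1 S = (Fintype.card α - k).choose k := by
  simpa [kneserSum, S.2] using card_filter_subset_disjoint (disjoint_empty_left S.1) k.zero_le

lemma kneserSum_pointDiff (hk : 1 ≤ k) (i j : α) (S : Set.powersetCard α k) :
    kneserSum (pointDiff i j) S = -((Fintype.card α - k - 1).choose (k - 1) * pointDiff i j S) := by
  have hcount : ∀ x : α, ∑ T : Set.powersetCard α k with Disjoint T.1 S.1,
      (if x ∈ T.1 then (1 : ℝ) else 0) =
        if x ∈ S.1 then 0 else ((Fintype.card α - k - 1).choose (k - 1) : ℝ) := by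
    intro x
    rw [sum_boole, filter_filter]
    simp only [and_comm (a := Disjoint _ _)]
    split_ifs with hx
    · rw [Nat.cast_eq_zero, card_eq_zero, filter_eq_empty_iff]
      exact fun T _ hT => disjoint_left.1 hT.2 hT.1 hx
    · rw [card_filter_mem_disjoint hk hx, S.2]
  simp only [kneserSum, pointDiff, sum_sub_distrib, hcount]
  split_ifs <;> ring

lemma abs_kneserSum_le {S : Set.powersetCard α k} {P : Finset α} (hPS : Disjoint P S.1)
    (hP : #P ≤ k) {B : ℝ} (hB : ∀ T, |v T| ≤ B)
    (hsupp : ∀ T, v T ≠ 0 → Disjoint T.1 S.1 → P ⊆ T.1) :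
    |kneserSum v S| ≤ (Fintype.card α - k - #P).choose (k - #P) * B := by
  calc |kneserSum v S| = |∑ T with P ⊆ T.1 ∧ Disjoint T.1 S.1, v T| := by
        rw [kneserSum, ← filter_filter, filter_comm]
        congr 1
        symm
        refine sum_filter_of_ne fun T hT hvT => hsupp T hvT (mem_filter.1 hT).2
    _ ≤ #{T : Set.powersetCard α k | P ⊆ T.1 ∧ Disjoint T.1 S.1} • B :=
        (abs_sum_le_sum_abs _ _).trans (sum_le_card_nsmul _ _ _ fun T _ => hB T)
    _ = (Fintype.card α - k - #P).choose (k - #P) * B := by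
        rw [card_filter_subset_disjoint hPS hP, S.2, nsmul_eq_mul]

lemma abs_kneserSum_le_of_negatedBy (hk : 2 ≤ k) {i j a b : α}
    (hdisj : Perm.Disjoint (swap i j) (swap a b)) (hij : NegatedBy (swap i j) v)
    (hab : NegatedBy (swap a b) v) {S : Set.powersetCard α k} (hS : v S ≠ 0) {B : ℝ}
    (hB : ∀ T, |v T| ≤ B) :
    |kneserSum v S| ≤ (Fintype.card α - k - 2).choose (k - 2) * B := by
  obtain ⟨c, hc, hcS, hcT⟩ := hij.exists_forall_disjoint_mem hS
  obtain ⟨d, hd, hdS, hdT⟩ := hab.exists_forall_disjoint_mem hS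
  have hcd : c ≠ d := by
    rintro rfl
    exact (hdisj c).elim hc hd
  rw [← card_pair hcd] at hk ⊢
  refine abs_kneserSum_le ?_ hk hB fun T hT hTS => ?_
  · simp [hcS, hdS]
  · simp [insert_subset_iff, hcT T hT hTS, hdT T hT hTS]

end Counting

section EKRMatrix

variable {α : Type*} [DecidableEq α] {k : ℕ} {p β : ℝ}

/-- The matrix `(|S ∩ T| - k) + p I + β K` indexed by `k`-sets, where `K` is the adjacency matrix of
the Kneser graph. On an intersecting family the Kneser term contributes nothing to the quadratic
form. -/
def ekrMatrix (α : Type*) [DecidableEq α] (k : ℕ) (p β : ℝ) :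
    Matrix (Set.powersetCard α k) (Set.powersetCard α k) ℝ :=
  of fun S T => #(S.1 ∩ T.1) - k + (if S = T then p else 0) + (if Disjoint T.1 S.1 then β else 0)

lemma ekrMatrix_isHermitian : (ekrMatrix α k p β).IsHermitian := by
  ext S T
  simp only [ekrMatrix, conjTranspose_apply, of_apply, star_trivial, inter_comm T.1,
    eq_comm (a := T), disjoint_comm (a := S.1)]

lemma ekrMatrix_smul_smul (σ : Perm α) (S T : Set.powersetCard α k) :
    ekrMatrix α k p β (σ • S) (σ • T) = ekrMatrix α k p β S T := by
  simp only [ekrMatrix, of_apply, Set.powersetCard.coe_smul, ← smul_finset_inter,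
    card_smul_finset, smul_left_cancel_iff, disjoint_iff_inter_eq_empty, smul_finset_eq_empty]

variable [Fintype α]

lemma ekrMatrix_mulVec_apply (v : Set.powersetCard α k → ℝ) (S : Set.powersetCard α k) :
    (ekrMatrix α k p β *ᵥ v) S =
      ∑ x ∈ S.1, weightedDegree v x - k * ∑ T, v T + p * v S + β * kneserSum v S := by
  have hoverlap : ∑ T : Set.powersetCard α k, (#(S.1 ∩ T.1) : ℝ) * v T =
      ∑ x ∈ S.1, weightedDegree v x := by
    simp only [weightedDegree, sum_filter]
    rw [sum_comm]
    refine sum_congr rfl fun T _ => ?_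
    rw [← sum_filter, filter_mem_eq_inter, sum_const, nsmul_eq_mul]
  simp only [ekrMatrix, mulVec, dotProduct, of_apply, add_mul, sub_mul, ite_mul, zero_mul,
    sum_add_distrib, sum_sub_distrib, hoverlap, sum_ite_eq, mem_univ, if_true, ← mul_sum,
    ← sum_filter, kneserSum]

lemma ekrMatrix_mulVec_one (hk : 1 ≤ k) :
    ekrMatrix α k p β *ᵥ 1 =
      (k * (Fintype.card α - 1).choose (k - 1) - k * (Fintype.card α).choose k + p +
        β * (Fintype.card α - k).choose k : ℝ) • 1 := by
  ext S
  have hsum : ∑ T : Set.powersetCard α k, (1 : Set.powersetCard α k → ℝ) T =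
      (Fintype.card α).choose k := by
    simp only [Pi.one_apply, sum_const, nsmul_one, card_univ, ← Nat.card_eq_fintype_card,
      Set.powersetCard.card]
  rw [ekrMatrix_mulVec_apply, hsum, kneserSum_one,
    sum_congr rfl fun x _ => weightedDegree_one hk x, sum_const, S.2, nsmul_eq_mul]
  simp only [Pi.smul_apply, Pi.one_apply, smul_eq_mul, mul_one]

lemma ekrMatrix_mulVec_pointDiff (hk : 1 ≤ k) {i j : α} (hij : i ≠ j) :
    ekrMatrix α k p β *ᵥ pointDiff i j =
      ((Fintype.card α - 2).choose (k - 1) + p -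
        β * (Fintype.card α - k - 1).choose (k - 1) : ℝ) • pointDiff i j := by
  ext S
  rw [ekrMatrix_mulVec_apply, sum_weightedDegree_pointDiff hk hij,
    (negatedBy_pointDiff i j).sum_eq_zero, kneserSum_pointDiff hk, Pi.smul_apply, smul_eq_mul]
  ring

lemma sub_le_of_ekrMatrix_mulVec_eq_smul (hk : 2 ≤ k) (hβ : 0 ≤ β) {i j a b : α}
    (hdisj : Perm.Disjoint (swap i j) (swap a b)) {w : Set.powersetCard α k → ℝ} (hw : w ≠ 0)
    (hij : NegatedBy (swap i j) w) (hab : NegatedBy (swap a b) w) {θ : ℝ}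
    (hθ : ekrMatrix α k p β *ᵥ w = θ • w) :
    p - β * (Fintype.card α - k - 2).choose (k - 2) ≤ θ := by
  obtain ⟨T, hT⟩ := Function.ne_iff.1 hw
  obtain ⟨S, -, hmax⟩ := exists_max_image univ (fun S => |w S|) ⟨T, mem_univ T⟩
  have hpos : 0 < |w S| := (abs_pos.2 hT).trans_le (hmax T (mem_univ T))
  have hdeg : ∀ x, weightedDegree w x = 0 := fun x =>
    (hdisj x).elim hij.weightedDegree_eq_zero hab.weightedDegree_eq_zero
  have heq : (θ - p) * w S = β * kneserSum w S := by
    have hS := congrFun hθ S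
    simp only [ekrMatrix_mulVec_apply, hdeg, hij.sum_eq_zero, sum_const_zero, Pi.smul_apply,
      smul_eq_mul] at hS
    linarith
  have hle : |θ - p| * |w S| ≤ β * (Fintype.card α - k - 2).choose (k - 2) * |w S| := by
    rw [← abs_mul, heq, abs_mul, abs_of_nonneg hβ, mul_assoc]
    gcongr
    exact abs_kneserSum_le_of_negatedBy hk hdisj hij hab (abs_pos.1 hpos) fun T =>
      hmax T (mem_univ T)
  linarith [neg_abs_le (θ - p), le_of_mul_le_mul_right hle hpos]

lemma ekrMatrix_posSemidef (hk : 2 ≤ k) (hβ : 0 ≤ β)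
    (hone : (0 : ℝ) ≤ k * (Fintype.card α - 1).choose (k - 1) - k * (Fintype.card α).choose k + p +
      β * (Fintype.card α - k).choose k)
    (hpoint : (0 : ℝ) ≤ (Fintype.card α - 2).choose (k - 1) + p -
      β * (Fintype.card α - k - 1).choose (k - 1))
    (hneg : 0 ≤ p - β * (Fintype.card α - k - 2).choose (k - 2)) :
    (ekrMatrix α k p β).PosSemidef := by
  refine posSemidef_iff_isHermitian_and_spectrum_nonneg.2 ⟨ekrMatrix_isHermitian, fun θ hθ => ?_⟩
  rw [← spectrum_toLin', ← Module.End.hasEigenvalue_iff_mem_spectrum] at hθ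
  obtain ⟨w, hw, hw0, htype⟩ := exists_ne_zero_mem_of_smulDiff_mem
    (fun a b v hv => smulDiff_mem_eigenspace (ekrMatrix_smul_smul (swap a b)) hv) hθ
  rw [Module.End.mem_eigenspace_iff, toLin'_apply] at hw
  rcases htype with rfl | ⟨i, j, rfl⟩ | ⟨i, j, a, b, hdisj, hij, hab⟩
  · rw [ekrMatrix_mulVec_one (by omega)] at hw
    exact hone.trans_eq (smul_left_injective ℝ hw0 hw)
  · have hij : i ≠ j := by
      rintro rfl
      exact hw0 (funext fun S => sub_self _)
    rw [ekrMatrix_mulVec_pointDiff (by omega) hij] at hw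
    exact hpoint.trans_eq (smul_left_injective ℝ hw0 hw)
  · exact hneg.trans (sub_le_of_ekrMatrix_mulVec_eq_smul hk hβ hdisj hw0 hij hab hw)

end EKRMatrix

lemma mul_choose_pred_pred {m l : ℕ} (hm : 0 < m) (hl : 0 < l) :
    m * (m - 1).choose (l - 1) = l * m.choose l := by
  obtain ⟨m, rfl⟩ := Nat.exists_eq_add_one.2 hm
  obtain ⟨l, rfl⟩ := Nat.exists_eq_add_one.2 hl
  rw [Nat.add_sub_cancel, Nat.add_sub_cancel, Nat.add_one_mul_choose_eq, mul_comm]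

lemma sub_one_mul_choose_pred {n k : ℕ} (hk : 2 ≤ k) (hkn : k ≤ n) :
    ((k : ℝ) - 1) * (n - 2).choose (k - 1) = (n - k) * (n - 2).choose (k - 2) := by
  have hchoose := Nat.choose_succ_right_eq (n - 2) (k - 2)
  rw [show k - 2 + 1 = k - 1 by omega, show n - 2 - (k - 2) = n - k by omega, mul_comm,
    mul_comm ((n - 2).choose _)] at hchoose
  rw [← Nat.cast_pred (by omega), ← Nat.cast_sub hkn]
  exact_mod_cast hchoose

lemma mul_choose_le_sub_one_mul_choose {n k : ℕ} (hk : 2 ≤ k) (hn : 2 * k + 1 ≤ n) :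
    k * (n - k - 2).choose (k - 2) ≤ (k - 1) * (n - k - 1).choose (k - 1) :=
  calc k * (n - k - 2).choose (k - 2) ≤ (n - k - 1) * (n - k - 2).choose (k - 2) :=
        Nat.mul_le_mul_right _ (by omega)
    _ = (k - 1) * (n - k - 1).choose (k - 1) :=
        mul_choose_pred_pred (m := n - k - 1) (l := k - 1) (by omega) (by omega)

lemma exists_ekrMatrix_posSemidef {α : Type*} [Fintype α] [DecidableEq α] {k : ℕ} (hk : 2 ≤ k)
    (hn : 2 * k + 1 ≤ Fintype.card α) :
    ∃ β, (ekrMatrix α k ((Fintype.card α - k) * (Fintype.card α - 2).choose (k - 2))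
      β).PosSemidef := by
  have posSemidef_of := fun β p => ekrMatrix_posSemidef (α := α) (p := p) (β := β) hk
  generalize Fintype.card α = n at *
  have hkpos : (0 : ℝ) < k := by positivity
  have hDpos : (0 : ℝ) < (n - k - 1).choose (k - 1) := mod_cast Nat.choose_pos (by omega)
  have pascal : (n.choose k : ℝ) = (n - 1).choose (k - 1) + (n - 1).choose k :=
    mod_cast Nat.choose_eq_choose_pred_add (by omega) (by omega)
  have absorb₁ : ((n : ℝ) - 1) * (n - 2).choose (k - 1) = k * (n - 1).choose k := by
    rw [← Nat.cast_pred (by omega)]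
    exact_mod_cast mul_choose_pred_pred (m := n - 1) (by omega) (by omega)
  have absorb₂ : ((n : ℝ) - k) * (n - k - 1).choose (k - 1) = k * (n - k).choose k := by
    rw [← Nat.cast_sub (by omega)]
    exact_mod_cast mul_choose_pred_pred (m := n - k) (by omega) (by omega)
  have hratio : (k : ℝ) * (n - k - 2).choose (k - 2) ≤
      (k - 1) * (n - k - 1).choose (k - 1) := by
    rw [← Nat.cast_pred (by omega)]
    exact_mod_cast mul_choose_le_sub_one_mul_choose hk hn
  rw [← sub_one_mul_choose_pred hk (by omega)]
  set G : ℝ := ↑((n - 2).choose (k - 1))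
  set D : ℝ := ↑((n - k - 1).choose (k - 1))
  -- This value makes the eigenvalues on `1` and on the functions `pointDiff i j` vanish.
  obtain ⟨β, hβ⟩ : ∃ β, β * D = k * G := ⟨k * G / D, div_mul_cancel₀ _ hDpos.ne'⟩
  have hβ0 : 0 ≤ β := nonneg_of_mul_nonneg_left (hβ ▸ by positivity) hDpos
  refine ⟨β, posSemidef_of β _ hβ0 (le_of_eq ?_) (le_of_eq ?_) (sub_nonneg.2 ?_)⟩
  · have hkneser : β * (n - k).choose k = (n - k) * G := by
      apply mul_left_cancel₀ hkpos.ne'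
      linear_combination (n - k : ℝ) * hβ - β * absorb₂
    rw [hkneser, pascal]
    linear_combination -absorb₁
  · rw [hβ]
    ring
  · apply le_of_mul_le_mul_left _ hkpos
    linear_combination β * hratio + (k - 1 : ℝ) * hβ

section Family

variable {α : Type*} [DecidableEq α] {k : ℕ} {F : Finset (Finset α)}

/-- The indicator function of the family `F`, viewed as a function on the `k`-sets. -/
def familyIndicator (k : ℕ) (F : Finset (Finset α)) : Set.powersetCard α k → ℝ :=
  fun S => if S.1 ∈ F then 1 else 0

lemma card_filter_mem_le_one (hk : k ≤ 1) (hF : (F : Set (Finset α)).Sized k) (i : α) :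
    #{A ∈ F | i ∈ A} ≤ 1 := by
  have heq : ∀ A ∈ F, i ∈ A → {i} = A := fun A hA hi =>
    eq_of_subset_of_card_le (singleton_subset_iff.2 hi) ((hF hA).trans_le hk)
  refine card_le_one.2 fun A hA B hB => ?_
  rw [mem_filter] at hA hB
  rw [← heq A hA.1 hA.2, ← heq B hB.1 hB.2]

variable [Fintype α]

lemma sum_filter_familyIndicator (hF : (F : Set (Finset α)).Sized k) (P : Finset α → Prop)
    [DecidablePred P] : ∑ S with P S.1, familyIndicator k F S = #{A ∈ F | P A} := by
  simp only [familyIndicator, sum_boole, filter_filter]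
  rw [← card_map (Function.Embedding.subtype _)]
  congr 2
  ext A
  simp only [mem_map, mem_filter, mem_univ, true_and, Function.Embedding.subtype_apply,
    Subtype.exists, Set.powersetCard.mem_iff, exists_and_left, exists_prop, exists_eq_right_right]
  exact ⟨fun h => ⟨h.1.2, h.1.1⟩, fun h => ⟨⟨h.2, h.1⟩, hF h.1⟩⟩

lemma sum_familyIndicator (hF : (F : Set (Finset α)).Sized k) :
    ∑ S, familyIndicator k F S = #F := by
  simpa using sum_filter_familyIndicator hF fun _ => True

lemma weightedDegree_familyIndicator (hF : (F : Set (Finset α)).Sized k) (x : α) :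
    weightedDegree (familyIndicator k F) x = #{A ∈ F | x ∈ A} :=
  sum_filter_familyIndicator hF (x ∈ ·)

lemma familyIndicator_mul_kneserSum (hF : (F : Set (Finset α)).Intersecting)
    (S : Set.powersetCard α k) :
    familyIndicator k F S * kneserSum (familyIndicator k F) S = 0 := by
  by_cases hS : S.1 ∈ F
  · refine mul_eq_zero_of_right _ (sum_eq_zero fun T hT => if_neg fun hTF => ?_)
    exact hF hTF hS (mem_filter.1 hT).2
  · exact mul_eq_zero_of_left (if_neg hS) _

lemma sum_card_filter_mem (hF : (F : Set (Finset α)).Sized k) :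
    ∑ x, #{A ∈ F | x ∈ A} = k * #F := by
  have hsum := sum_mul_sum_eq_sum_mul_weightedDegree (familyIndicator k F) 1
  simp only [weightedDegree_familyIndicator hF, Pi.one_apply, sum_const, Set.powersetCard.card_eq,
    nsmul_one, one_mul, ← sum_mul, sum_familyIndicator hF] at hsum
  rw [mul_comm]
  exact_mod_cast hsum.symm

-- This is `0 ≤ ∑ x, (d x - δ) * (#F - d x)` for the degrees `d x`, expanded.
lemma sum_sq_card_filter_mem_add_le (hF : (F : Set (Finset α)).Sized k) {δ : ℝ}
    (hδ : ∀ x, δ ≤ #{A ∈ F | x ∈ A}) :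
    ∑ x, (#{A ∈ F | x ∈ A} : ℝ) ^ 2 + (Fintype.card α - k) * δ * #F ≤ k * (#F : ℝ) ^ 2 := by
  have hnonneg : 0 ≤ ∑ x, (#{A ∈ F | x ∈ A} - δ : ℝ) * (#F - #{A ∈ F | x ∈ A}) :=
    sum_nonneg fun x _ => mul_nonneg (sub_nonneg.2 (hδ x))
      (sub_nonneg.2 (mod_cast card_filter_le _ _))
  have hsum : ∑ x, (#{A ∈ F | x ∈ A} : ℝ) = k * #F := mod_cast sum_card_filter_mem hF
  have hexpand : ∑ x, (#{A ∈ F | x ∈ A} - δ : ℝ) * (#F - #{A ∈ F | x ∈ A}) =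
      (#F + δ) * ∑ x, (#{A ∈ F | x ∈ A} : ℝ) - ∑ x, (#{A ∈ F | x ∈ A} : ℝ) ^ 2 -
        Fintype.card α * (δ * #F) := by
    rw [← nsmul_eq_mul (Fintype.card α), ← card_univ, ← sum_const, mul_sum, ← sum_sub_distrib,
      ← sum_sub_distrib]
    exact sum_congr rfl fun x _ => by ring
  rw [hexpand, hsum] at hnonneg
  linarith

lemma mul_sq_card_le_of_intersecting (hk : 2 ≤ k) (hn : 2 * k + 1 ≤ Fintype.card α)
    (hF : (F : Set (Finset α)).Sized k) (hint : (F : Set (Finset α)).Intersecting) :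
    k * (#F : ℝ) ^ 2 ≤ ∑ x, (#{A ∈ F | x ∈ A} : ℝ) ^ 2 +
      (Fintype.card α - k) * (Fintype.card α - 2).choose (k - 2) * #F := by
  obtain ⟨β, hM⟩ := exists_ekrMatrix_posSemidef hk hn
  set p : ℝ := (Fintype.card α - k) * (Fintype.card α - 2).choose (k - 2)
  set f := familyIndicator k F
  have hterm : ∀ S, f S * (ekrMatrix α k p β *ᵥ f) S =
      f S * ∑ x ∈ S.1, (#{A ∈ F | x ∈ A} : ℝ) + f S * (p - k * #F) := by
    intro S
    have hidem : f S * f S = f S := by simp [f, familyIndicator]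
    simp only [ekrMatrix_mulVec_apply, f, weightedDegree_familyIndicator hF,
      sum_familyIndicator hF]
    linear_combination p * hidem + β * familyIndicator_mul_kneserSum hint S
  have hquad := hM.dotProduct_mulVec_nonneg f
  simp only [dotProduct, star_trivial, hterm, sum_add_distrib, ← sum_mul, f,
    sum_mul_sum_eq_sum_mul_weightedDegree, weightedDegree_familyIndicator hF,
    sum_familyIndicator hF, ← sq] at hquad
  linarith

lemma le_choose_of_forall_le_card_filter_mem (hk : 2 ≤ k) (hn : 2 * k + 1 ≤ Fintype.card α)
    (hF : (F : Set (Finset α)).Sized k) (hint : (F : Set (Finset α)).Intersecting)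
    (hne : F.Nonempty) {δ : ℝ} (hδ : ∀ x, δ ≤ #{A ∈ F | x ∈ A}) :
    δ ≤ (Fintype.card α - 2).choose (k - 2) := by
  have hlower := mul_sq_card_le_of_intersecting hk hn hF hint
  have hupper := sum_sq_card_filter_mem_add_le hF hδ
  have hcard : (0 : ℝ) < #F := mod_cast hne.card_pos
  have hkn : (k : ℝ) < Fintype.card α := mod_cast (by omega : k < Fintype.card α)
  refine le_of_mul_le_mul_left ?_ (mul_pos (sub_pos.2 hkn) hcard)
  linarith

end Family

theorem degree_EKR_general {α : Type*} [Fintype α] [DecidableEq α] {k : ℕ}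
    (hn : 2 * k + 1 ≤ Fintype.card α) {F : Finset (Finset α)}
    (hF : (F : Set (Finset α)).Sized k) (hint : (F : Set (Finset α)).Intersecting) :
    ∃ i, #{A ∈ F | i ∈ A} ≤ (Fintype.card α - 2).choose (k - 2) := by
  obtain ⟨x⟩ : Nonempty α := Fintype.card_pos_iff.1 (by omega)
  rcases le_or_gt k 1 with hk | hk
  · refine ⟨x, (card_filter_mem_le_one hk hF x).trans_eq ?_⟩
    rw [Nat.sub_eq_zero_of_le (by omega : k ≤ 2), Nat.choose_zero_right]
  · by_contra! hdeg
    have hne : F.Nonempty := (card_pos.1 (Nat.zero_lt_of_lt (hdeg x))).mono (filter_subset _ _)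
    have hle := le_choose_of_forall_le_card_filter_mem hk hn hF hint hne
      (δ := (Fintype.card α - 2).choose (k - 2) + 1) fun i => mod_cast hdeg i
    linarith

/-- Degree version of the Erdős–Ko–Rado theorem (Theorem 4, first part):
if `n ≥ 2k + 2` and `F` is an intersecting family of `k`-subsets of `[n]`,
then the minimum degree of `F` is at most `C(n-2, k-2)`. -/
theorem degree_EKR (n k : ℕ) (hk : 0 < k) (hn : 2 * k + 2 ≤ n)
    (F : Finset (Finset (Fin n)))
    (hcard : ∀ A ∈ F, A.card = k)
    (hint : ∀ A ∈ F, ∀ B ∈ F, (A ∩ B).Nonempty) :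
    ∃ i : Fin n, (F.filter (fun A => i ∈ A)).card ≤ (n - 2).choose (k - 2) := by
  simpa using degree_EKR_general (by simpa using (by omega : 2 * k + 1 ≤ n)) hcard
    fun A hA B hB => not_disjoint_iff_nonempty_inter.2 (hint A hA B hB)
end

section
/- Let n, k, t be positive integers with 1 ≤ t < k and n ≥ 2k + 3t/(1 - t/k). Then any intersecting family F of k-element subsets of [n] satisfies δ_t(F) ≤ C(n-t-1, k-t-1). -/
open Finset

/-!
On the `k`-subsets of an `n`-element set with `2 * k ≤ n`, every function is a sum of components
`S ↦ ∑ J ∈ powersetCard j S, g j J` with `g j` harmonic, for `j ≤ k`. These components are pairwise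
orthogonal and, by inclusion–exclusion, they diagonalise, with explicit eigenvalues `λ_j(t)`, each
quadratic form `Q_t(f) = ∑ f S * f A * C(#(A \ S), t)`, summed over `k`-sets `A` and `S`.

For the indicator of an intersecting family `F`, the Kneser form `Q_k` vanishes, so an inequality
`λ_j(t) ≤ c + s * λ_j(k)` for all `j ≤ k` gives `Q_t ≤ c * #F`. The constants are chosen to make
`j = 0` and `j = 1` tight, and the decrease of `C(k, j) / C(n - k, j)` in `j` settles the rest.
Finally `Q_t` is the sum of the degrees of `T` over all pairs of a member `S` of `F` and a `t`-set
`T` disjoint from `S`, so some `T` has degree at most `c / C(n - k, t)`.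
-/

section SubsetSums

variable {α M R : Type*}

/-- The sum of `g` over the `j`-element subsets of `S`. -/
def sumBelow [AddCommMonoid M] (g : Finset α → M) (j : ℕ) (S : Finset α) : M :=
  ∑ J ∈ powersetCard j S, g J

theorem sumBelow_card [AddCommMonoid M] (g : Finset α → M) (S : Finset α) :
    sumBelow g #S S = g S := by
  simp [sumBelow]

theorem sumBelow_of_card_lt [AddCommMonoid M] (g : Finset α → M) {j : ℕ} {S : Finset α}
    (hS : #S < j) : sumBelow g j S = 0 := by
  simp [sumBelow, powersetCard_eq_empty.2 hS]

theorem card_filter_powersetCard_superset [DecidableEq α] {J U : Finset α} {t : ℕ} (hJU : J ⊆ U)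
    (ht : t ≤ #U) : #{T ∈ powersetCard t U | J ⊆ T} = (#U - #J).choose (#U - t) := by
  have hJc := card_le_card hJU
  rcases le_or_gt #J t with hJt | htJ
  · rw [card_filter_powersetCard_subset J U t hJU hJt]
    exact Nat.choose_symm_of_eq_add (by omega)
  · rw [Nat.choose_eq_zero_of_lt (by omega), card_eq_zero, filter_eq_empty_iff]
    intro T hT hJT
    exact htJ.not_ge ((mem_powersetCard.1 hT).2 ▸ card_le_card hJT)

theorem sumBelow_sumBelow [Semiring R] (g : Finset α → R) (j : ℕ) {t : ℕ} {U : Finset α}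
    (ht : t ≤ #U) :
    sumBelow (sumBelow g j) t U = ((#U - j).choose (#U - t) : R) * sumBelow g j U := by
  classical
  calc sumBelow (sumBelow g j) t U
      = ∑ J ∈ powersetCard j U, ∑ T ∈ powersetCard t U with J ⊆ T, g J :=
        sum_comm' fun T J => by
          simp only [mem_powersetCard, mem_filter]
          exact ⟨fun h => ⟨⟨h.1, h.2.1⟩, h.2.1.trans h.1.1, h.2.2⟩,
            fun h => ⟨h.1.1, h.1.2, h.2.2⟩⟩
    _ = ((#U - j).choose (#U - t) : R) * sumBelow g j U := by
        rw [sumBelow, mul_sum]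
        refine sum_congr rfl fun J hJ => ?_
        obtain ⟨hJU, rfl⟩ := mem_powersetCard.1 hJ
        rw [sum_const, card_filter_powersetCard_superset hJU ht, nsmul_eq_mul]

variable [Fintype α] [DecidableEq α]

/-- The sum of `f` over the `k`-element supersets of `T`. -/
def sumAbove [AddCommMonoid M] (f : Finset α → M) (k : ℕ) (T : Finset α) : M :=
  ∑ S ∈ powersetCard k univ with T ⊆ S, f S

theorem sumAbove_card [AddCommMonoid M] (f : Finset α → M) (T : Finset α) :
    sumAbove f #T T = f T := by
  have hT : ({S ∈ powersetCard #T univ | T ⊆ S} : Finset (Finset α)) = {T} := by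
    ext S
    simp only [mem_filter, mem_powersetCard_univ, mem_singleton]
    exact ⟨fun h => (eq_of_subset_of_card_le h.2 h.1.le).symm, by rintro rfl; simp⟩
  rw [sumAbove, hT, sum_singleton]

theorem sumAbove_of_lt_card [AddCommMonoid M] (f : Finset α → M) {k : ℕ} {T : Finset α}
    (hT : k < #T) : sumAbove f k T = 0 := by
  refine sum_eq_zero fun S hS => ?_
  obtain ⟨hSk, hTS⟩ := mem_filter.1 hS
  have := card_le_card hTS
  have := mem_powersetCard_univ.1 hSk
  omega

theorem sumAbove_congr [AddCommMonoid M] {f f' : Finset α → M} {k : ℕ}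
    (h : ∀ S, #S = k → f S = f' S) (T : Finset α) : sumAbove f k T = sumAbove f' k T :=
  sum_congr rfl fun S hS => h S (mem_powersetCard_univ.1 (mem_filter.1 hS).1)

theorem sumAbove_eq_sumBelow_compl [AddCommMonoid M] (f : Finset α → M) {k : ℕ}
    (hk : k ≤ Fintype.card α) (T : Finset α) :
    sumAbove f k T = sumBelow (fun S => f Sᶜ) (Fintype.card α - k) Tᶜ := by
  refine sum_nbij' compl compl ?_ ?_ (by simp) (by simp) (by simp)
  · intro S hS
    obtain ⟨hSk, hTS⟩ := mem_filter.1 hS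
    rw [mem_powersetCard, card_compl, mem_powersetCard_univ.1 hSk]
    exact ⟨compl_subset_compl.2 hTS, rfl⟩
  · intro R hR
    obtain ⟨hRT, hRc⟩ := mem_powersetCard.1 hR
    rw [mem_filter, mem_powersetCard_univ, card_compl]
    exact ⟨by omega, subset_compl_comm.1 hRT⟩

theorem sumAbove_sumAbove [Semiring R] (f : Finset α → R) {j k : ℕ} {T : Finset α}
    (hT : #T ≤ j) (hjk : j ≤ k) (hk : k ≤ Fintype.card α) :
    sumAbove (sumAbove f k) j T = ((k - #T).choose (j - #T) : R) * sumAbove f k T := by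
  simp only [sumAbove_eq_sumBelow_compl _ hk, sumAbove_eq_sumBelow_compl _ (hjk.trans hk),
    compl_compl]
  rw [sumBelow_sumBelow _ _ (by rw [card_compl]; omega), card_compl]
  congr 3 <;> omega

theorem sum_mul_sumBelow [CommSemiring R] (f g : Finset α → R) (j k : ℕ) :
    ∑ S ∈ powersetCard k univ, f S * sumBelow g j S
      = ∑ J ∈ powersetCard j univ, g J * sumAbove f k J := by
  simp only [sumBelow, sumAbove, mul_sum]
  rw [sum_comm' (t' := powersetCard j univ) (s' := fun J => {S ∈ powersetCard k univ | J ⊆ S})]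
  · exact sum_congr rfl fun J _ => sum_congr rfl fun S _ => mul_comm _ _
  · intro S J
    simp only [mem_powersetCard, mem_filter, subset_univ, true_and]
    tauto

theorem sumBelow_compl [Ring R] (g : Finset α → R) (j : ℕ) (S : Finset α) :
    sumBelow g j Sᶜ = ∑ I ∈ S.powerset, (-1) ^ #I * sumAbove g j I := by
  have hsieve : ∀ J : Finset α,
      ∑ I ∈ (J ∩ S).powerset, (-1 : R) ^ #I = if J ∩ S = ∅ then 1 else 0 := fun J => by
    exact_mod_cast congrArg (Int.cast : ℤ → R) (sum_powerset_neg_one_pow_card (x := J ∩ S))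
  have hdisj : powersetCard j Sᶜ = {J ∈ powersetCard j (univ : Finset α) | J ∩ S = ∅} := by
    ext J
    simp only [mem_powersetCard, mem_filter, subset_univ, true_and, subset_compl_iff_disjoint_right,
      disjoint_iff_inter_eq_empty, and_comm]
  calc sumBelow g j Sᶜ
      = ∑ J ∈ powersetCard j univ, ∑ I ∈ (J ∩ S).powerset, (-1) ^ #I * g J := by
        simp only [sumBelow, hdisj, sum_filter, ← sum_mul, hsieve, ite_mul, one_mul, zero_mul]
    _ = ∑ I ∈ S.powerset, ∑ J ∈ powersetCard j univ with I ⊆ J, (-1) ^ #I * g J :=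
        sum_comm' fun J I => by
          simp only [mem_powersetCard, mem_filter, mem_powerset, subset_inter_iff]
          tauto
    _ = ∑ I ∈ S.powerset, (-1) ^ #I * sumAbove g j I := by
        simp only [sumAbove, mul_sum]

end SubsetSums

section Harmonic

variable {α M R K : Type*} [Fintype α] [DecidableEq α]

/-- A function on the `j`-element subsets of `α` is harmonic if its sum over the `j`-element
supersets of any smaller set vanishes.  The values of `g` on sets of other sizes are irrelevant. -/
def IsHarmonic [AddCommMonoid M] (j : ℕ) (g : Finset α → M) : Prop :=
  ∀ I : Finset α, #I < j → sumAbove g j I = 0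

namespace IsHarmonic

theorem sumBelow_compl [Ring R] {j : ℕ} {g : Finset α → R} (hg : IsHarmonic j g)
    (S : Finset α) : sumBelow g j Sᶜ = (-1) ^ j * sumBelow g j S := by
  rw [_root_.sumBelow_compl, sumBelow, mul_sum]
  symm
  refine sum_subset_zero_on_sdiff (fun J hJ => ?_) (fun I hI => ?_) (fun J hJ => ?_)
  · exact mem_powerset.2 (mem_powersetCard.1 hJ).1
  · obtain ⟨hIS, hIj⟩ := mem_sdiff.1 hI
    have hne : #I ≠ j := fun h => hIj (mem_powersetCard.2 ⟨mem_powerset.1 hIS, h⟩)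
    rcases hne.lt_or_gt with hlt | hgt
    · rw [hg I hlt, mul_zero]
    · rw [sumAbove_of_lt_card g hgt, mul_zero]
  · obtain ⟨-, rfl⟩ := mem_powersetCard.1 hJ
    rw [sumAbove_card]

theorem sumAbove_sumBelow [CommRing R] {j k : ℕ} {g : Finset α → R} (hg : IsHarmonic j g)
    {T : Finset α} (hT : #T ≤ k) (hk : k ≤ Fintype.card α) :
    sumAbove (sumBelow g j) k T
      = ((Fintype.card α - #T - j).choose (k - #T) : R) * sumBelow g j T := by
  have hsq : ((-1 : R) ^ j) * (-1) ^ j = 1 := by rw [← mul_pow]; simp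
  have hTc : #Tᶜ - (Fintype.card α - k) = k - #T := by rw [card_compl]; omega
  calc sumAbove (sumBelow g j) k T
      = sumBelow (fun S => sumBelow g j Sᶜ) (Fintype.card α - k) Tᶜ :=
        sumAbove_eq_sumBelow_compl _ hk T
    _ = (-1) ^ j * sumBelow (sumBelow g j) (Fintype.card α - k) Tᶜ := by
        simp only [hg.sumBelow_compl]
        exact (mul_sum _ _ _).symm
    _ = (-1) ^ j * (((Fintype.card α - #T - j).choose (k - #T) : R)
          * ((-1) ^ j * sumBelow g j T)) := by
        rw [sumBelow_sumBelow g j (by rw [card_compl]; omega), hTc, card_compl,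
          hg.sumBelow_compl]
    _ = ((Fintype.card α - #T - j).choose (k - #T) : R) * sumBelow g j T := by
        linear_combination ((Fintype.card α - #T - j).choose (k - #T) : R) * sumBelow g j T * hsq

theorem sum_sumBelow_mul_sumBelow_of_lt [CommRing R] {i j k : ℕ} {g h : Finset α → R}
    (hg : IsHarmonic i g) (hh : IsHarmonic j h) (hij : i < j) (hjk : j ≤ k)
    (hk : k ≤ Fintype.card α) :
    ∑ S ∈ powersetCard k univ, sumBelow g i S * sumBelow h j S = 0 := by
  have hlevel : ∀ J ∈ powersetCard j (univ : Finset α), h J * sumAbove (sumBelow g i) k J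
      = ((Fintype.card α - j - i).choose (k - j) : R) * (h J * sumBelow g i J) := by
    intro J hJ
    rw [hg.sumAbove_sumBelow (by rwa [mem_powersetCard_univ.1 hJ]) hk,
      mem_powersetCard_univ.1 hJ]
    ring
  rw [sum_mul_sumBelow, sum_congr rfl hlevel, ← mul_sum, sum_mul_sumBelow,
    sum_eq_zero fun I hI => ?_, mul_zero]
  rw [hh I (by rwa [mem_powersetCard_univ.1 hI]), mul_zero]

end IsHarmonic

theorem isHarmonic_zero [AddCommMonoid M] (j : ℕ) : IsHarmonic j (0 : Finset α → M) :=
  fun _ _ => sum_const_zero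

theorem exists_isHarmonic_sumAbove_sub_eq_zero [Field K] [CharZero K] {j k : ℕ} (hjk : j ≤ k)
    (hk : j + k ≤ Fintype.card α) {r : Finset α → K} (hr : ∀ T, #T < j → sumAbove r k T = 0) :
    ∃ h : Finset α → K, IsHarmonic j h ∧
      ∀ T, #T ≤ j → sumAbove (fun S => r S - sumBelow h j S) k T = 0 := by
  set c := ((Fintype.card α - j - j).choose (k - j) : K) with hc
  have hc0 : c ≠ 0 := Nat.cast_ne_zero.2 (Nat.choose_pos (by omega)).ne'
  -- The lowest level on which `sumAbove r k` does not vanish is itself harmonic.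
  have hh : IsHarmonic j (fun T => c⁻¹ * sumAbove r k T) := fun I hI => by
    rw [sumAbove, ← mul_sum, ← sumAbove, sumAbove_sumAbove r hI.le hjk (by omega), hr I hI]
    simp only [mul_zero]
  refine ⟨_, hh, fun T hT => ?_⟩
  rw [sumAbove, sum_sub_distrib, ← sumAbove, ← sumAbove,
    hh.sumAbove_sumBelow (hT.trans hjk) (by omega)]
  rcases hT.lt_or_eq with hlt | rfl
  · rw [hr T hlt, sumBelow_of_card_lt _ hlt, mul_zero, sub_zero]
  · rw [sumBelow_card, ← hc, mul_inv_cancel_left₀ hc0, sub_self]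

theorem exists_isHarmonic_sumAbove_sub_sum_eq_zero [Field K] [CharZero K] {k : ℕ}
    (hk : 2 * k ≤ Fintype.card α) (f : Finset α → K) {m : ℕ} (hm : m ≤ k + 1) :
    ∃ g : ℕ → Finset α → K, (∀ j, IsHarmonic j (g j)) ∧
      ∀ T, #T < m → sumAbove (fun S => f S - ∑ j ∈ range m, sumBelow (g j) j S) k T = 0 := by
  induction m with
  | zero => exact ⟨fun _ => 0, isHarmonic_zero, by simp⟩
  | succ m ih =>
    obtain ⟨g, hg, hgf⟩ := ih (by omega)
    obtain ⟨h, hh, hhf⟩ :=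
      exists_isHarmonic_sumAbove_sub_eq_zero (by omega) (by omega) hgf
    refine ⟨Function.update g m h, fun j => ?_, fun T hT => ?_⟩
    · rcases eq_or_ne j m with rfl | hj
      · rwa [Function.update_self]
      · rw [Function.update_of_ne hj]
        exact hg j
    · rw [← hhf T (Nat.lt_succ_iff.1 hT)]
      refine sumAbove_congr (fun S _ => ?_) T
      rw [sum_range_succ, Function.update_self, ← sub_sub]
      congr 2
      exact sum_congr rfl fun j hj => by rw [Function.update_of_ne (mem_range.1 hj).ne]

theorem exists_isHarmonic_eq_sum_sumBelow [Field K] [CharZero K] {k : ℕ}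
    (hk : 2 * k ≤ Fintype.card α) (f : Finset α → K) :
    ∃ g : ℕ → Finset α → K, (∀ j, IsHarmonic j (g j)) ∧
      ∀ S, #S = k → f S = ∑ j ∈ range (k + 1), sumBelow (g j) j S := by
  obtain ⟨g, hg, hgf⟩ := exists_isHarmonic_sumAbove_sub_sum_eq_zero hk f le_rfl
  refine ⟨g, hg, fun S hS => ?_⟩
  subst hS
  have hres := hgf S (Nat.lt_succ_self _)
  rwa [sumAbove_card, sub_eq_zero] at hres

theorem sum_sum_mul_sum_mul_sumBelow_of_isHarmonic [CommRing R] {k : ℕ} (hk : k ≤ Fintype.card α)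
    {g : ℕ → Finset α → R} (hg : ∀ j, IsHarmonic j (g j)) (a : ℕ → R) :
    ∑ S ∈ powersetCard k univ, (∑ i ∈ range (k + 1), sumBelow (g i) i S) *
        ∑ j ∈ range (k + 1), a j * sumBelow (g j) j S
      = ∑ j ∈ range (k + 1), a j * ∑ S ∈ powersetCard k univ, sumBelow (g j) j S ^ 2 := by
  have horth : ∀ i ∈ range (k + 1), ∀ j ∈ range (k + 1), i ≠ j →
      ∑ S ∈ powersetCard k (univ : Finset α), sumBelow (g i) i S * sumBelow (g j) j S = 0 := by
    intro i hi j hj hij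
    rw [mem_range, Nat.lt_succ_iff] at hi hj
    rcases hij.lt_or_gt with hlt | hgt
    · exact (hg i).sum_sumBelow_mul_sumBelow_of_lt (hg j) hlt hj hk
    · simp only [mul_comm (sumBelow (g i) i _)]
      exact (hg j).sum_sumBelow_mul_sumBelow_of_lt (hg i) hgt hi hk
  calc ∑ S ∈ powersetCard k univ, (∑ i ∈ range (k + 1), sumBelow (g i) i S) *
        ∑ j ∈ range (k + 1), a j * sumBelow (g j) j S
      = ∑ j ∈ range (k + 1), ∑ i ∈ range (k + 1),
        a j * ∑ S ∈ powersetCard k univ, sumBelow (g i) i S * sumBelow (g j) j S := by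
        simp only [sum_mul_sum]
        rw [sum_comm_cycle]
        refine sum_congr rfl fun j _ => ?_
        rw [sum_comm]
        simp only [mul_sum, mul_left_comm]
    _ = ∑ j ∈ range (k + 1), a j * ∑ S ∈ powersetCard k univ, sumBelow (g j) j S ^ 2 := by
        refine sum_congr rfl fun j hj => ?_
        rw [sum_eq_single_of_mem j hj fun i hi hij => by rw [horth i hi j hj hij, mul_zero]]
        simp only [sq]

/-- The eigenvalue, on `sumBelow g j` with `g` harmonic, of the operator that sends a function `f`
on the `k`-element subsets of an `n`-element set to `S ↦ ∑ T, sumAbove f k T`, where `T` runs over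
the `t`-element sets disjoint from `S`. For `t = k` this is the Kneser graph. The subtractions are
not truncated when `j, t ≤ k ≤ n - k`. -/
def disjointEigenvalue (n k t j : ℕ) : ℤ :=
  (-1) ^ j * (n - k - j).choose (n - k - t) * (n - t - j).choose (k - t)

theorem IsHarmonic.sumBelow_sumAbove_sumBelow_compl [CommRing R] {j k t : ℕ} {g : Finset α → R}
    (hg : IsHarmonic j g) (htk : t ≤ k) (hk : 2 * k ≤ Fintype.card α) {S : Finset α}
    (hS : #S = k) :
    sumBelow (sumAbove (sumBelow g j) k) t Sᶜ
      = disjointEigenvalue (Fintype.card α) k t j * sumBelow g j S := by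
  set n := Fintype.card α
  have hSc : #Sᶜ = n - k := by rw [card_compl, hS]
  calc sumBelow (sumAbove (sumBelow g j) k) t Sᶜ
      = ((n - t - j).choose (k - t) : R) * sumBelow (sumBelow g j) t Sᶜ := by
        rw [sumBelow, sumBelow, mul_sum]
        refine sum_congr rfl fun T hT => ?_
        obtain ⟨-, rfl⟩ := mem_powersetCard.1 hT
        exact hg.sumAbove_sumBelow htk (by omega)
    _ = disjointEigenvalue n k t j * sumBelow g j S := by
        rw [sumBelow_sumBelow g j (by omega), hSc, hg.sumBelow_compl]
        push_cast [disjointEigenvalue]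
        ring

theorem exists_nonneg_eq_sum_disjointEigenvalue_mul {k : ℕ} (hk : 2 * k ≤ Fintype.card α)
    (f : Finset α → ℝ) :
    ∃ w : ℕ → ℝ, (∀ j, 0 ≤ w j) ∧
      ∑ S ∈ powersetCard k univ, f S ^ 2 = ∑ j ∈ range (k + 1), w j ∧
      ∀ t ≤ k, ∑ S ∈ powersetCard k univ, f S * sumBelow (sumAbove f k) t Sᶜ
        = ∑ j ∈ range (k + 1), disjointEigenvalue (Fintype.card α) k t j * w j := by
  obtain ⟨g, hg, hf⟩ := exists_isHarmonic_eq_sum_sumBelow hk f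
  have hdiag := sum_sum_mul_sum_mul_sumBelow_of_isHarmonic (k := k) (by omega) hg
  refine ⟨fun j => ∑ S ∈ powersetCard k univ, sumBelow (g j) j S ^ 2,
    fun j => sum_nonneg fun S _ => sq_nonneg _, ?_, fun t ht => ?_⟩
  · have hnorm := hdiag fun _ => 1
    simp only [one_mul] at hnorm
    rw [← hnorm]
    exact sum_congr rfl fun S hS => by rw [hf S (mem_powersetCard_univ.1 hS), sq]
  · rw [← hdiag]
    refine sum_congr rfl fun S hS => ?_
    rw [mem_powersetCard_univ] at hS
    have hAbove : sumAbove f k = fun T => ∑ j ∈ range (k + 1), sumAbove (sumBelow (g j) j) k T :=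
      funext fun T => (sumAbove_congr hf T).trans sum_comm
    rw [hf S hS, hAbove, sumBelow, sum_comm]
    congr 1
    exact sum_congr rfl fun j _ => (hg j).sumBelow_sumAbove_sumBelow_compl ht hk hS

end Harmonic

section Eigenvalues

theorem antitone_choose_div_choose {k u : ℕ} (hku : k ≤ u) :
    Antitone fun j => (k.choose j : ℝ) / u.choose j := by
  refine antitone_nat_of_succ_le fun j => ?_
  rcases le_or_gt k j with hkj | hjk
  · rw [Nat.choose_eq_zero_of_lt (by omega : k < j + 1), Nat.cast_zero, zero_div]
    positivity
  · have hu : (0 : ℝ) < u.choose j := Nat.cast_pos.2 (Nat.choose_pos (by omega))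
    have hu' : (0 : ℝ) < u.choose (j + 1) := Nat.cast_pos.2 (Nat.choose_pos (by omega))
    have hcross : k.choose (j + 1) * u.choose j * (j + 1)
        ≤ k.choose j * u.choose (j + 1) * (j + 1) :=
      calc k.choose (j + 1) * u.choose j * (j + 1)
          = k.choose j * u.choose j * (k - j) := by
            rw [mul_right_comm, Nat.choose_succ_right_eq, mul_right_comm]
        _ ≤ k.choose j * u.choose j * (u - j) := by gcongr
        _ = k.choose j * u.choose (j + 1) * (j + 1) := by
            rw [mul_assoc, mul_assoc, ← Nat.choose_succ_right_eq]
    rw [div_le_div_iff₀ hu' hu]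
    exact_mod_cast Nat.le_of_mul_le_mul_right hcross j.succ_pos

theorem choose_mul_choose_eq_choose_mul_choose_sub {N t j : ℕ} (ht : t ≤ N) :
    N.choose t * t.choose j = N.choose j * (N - j).choose (N - t) := by
  rcases le_or_gt j t with hjt | htj
  · rw [Nat.choose_mul hjt,
      Nat.choose_symm_of_eq_add (by omega : N - j = (t - j) + (N - t))]
  · rw [Nat.choose_eq_zero_of_lt htj]
    rcases le_or_gt j N with hjN | hNj
    · rw [Nat.choose_eq_zero_of_lt (by omega : N - j < N - t), mul_zero, mul_zero]
    · rw [Nat.choose_eq_zero_of_lt hNj, mul_zero, zero_mul]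

theorem disjointEigenvalue_eq_choose_mul {n k t j : ℕ} (ht : t ≤ n - k) (hj : j ≤ n - k) :
    (disjointEigenvalue n k t j : ℝ) = (n - k).choose t *
      ((-1) ^ j * (t.choose j / (n - k).choose j) * (n - t - j).choose (k - t)) := by
  have hpos : (0 : ℝ) < (n - k).choose j := Nat.cast_pos.2 (Nat.choose_pos hj)
  have hmul : ((n - k).choose t * t.choose j : ℝ)
      = (n - k).choose j * (n - k - j).choose (n - k - t) :=
    mod_cast choose_mul_choose_eq_choose_mul_choose_sub ht
  push_cast [disjointEigenvalue]
  field_simp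
  linear_combination -((n - t - j).choose (k - t) : ℝ) * hmul

variable {n k t : ℕ}

theorem choose_pred_mul_sub (htk : t < k) (hkn : k ≤ n) :
    ((n - t - 1).choose (k - t) : ℝ) * (k - t)
      = (n - t - 1).choose (k - t - 1) * ((n - k : ℕ) : ℝ) := by
  have h := Nat.choose_succ_right_eq (n - t - 1) (k - t - 1)
  rw [show k - t - 1 + 1 = k - t by omega, show n - t - 1 - (k - t - 1) = n - k by omega] at h
  rw [← Nat.cast_sub htk.le]
  exact_mod_cast h

theorem choose_pred_mul_choose_div_choose_le (htk : t < k) (hn : 2 * k ≤ n)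
    (h : (k : ℝ) * (k - 1) ≤ (k - t) * (n - k - 1)) {j : ℕ} (hj : 2 ≤ j) (hjk : j ≤ k) :
    ((n - t - 1).choose (k - t) : ℝ) * (k.choose j / (n - k).choose j)
      ≤ (n - t - 1).choose (k - t - 1) := by
  have hk : (2 : ℝ) ≤ k := mod_cast hj.trans hjk
  have hN : (k : ℝ) ≤ (n - k : ℕ) := Nat.cast_le.2 (by omega)
  have hsub : ((n - k : ℕ) : ℝ) = n - k := Nat.cast_sub (by omega)
  have hratio : (k.choose 2 : ℝ) / (n - k).choose 2 ≤ (k - t) / (n - k : ℕ) := by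
    rw [Nat.cast_choose_two, Nat.cast_choose_two, div_div_div_cancel_right₀ two_ne_zero,
      div_le_div_iff₀ (by nlinarith) (by linarith)]
    rw [← hsub] at h
    nlinarith
  calc ((n - t - 1).choose (k - t) : ℝ) * (k.choose j / (n - k).choose j)
      ≤ (n - t - 1).choose (k - t) * (k.choose 2 / (n - k).choose 2) := by
        gcongr _ * ?_
        exact antitone_choose_div_choose (by omega) hj
    _ ≤ (n - t - 1).choose (k - t) * ((k - t) / (n - k : ℕ)) := by gcongr
    _ = (n - t - 1).choose (k - t - 1) := by
        rw [← mul_div_assoc, choose_pred_mul_sub htk (by omega),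
          mul_div_cancel_right₀ _ (by linarith)]

theorem choose_div_choose_mul_choose_le_of_even (htk : t < k) (hkn : k ≤ n) {j : ℕ}
    (hj : Even j) :
    (t.choose j / (n - k).choose j * (n - t - j).choose (k - t) : ℝ)
      ≤ (n - t - 1).choose (k - t - 1)
        + (n - t - 1).choose (k - t) * (k.choose j / (n - k).choose j) := by
  rcases j.eq_zero_or_pos with rfl | hj0
  · have hpascal := Nat.choose_succ_succ (n - t - 1) (k - t - 1)
    rw [show (n - t - 1).succ = n - t by omega, show (k - t - 1).succ = k - t by omega] at hpascal
    simp [hpascal]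
  · have hstep : (t.choose j / (n - k).choose j * (n - t - j).choose (k - t) : ℝ)
        ≤ k.choose j / (n - k).choose j * (n - t - 1).choose (k - t) := by
      gcongr ?_ / _ * ?_
      · exact_mod_cast Nat.choose_le_choose j htk.le
      · exact_mod_cast Nat.choose_le_choose (k - t) (by omega)
    rw [mul_comm (_ / _ : ℝ)] at hstep
    linarith [Nat.cast_nonneg (α := ℝ) ((n - t - 1).choose (k - t - 1))]

theorem choose_mul_choose_div_choose_sub_le_of_odd (htk : t < k) (hn : 2 * k ≤ n)
    (h : (k : ℝ) * (k - 1) ≤ (k - t) * (n - k - 1)) {j : ℕ} (hj : Odd j) (hjk : j ≤ k) :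
    ((n - t - 1).choose (k - t) * (k.choose j / (n - k).choose j)
        - t.choose j / (n - k).choose j * (n - t - j).choose (k - t) : ℝ)
      ≤ (n - t - 1).choose (k - t - 1) := by
  rcases (Nat.one_le_iff_ne_zero.2 hj.pos.ne').eq_or_lt with rfl | hj2
  · have hN : ((n - k : ℕ) : ℝ) ≠ 0 := Nat.cast_ne_zero.2 (by omega)
    have habsorb := choose_pred_mul_sub htk (by omega : k ≤ n)
    simp only [Nat.choose_one_right]
    field_simp
    linarith
  · have := choose_pred_mul_choose_div_choose_le htk hn h hj2 hjk
    have hnonneg : (0 : ℝ) ≤ t.choose j / (n - k).choose j * (n - t - j).choose (k - t) := by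
      positivity
    linarith

theorem disjointEigenvalue_le (htk : t < k) (hn : 2 * k ≤ n)
    (h : (k : ℝ) * (k - 1) ≤ (k - t) * (n - k - 1)) {j : ℕ} (hjk : j ≤ k) :
    (disjointEigenvalue n k t j : ℝ) ≤ (n - k).choose t * ((n - t - 1).choose (k - t - 1)
      + (n - t - 1).choose (k - t) / (n - k).choose k * disjointEigenvalue n k k j) := by
  have hpos : (0 : ℝ) < (n - k).choose k := Nat.cast_pos.2 (Nat.choose_pos (by omega))
  rw [disjointEigenvalue_eq_choose_mul (by omega : t ≤ n - k) (by omega),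
    disjointEigenvalue_eq_choose_mul (by omega : k ≤ n - k) (by omega), Nat.sub_self,
    Nat.choose_zero_right, Nat.cast_one, mul_one, ← mul_assoc (_ / _), div_mul_cancel₀ _ hpos.ne']
  gcongr
  rcases j.even_or_odd with hj | hj
  · simp only [hj.neg_one_pow, one_mul]
    exact choose_div_choose_mul_choose_le_of_even htk (by omega) hj
  · rw [hj.neg_one_pow]
    linarith [choose_mul_choose_div_choose_sub_le_of_odd htk hn h hj hjk]

end Eigenvalues

section Averaging

variable {α : Type*} [Fintype α] [DecidableEq α] {k t : ℕ}

theorem sum_mul_sumBelow_sumAbove_compl_le (htk : t < k) (hk : 2 * k ≤ Fintype.card α)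
    (h : (k : ℝ) * (k - 1) ≤ (k - t) * (Fintype.card α - k - 1)) (f : Finset α → ℝ) :
    ∑ S ∈ powersetCard k univ, f S * sumBelow (sumAbove f k) t Sᶜ
      ≤ (Fintype.card α - k).choose t *
        ((Fintype.card α - t - 1).choose (k - t - 1) * ∑ S ∈ powersetCard k univ, f S ^ 2
          + (Fintype.card α - t - 1).choose (k - t) / (Fintype.card α - k).choose k *
            ∑ S ∈ powersetCard k univ, f S * sumBelow (sumAbove f k) k Sᶜ) := by
  obtain ⟨w, hw, hsq, hquad⟩ := exists_nonneg_eq_sum_disjointEigenvalue_mul hk f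
  rw [hsq, hquad t htk.le, hquad k le_rfl, mul_sum, mul_sum, ← sum_add_distrib, mul_sum]
  refine sum_le_sum fun j hj => ?_
  rw [← mul_assoc (_ / _), ← add_mul, ← mul_assoc]
  exact mul_le_mul_of_nonneg_right
    (disjointEigenvalue_le htk hk h (Nat.lt_succ_iff.1 (mem_range.1 hj))) (hw j)

theorem sumAbove_indicator {F : Finset (Finset α)} (hF : (F : Set (Finset α)).Sized k)
    (T : Finset α) :
    sumAbove (fun S => if S ∈ F then (1 : ℝ) else 0) k T = #{A ∈ F | T ⊆ A} := by
  rw [sumAbove, sum_boole]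
  congr 2
  ext A
  simp only [mem_filter, mem_powersetCard_univ]
  exact ⟨fun h => ⟨h.2, h.1.2⟩, fun h => ⟨⟨hF h.1, h.2⟩, h.1⟩⟩

theorem sum_indicator_mul {F : Finset (Finset α)} (hF : (F : Set (Finset α)).Sized k)
    (φ : Finset α → ℝ) :
    ∑ S ∈ powersetCard k univ, (if S ∈ F then (1 : ℝ) else 0) * φ S = ∑ S ∈ F, φ S := by
  simp only [ite_mul, one_mul, zero_mul, ← sum_filter]
  congr 1
  ext S
  simp only [mem_filter, mem_powersetCard_univ, and_iff_right_iff_imp]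
  exact fun h => hF h

theorem filter_superset_eq_empty {F : Finset (Finset α)} (hF : (F : Set (Finset α)).Sized k)
    (hint : (F : Set (Finset α)).Intersecting) {S T : Finset α} (hS : S ∈ F)
    (hT : T ∈ powersetCard k Sᶜ) : {A ∈ F | T ⊆ A} = ∅ := by
  rw [filter_eq_empty_iff]
  intro A hA hTA
  obtain ⟨hTS, hTk⟩ := mem_powersetCard.1 hT
  obtain rfl := eq_of_subset_of_card_le hTA (by rw [hF hA, hTk])
  exact hint hA hS (subset_compl_iff_disjoint_right.1 hTS)

theorem sum_card_filter_superset_le (htk : t < k) (hk : 2 * k ≤ Fintype.card α)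
    (h : (k : ℝ) * (k - 1) ≤ (k - t) * (Fintype.card α - k - 1)) {F : Finset (Finset α)}
    (hF : (F : Set (Finset α)).Sized k) (hint : (F : Set (Finset α)).Intersecting) :
    ∑ S ∈ F, ∑ T ∈ powersetCard t Sᶜ, #{A ∈ F | T ⊆ A}
      ≤ ∑ S ∈ F, ∑ _T ∈ powersetCard t Sᶜ, (Fintype.card α - t - 1).choose (k - t - 1) := by
  have hbound := sum_mul_sumBelow_sumAbove_compl_le htk hk h fun S => if S ∈ F then (1 : ℝ) else 0
  simp only [sq, sum_indicator_mul hF, funext (sumAbove_indicator hF)] at hbound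
  have hkneser : ∀ S ∈ F, sumBelow (fun T => (#{A ∈ F | T ⊆ A} : ℝ)) k Sᶜ = 0 := by
    refine fun S hS => sum_eq_zero fun T hT => ?_
    rw [filter_superset_eq_empty hF hint hS hT, card_empty, Nat.cast_zero]
  have hcard : ∑ S ∈ F, (if S ∈ F then (1 : ℝ) else 0) = #F := by
    rw [sum_congr rfl fun S hS => if_pos hS, sum_const, nsmul_one]
  have hconst : ∑ S ∈ F, ∑ _T ∈ powersetCard t Sᶜ, (Fintype.card α - t - 1).choose (k - t - 1)
      = (Fintype.card α - k).choose t * ((Fintype.card α - t - 1).choose (k - t - 1) * #F) := by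
    rw [sum_congr rfl fun S hS => by rw [sum_const, card_powersetCard, card_compl, hF hS],
      sum_const]
    simp only [smul_eq_mul]
    ring
  rw [sum_congr rfl hkneser, sum_const_zero, mul_zero, add_zero, hcard] at hbound
  simp only [sumBelow] at hbound
  rw [hconst]
  exact_mod_cast hbound

theorem t_degree_EKR_general (htk : t < k)
    (hn : 2 * (k : ℝ) + t * (k - 1) / (k - t) ≤ Fintype.card α) {F : Finset (Finset α)}
    (hF : (F : Set (Finset α)).Sized k) (hint : (F : Set (Finset α)).Intersecting) :
    ∃ T : Finset α, #T = t ∧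
      #{A ∈ F | T ⊆ A} ≤ (Fintype.card α - t - 1).choose (k - t - 1) := by
  have hkt : (0 : ℝ) < k - t := sub_pos.2 (Nat.cast_lt.2 htk)
  have hk1 : (1 : ℝ) ≤ k := mod_cast htk.pos
  have hk : 2 * k ≤ Fintype.card α := by
    have : (0 : ℝ) ≤ t * (k - 1) / (k - t) := by
      have := sub_nonneg.2 hk1
      positivity
    exact_mod_cast (le_add_of_nonneg_right this).trans hn
  have h : (k : ℝ) * (k - 1) ≤ (k - t) * (Fintype.card α - k - 1) := by
    have hdiv : (t : ℝ) * (k - 1) / (k - t) ≤ Fintype.card α - 2 * k := by linarith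
    rw [div_le_iff₀ hkt] at hdiv
    linarith
  rcases F.eq_empty_or_nonempty with rfl | hne
  · obtain ⟨T, -, hT⟩ :=
      exists_subset_card_eq (s := (univ : Finset α)) (n := t) (by rw [card_univ]; omega)
    exact ⟨T, hT, by simp⟩
  obtain ⟨S, hSF, hS⟩ := exists_le_of_sum_le hne (sum_card_filter_superset_le htk hk h hF hint)
  have hSc : (powersetCard t Sᶜ).Nonempty :=
    powersetCard_nonempty.2 (by rw [card_compl, hF hSF]; omega)
  obtain ⟨T, hTS, hT⟩ := exists_le_of_sum_le hSc hS
  exact ⟨T, (mem_powersetCard.1 hTS).2, hT⟩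

end Averaging

theorem mul_div_le_three_mul_div {k t : ℝ} (ht : 0 ≤ t) (htk : t < k) :
    t * (k - 1) / (k - t) ≤ 3 * t / (1 - t / k) := by
  have hk : 0 < k := ht.trans_lt htk
  have hkt := sub_pos.2 htk
  rw [one_sub_div hk.ne', div_div_eq_mul_div]
  refine div_le_div_of_nonneg_right ?_ hkt.le
  nlinarith

/-- t-degree version of the Erdős–Ko–Rado theorem (Theorem 4, second part):
if `1 ≤ t < k` and `n ≥ 2k + 3t/(1 - t/k)`, then any intersecting family `F`
of `k`-subsets of `[n]` satisfies `δ_t(F) ≤ C(n-t-1, k-t-1)`. -/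
theorem t_degree_EKR (n k t : ℕ) (ht : 1 ≤ t) (htk : t < k)
    (hn : 2 * (k : ℝ) + 3 * (t : ℝ) / (1 - (t : ℝ) / (k : ℝ)) ≤ (n : ℝ))
    (F : Finset (Finset (Fin n)))
    (hcard : ∀ A ∈ F, A.card = k)
    (hint : ∀ A ∈ F, ∀ B ∈ F, (A ∩ B).Nonempty) :
    ∃ T : Finset (Fin n), T.card = t ∧
      (F.filter (fun A => T ⊆ A)).card ≤ (n - t - 1).choose (k - t - 1) := by
  have hcoarse := mul_div_le_three_mul_div t.cast_nonneg (Nat.cast_lt (α := ℝ).2 htk)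
  simpa only [Fintype.card_fin] using t_degree_EKR_general htk
    (by rw [Fintype.card_fin]; linarith) (fun A hA => hcard A hA)
    (fun A hA B hB => not_disjoint_iff_nonempty_inter.2 (hint A hA B hB))
end

section
/- Let n and k be integers with k ≥ 30 and n ≥ 2k+5. Then any non-trivial intersecting family F of k-element subsets of [n] satisfies δ_1(F) ≤ C(n-2, k-2) - C(n-k-2, k-2). -/
/-!
Suppose every degree exceeds `C(n-2, k-2) - C(n-k-2, k-2)`. A member of `F` missing `v` blocks every
`(k-1)`-set disjoint from it from the link of `v`, and by Kruskal–Katona many members missing `v`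
block many sets. Since no degree is small, this bootstraps to at least `C(n-3, k-2)` members missing
`v`, hence to the degree bound `C(n-2, k-2) + C(n-3, k-2)` for every `v`. With all degrees in
this narrow window, their variance is small. On the other hand, the variance is the weight of the
first harmonic component of the indicator function of `F`. This component carries the only large
negative eigenvalue of the Kneser graph, so the Hoffman-type identity expressing that `F` is
an independent set of that graph forces the variance to be large, a contradiction for `k ≥ 30`.
-/

namespace DegreeHM

open Finset Function

section Spectral

variable {α : Type*} {f g h : Finset α → ℝ} {j k m : ℕ} {A S : Finset α}

lemma eq_zero_of_card_ne (hf : (support f).Sized k) (hA : #A ≠ k) : f A = 0 :=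
  notMem_support.1 fun h => hA (hf h)

variable [DecidableEq α]

/-- The raising operator on functions on the Boolean lattice of subsets of `α`. -/
def up : Module.End ℝ (Finset α → ℝ) where
  toFun f A := ∑ x ∈ A, f (A.erase x)
  map_add' f g := by ext A; simp [sum_add_distrib]
  map_smul' c f := by ext A; simp [mul_sum]

lemma up_apply (f : Finset α → ℝ) (A : Finset α) : up f A = ∑ x ∈ A, f (A.erase x) := rfl

lemma sized_support_up (hf : (support f).Sized k) : (support (up f)).Sized (k + 1) := by
  intro A hA
  obtain ⟨x, hx, hfx⟩ := exists_ne_zero_of_sum_ne_zero (mem_support.1 hA)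
  rw [← card_erase_add_one hx, hf (mem_support.2 hfx)]

lemma sized_support_up_pow (hf : (support f).Sized k) :
    ∀ m, (support ((up ^ m) f)).Sized (k + m)
  | 0 => by simpa using hf
  | m + 1 => by
    rw [pow_succ', Module.End.mul_apply, ← add_assoc]
    exact sized_support_up (sized_support_up_pow hf m)

lemma up_pow_apply (hf : (support f).Sized j) (hA : #A = j + m) :
    (up ^ m) f A = m.factorial * ∑ S ∈ A.powerset, f S := by
  induction m generalizing A with
  | zero =>
    rw [pow_zero, Module.End.one_apply, Nat.factorial_zero, Nat.cast_one, one_mul,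
      sum_eq_single_of_mem A (mem_powerset_self A)]
    exact fun S hS hne => eq_zero_of_card_ne hf fun hSj =>
      hne (eq_of_subset_of_card_le (mem_powerset.1 hS) (by lia))
  | succ m ih =>
    have h_erase : ∀ x ∈ A, (up ^ m) f (A.erase x) =
        m.factorial * ∑ S ∈ (A.erase x).powerset, f S := fun x hx =>
      ih (by rw [card_erase_of_mem hx]; lia)
    rw [pow_succ', Module.End.mul_apply, up_apply, sum_congr rfl h_erase, ← mul_sum,
      sum_comm' (t' := A.powerset) (s' := fun S => A \ S) (by simp [subset_erase]; tauto),
      Nat.factorial_succ, Nat.cast_mul, mul_comm ((m + 1 : ℕ) : ℝ), mul_assoc]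
    congr 1
    rw [mul_sum]
    refine sum_congr rfl fun S hS => ?_
    by_cases hfS : f S = 0
    · simp [hfS]
    · have hSj := hf hfS
      rw [sum_const, nsmul_eq_mul, card_sdiff_of_subset (mem_powerset.1 hS),
        show #A - #S = m + 1 by lia]

variable [Fintype α]

/-- The lowering operator on functions on the Boolean lattice, the adjoint of `up`. -/
def down : Module.End ℝ (Finset α → ℝ) where
  toFun f B := ∑ x ∈ Bᶜ, f (insert x B)
  map_add' f g := by ext A; simp [sum_add_distrib]
  map_smul' c f := by ext A; simp [mul_sum]

/-- The operator summing a function over the supersets of a set; at the indicator function of a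
set family, its values are the degrees of sets. -/
def upperSum : Module.End ℝ (Finset α → ℝ) where
  toFun f S := ∑ A with S ⊆ A, f A
  map_add' f g := by ext A; simp [sum_add_distrib]
  map_smul' c f := by ext A; simp [mul_sum]

/-- The operator summing a function over the sets disjoint from a given one. On functions supported
on the sets of one size it is the adjacency operator of the Kneser graph. -/
def disjSum : Module.End ℝ (Finset α → ℝ) where
  toFun f A := ∑ B with Disjoint A B, f B
  map_add' f g := by ext A; simp [sum_add_distrib]
  map_smul' c f := by ext A; simp [mul_sum]

/-- Harmonic functions of degree `j`: those supported on the sets of size `j` and killed by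
`down`. -/
structure IsHarmonic (j : ℕ) (h : Finset α → ℝ) : Prop where
  sized : (support h).Sized j
  down_eq_zero : down h = 0

lemma down_apply (f : Finset α → ℝ) (B : Finset α) : down f B = ∑ x ∈ Bᶜ, f (insert x B) := rfl

lemma upperSum_apply (f : Finset α → ℝ) (S : Finset α) :
    upperSum f S = ∑ A with S ⊆ A, f A := rfl

lemma disjSum_apply (f : Finset α → ℝ) (A : Finset α) :
    disjSum f A = ∑ B with Disjoint A B, f B := rfl

lemma up_dotProduct (g f : Finset α → ℝ) : up g ⬝ᵥ f = g ⬝ᵥ down f := by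
  simp only [dotProduct, up_apply, down_apply, sum_mul, mul_sum]
  rw [sum_sigma', sum_sigma']
  refine sum_bij' (fun z _ => ⟨z.1.erase z.2, z.2⟩) (fun z _ => ⟨insert z.2 z.1, z.2⟩)
    ?_ ?_ ?_ ?_ ?_ <;> rintro ⟨A, x⟩ hx <;>
  simp only [mem_sigma, mem_univ, true_and, mem_compl] at hx
  · simp
  · simp
  · simp [insert_erase hx]
  · simp [erase_insert hx]
  · simp [insert_erase hx]

lemma exists_eq_up_add (f : Finset α → ℝ) : ∃ g h, f = up g + h ∧ down h = 0 := by
  let L : (Finset α → ℝ) ≃ₗ[ℝ] EuclideanSpace ℝ (Finset α) := (WithLp.linearEquiv 2 ℝ _).symm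
  obtain ⟨u, hu, v, hv, huv⟩ :=
    (LinearMap.range (L.toLinearMap ∘ₗ up)).exists_add_mem_mem_orthogonal (L f)
  obtain ⟨g, rfl⟩ := hu
  refine ⟨g, L.symm v, L.injective (by simpa using huv), ?_⟩
  refine dotProduct_eq_zero _ fun g' => ?_
  have := hv _ ⟨g', rfl⟩
  rw [dotProduct_comm, ← up_dotProduct, dotProduct_comm]
  simpa [L, EuclideanSpace.inner_eq_star_dotProduct] using this

lemma exists_eq_up_add_isHarmonic (hf : (support f).Sized (k + 1)) :
    ∃ g h, (support g).Sized k ∧ IsHarmonic (k + 1) h ∧ f = up g + h := by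
  obtain ⟨g, h, hfgh, hh⟩ := exists_eq_up_add f
  let restrict (l : ℕ) (φ : Finset α → ℝ) : Finset α → ℝ := fun A => if #A = l then φ A else 0
  have sized_restrict (l : ℕ) (φ : Finset α → ℝ) : (support (restrict l φ)).Sized l :=
    fun A hA => by_contra fun hne => hA (if_neg hne)
  refine ⟨restrict k g, restrict (k + 1) h, sized_restrict k g, ⟨sized_restrict _ h, ?_⟩, ?_⟩
  · ext B
    by_cases hB : #B = k
    · rw [← hh, down_apply, down_apply]
      refine sum_congr rfl fun x hx => if_pos ?_
      rw [card_insert_of_notMem (mem_compl.1 hx), hB]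
    · refine sum_eq_zero fun x hx => if_neg ?_
      rw [card_insert_of_notMem (mem_compl.1 hx)]
      lia
  · ext A
    by_cases hA : #A = k + 1
    · have hup : up (restrict k g) A = up g A :=
        sum_congr rfl fun x hx => if_pos (by rw [card_erase_of_mem hx, hA, k.add_sub_cancel])
      rw [Pi.add_apply, hup, hfgh, Pi.add_apply]
      simp only [restrict, if_pos hA]
    · rw [eq_zero_of_card_ne hf hA, Pi.add_apply,
        eq_zero_of_card_ne (sized_support_up (sized_restrict k g)) hA,
        eq_zero_of_card_ne (sized_restrict (k + 1) h) hA, add_zero]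

lemma exists_harmonic_decomposition :
    ∀ {k : ℕ} {f : Finset α → ℝ}, (support f).Sized k → ∃ h : ℕ → Finset α → ℝ,
      (∀ j, IsHarmonic j (h j)) ∧ f = ∑ j ∈ range (k + 1), (up ^ (k - j)) (h j)
  | 0, f, hf => by
    refine ⟨Pi.single 0 f, fun j => ?_, by simp⟩
    obtain rfl | hj := eq_or_ne j 0
    · refine ⟨by simpa using hf, funext fun B => sum_eq_zero fun x _ => ?_⟩
      rw [Pi.single_eq_same]
      exact eq_zero_of_card_ne hf (insert_nonempty x B).card_pos.ne'
    · rw [Pi.single_eq_of_ne hj]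
      exact ⟨fun A hA => absurd rfl hA, map_zero _⟩
  | k + 1, f, hf => by
    obtain ⟨g, h', hg, hh', rfl⟩ := exists_eq_up_add_isHarmonic hf
    obtain ⟨h, hh, rfl⟩ := exists_harmonic_decomposition hg
    refine ⟨update h (k + 1) h', fun j => ?_, ?_⟩
    · obtain rfl | hj := eq_or_ne j (k + 1)
      · simpa using hh'
      · simpa [hj] using hh j
    · rw [sum_range_succ _ (k + 1), map_sum]
      congr 1
      · refine sum_congr rfl fun j hj => ?_
        have hjk : j < k + 1 := mem_range.1 hj
        rw [update_of_ne hjk.ne, Nat.sub_add_comm (Nat.le_of_lt_succ hjk), pow_succ',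
          Module.End.mul_apply]
      · simp

lemma upperSum_up (hg : (support g).Sized k) (S : Finset α) :
    upperSum (up g) S =
      ((Fintype.card α : ℝ) - k - #S) * upperSum g S + ∑ y ∈ S, upperSum g (S.erase y) := by
  have h_dot (f : Finset α → ℝ) (S : Finset α) :
      upperSum f S = f ⬝ᵥ fun A => if S ⊆ A then 1 else 0 := by
    simp [upperSum_apply, dotProduct, sum_filter]
  have h_count {B : Finset α} (hB : #B = k) :
      down (fun A => if S ⊆ A then (1 : ℝ) else 0) B =
        ((Fintype.card α : ℝ) - k - #S) * (if S ⊆ B then 1 else 0) +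
          ∑ y ∈ S, if S.erase y ⊆ B then 1 else 0 := by
    have hB_sum : ∑ x ∈ B, (if S.erase x ⊆ B then (1 : ℝ) else 0) =
        k * if S ⊆ B then 1 else 0 := by
      rw [← hB, ← nsmul_eq_mul, ← sum_const]
      exact sum_congr rfl fun x hx => by simp [← subset_insert_iff, insert_eq_of_mem hx]
    have hS_sum : ∑ x ∈ Sᶜ, (if S.erase x ⊆ B then (1 : ℝ) else 0) =
        ((Fintype.card α : ℝ) - #S) * if S ⊆ B then 1 else 0 := by
      rw [← Nat.cast_sub (card_le_univ S), ← card_compl, ← nsmul_eq_mul, ← sum_const]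
      exact sum_congr rfl fun x hx => by rw [erase_eq_of_notMem (mem_compl.1 hx)]
    have hB_compl := sum_add_sum_compl B fun x => if S.erase x ⊆ B then (1 : ℝ) else 0
    have hS_compl := sum_add_sum_compl S fun x => if S.erase x ⊆ B then (1 : ℝ) else 0
    simp only [down_apply, subset_insert_iff]
    linarith
  rw [h_dot, up_dotProduct, h_dot]
  simp only [h_dot g (S.erase _), dotProduct, mul_sum]
  rw [sum_comm, ← sum_add_distrib]
  refine sum_congr rfl fun B _ => ?_
  by_cases hB : g B = 0
  · simp [hB]
  · rw [h_count (hg hB), ← mul_sum]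
    ring

lemma sum_upperSum_insert (hf : (support f).Sized k) (S : Finset α) :
    ∑ x ∈ Sᶜ, upperSum f (insert x S) = ((k : ℝ) - #S) * upperSum f S := by
  simp only [upperSum_apply, insert_subset_iff, mul_sum]
  rw [sum_comm' (t' := univ.filter (S ⊆ ·)) (s' := fun A => A \ S) (by simp; tauto)]
  refine sum_congr rfl fun A hA => ?_
  have hSA : S ⊆ A := (mem_filter.1 hA).2
  by_cases hfA : f A = 0
  · simp [hfA]
  · rw [sum_const, card_sdiff_of_subset hSA, nsmul_eq_mul, Nat.cast_sub (card_le_card hSA), hf hfA]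

lemma upperSum_eq_zero_of_lt_card (hf : (support f).Sized k) (hS : k < #S) :
    upperSum f S = 0 :=
  sum_eq_zero fun _ hA =>
    eq_zero_of_card_ne hf (hS.trans_le (card_le_card (mem_filter.1 hA).2)).ne'

lemma upperSum_of_card_eq (hf : (support f).Sized k) (hS : #S = k) : upperSum f S = f S := by
  refine sum_eq_single_of_mem S (by simp) fun A hA hne => eq_zero_of_card_ne hf fun hAk => hne ?_
  exact (eq_of_subset_of_card_le (mem_filter.1 hA).2 (hAk.trans hS.symm).le).symm

namespace IsHarmonic

lemma upperSum_eq_zero (hh : IsHarmonic j h) (hS : #S < j) : upperSum h S = 0 := by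
  induction hd : j - #S generalizing S with
  | zero => lia
  | succ d ih =>
    have h_sum : ∑ x ∈ Sᶜ, upperSum h (insert x S) = 0 := by
      obtain hS' | hS' := (Nat.succ_le_of_lt hS).eq_or_lt
      · refine Eq.trans (sum_congr rfl fun x hx => ?_) (congrFun hh.down_eq_zero S)
        exact upperSum_of_card_eq hh.sized ((card_insert_of_notMem (mem_compl.1 hx)).trans hS')
      · refine sum_eq_zero fun x hx => ?_
        have hcard := card_insert_of_notMem (mem_compl.1 hx)
        exact ih (by lia) (by lia)
    rw [sum_upperSum_insert hh.sized] at h_sum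
    exact (mul_eq_zero.1 h_sum).resolve_left (sub_ne_zero.2 (mod_cast hS.ne'))

lemma upperSum_up_pow_eq_zero (hh : IsHarmonic j h) (hS : #S < j) (m : ℕ) :
    upperSum ((up ^ m) h) S = 0 := by
  induction m generalizing S with
  | zero => simpa using hh.upperSum_eq_zero hS
  | succ m ih =>
    rw [pow_succ', Module.End.mul_apply, upperSum_up (sized_support_up_pow hh.sized m), ih hS,
      sum_eq_zero fun y _ => ih ((card_le_card (S.erase_subset y)).trans_lt hS)]
    ring

lemma upperSum_up_pow (hh : IsHarmonic j h) (hm : 2 * j + m ≤ Fintype.card α) (hS : #S = j) :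
    upperSum ((up ^ m) h) S = (Fintype.card α - 2 * j).descFactorial m * h S := by
  induction m with
  | zero => simpa using upperSum_of_card_eq hh.sized hS
  | succ m ih =>
    have h_erase : ∀ y ∈ S, upperSum ((up ^ m) h) (S.erase y) = 0 := fun y hy =>
      hh.upperSum_up_pow_eq_zero ((card_erase_lt_of_mem hy).trans_eq hS) m
    rw [pow_succ', Module.End.mul_apply, upperSum_up (sized_support_up_pow hh.sized m),
      ih (by lia), sum_eq_zero h_erase, Nat.descFactorial_succ, hS, Nat.cast_mul,
      Nat.cast_sub (by lia), Nat.cast_sub (by lia)]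
    push_cast
    ring

end IsHarmonic

lemma up_pow_dotProduct (hf : (support f).Sized j) (hg : (support g).Sized (j + m)) :
    (up ^ m) f ⬝ᵥ g = m.factorial * (f ⬝ᵥ upperSum g) := by
  have h_apply (A : Finset α) :
      (up ^ m) f A * g A = m.factorial * ∑ S ∈ A.powerset, f S * g A := by
    by_cases hgA : g A = 0
    · simp [hgA]
    · rw [up_pow_apply hf (hg hgA), mul_assoc, sum_mul]
  simp only [dotProduct, h_apply, ← mul_sum]
  rw [sum_comm' (t' := univ) (s' := fun S => univ.filter (S ⊆ ·)) (by simp)]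
  simp only [upperSum_apply, mul_sum]

lemma disjSum_eq_sum_powerset (f : Finset α → ℝ) (A : Finset α) :
    disjSum f A = ∑ S ∈ A.powerset, (-1) ^ #S * upperSum f S := by
  simp only [upperSum_apply, mul_sum]
  rw [sum_comm' (t' := univ) (s' := fun B => (A ∩ B).powerset)
      (by simp [subset_inter_iff, -powerset_inter]),
    disjSum_apply, sum_filter]
  refine sum_congr rfl fun B _ => ?_
  have h_alt := congrArg (Int.cast : ℤ → ℝ) (sum_powerset_neg_one_pow_card (x := A ∩ B))
  push_cast at h_alt
  rw [← sum_mul, h_alt, ite_mul, one_mul, zero_mul]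
  simp only [disjoint_iff_inter_eq_empty]

lemma disjSum_up (hf : (support f).Sized k) (A : Finset α) :
    disjSum (up f) A = (Fintype.card α - #A - k : ℕ) * disjSum f A := by
  have h_dot (φ : Finset α → ℝ) :
      disjSum φ A = φ ⬝ᵥ fun B => if Disjoint A B then 1 else 0 := by
    simp [disjSum_apply, dotProduct, sum_filter]
  rw [h_dot, h_dot, up_dotProduct, dotProduct, dotProduct, mul_sum]
  refine sum_congr rfl fun B _ => ?_
  by_cases hfB : f B = 0
  · simp [hfB]
  rw [down_apply, mul_left_comm]
  congr 1
  simp only [disjoint_insert_right]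
  by_cases hAB : Disjoint A B
  · have h_filter : Bᶜ.filter (· ∉ A) = (A ∪ B)ᶜ := by
      ext x
      simp only [mem_filter, mem_compl, mem_union, not_or, and_comm]
    simp only [hAB, and_true, if_true, sum_boole, h_filter, card_compl,
      card_union_of_disjoint hAB, hf hfB, mul_one, Nat.sub_sub]
  · simp [hAB]

lemma disjSum_up_pow (hf : (support f).Sized j) (m : ℕ) (A : Finset α) :
    disjSum ((up ^ m) f) A = (Fintype.card α - #A - j).descFactorial m * disjSum f A := by
  induction m with
  | zero => simp
  | succ m ih =>
    rw [pow_succ', Module.End.mul_apply, disjSum_up (sized_support_up_pow hf m), ih,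
      Nat.descFactorial_succ, ← Nat.sub_sub]
    push_cast
    ring

namespace IsHarmonic

lemma disjSum_apply_eq (hh : IsHarmonic j h) (A : Finset α) :
    disjSum h A = (-1) ^ j * ∑ S ∈ A.powerset, h S := by
  rw [disjSum_eq_sum_powerset, mul_sum]
  refine sum_congr rfl fun S _ => ?_
  obtain hS | hS | hS := lt_trichotomy #S j
  · rw [hh.upperSum_eq_zero hS, eq_zero_of_card_ne hh.sized hS.ne]
    simp
  · rw [upperSum_of_card_eq hh.sized hS, hS]
  · rw [upperSum_eq_zero_of_lt_card hh.sized hS, eq_zero_of_card_ne hh.sized hS.ne']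
    simp

lemma disjSum_up_pow_apply (hh : IsHarmonic j h) (hA : #A = j + m) :
    disjSum ((up ^ m) h) A =
      (-1) ^ j * (Fintype.card α - #A - j).choose m * (up ^ m) h A := by
  rw [DegreeHM.disjSum_up_pow hh.sized, hh.disjSum_apply_eq, up_pow_apply hh.sized hA,
    Nat.descFactorial_eq_factorial_mul_choose]
  push_cast
  ring

lemma up_pow_dotProduct_eq_zero {j' m' : ℕ} {h' : Finset α → ℝ} (hh : IsHarmonic j h)
    (hh' : IsHarmonic j' h') (hne : j ≠ j') : (up ^ m) h ⬝ᵥ (up ^ m') h' = 0 := by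
  wlog hlt : j < j' generalizing j j' m m' h h'
  · rw [dotProduct_comm]
    exact this hh' hh hne.symm (by lia)
  by_cases hm : j + m = j' + m'
  · have hsized : (support ((up ^ m') h')).Sized (j + m) :=
      hm ▸ sized_support_up_pow hh'.sized m'
    rw [up_pow_dotProduct hh.sized hsized]
    refine mul_eq_zero_of_right _ (sum_eq_zero fun S _ => ?_)
    by_cases hS : h S = 0
    · rw [hS, zero_mul]
    · rw [hh'.upperSum_up_pow_eq_zero ((hh.sized hS).trans_lt hlt), mul_zero]
  · refine sum_eq_zero fun A _ => ?_
    by_cases hA : #A = j + m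
    · rw [eq_zero_of_card_ne (sized_support_up_pow hh'.sized m') (by lia), mul_zero]
    · rw [eq_zero_of_card_ne (sized_support_up_pow hh.sized m) hA, zero_mul]

lemma sum_upperSum_up_pow_sq (hh : IsHarmonic j h) (hm : 2 * j + m ≤ Fintype.card α) :
    ∑ S ∈ powersetCard j univ, upperSum ((up ^ m) h) S ^ 2 =
      (Fintype.card α - 2 * j).choose m * ((up ^ m) h ⬝ᵥ (up ^ m) h) := by
  have h_dot : h ⬝ᵥ upperSum ((up ^ m) h) =
      ∑ S ∈ powersetCard j univ, h S * upperSum ((up ^ m) h) S := by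
    refine (sum_subset (subset_univ _) fun S _ hS => ?_).symm
    rw [eq_zero_of_card_ne hh.sized (by simpa using hS), zero_mul]
  rw [up_pow_dotProduct hh.sized (sized_support_up_pow hh.sized m), h_dot, mul_sum, mul_sum]
  refine sum_congr rfl fun S hS => ?_
  rw [hh.upperSum_up_pow hm (mem_powersetCard_univ.1 hS),
    Nat.descFactorial_eq_factorial_mul_choose]
  push_cast
  ring

end IsHarmonic

lemma card_mul_upperSum_up_pow_singleton (hh : (support h).Sized 0)
    (hm : m ≤ Fintype.card α) (i : α) :
    Fintype.card α * upperSum ((up ^ m) h) {i} = m * upperSum ((up ^ m) h) ∅ := by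
  induction m with
  | zero =>
    rw [Nat.cast_zero, zero_mul, pow_zero, Module.End.one_apply,
      upperSum_eq_zero_of_lt_card hh (by simp), mul_zero]
  | succ m ih =>
    have hsized := sized_support_up_pow hh m
    have h_single := upperSum_up hsized {i}
    have h_empty := upperSum_up hsized ∅
    rw [zero_add] at h_single h_empty
    simp only [card_singleton, sum_singleton, erase_singleton, card_empty, sum_empty]
      at h_single h_empty
    rw [pow_succ', Module.End.mul_apply, h_single, h_empty]
    push_cast
    linear_combination ((Fintype.card α : ℝ) - m - 1) * ih (by lia)

section Decomposition

variable {φ : ℕ → Finset α → ℝ}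

lemma dotProduct_self_of_harmonic_decomposition (hφ : ∀ j, IsHarmonic j (φ j))
    (hf : f = ∑ j ∈ range (k + 1), (up ^ (k - j)) (φ j)) :
    f ⬝ᵥ f = ∑ j ∈ range (k + 1), (up ^ (k - j)) (φ j) ⬝ᵥ (up ^ (k - j)) (φ j) := by
  rw [hf, sum_dotProduct]
  refine sum_congr rfl fun j hj => ?_
  rw [dotProduct_sum]
  exact sum_eq_single_of_mem j hj fun i _ hne =>
    (hφ j).up_pow_dotProduct_eq_zero (hφ i) hne.symm

lemma dotProduct_disjSum_of_harmonic_decomposition (hφ : ∀ j, IsHarmonic j (φ j))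
    (hf : f = ∑ j ∈ range (k + 1), (up ^ (k - j)) (φ j)) :
    f ⬝ᵥ disjSum f = ∑ j ∈ range (k + 1), (-1) ^ j * (Fintype.card α - k - j).choose (k - j) *
      ((up ^ (k - j)) (φ j) ⬝ᵥ (up ^ (k - j)) (φ j)) := by
  have h_eigen {i j : ℕ} (hi : i ≤ k) (hj : j ≤ k) :
      (up ^ (k - i)) (φ i) ⬝ᵥ disjSum ((up ^ (k - j)) (φ j)) =
        (-1) ^ j * (Fintype.card α - k - j).choose (k - j) *
          ((up ^ (k - i)) (φ i) ⬝ᵥ (up ^ (k - j)) (φ j)) := by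
    rw [dotProduct, dotProduct, mul_sum]
    refine sum_congr rfl fun A _ => ?_
    by_cases hA : #A = k
    · rw [(hφ j).disjSum_up_pow_apply (by lia), hA]
      ring
    · rw [eq_zero_of_card_ne (sized_support_up_pow (hφ i).sized (k - i)) (by lia)]
      ring
  rw [hf, map_sum, sum_dotProduct]
  refine sum_congr rfl fun i hi => ?_
  have hik := Nat.le_of_lt_succ (mem_range.1 hi)
  rw [dotProduct_sum, sum_eq_single_of_mem i hi fun j hj hne => ?_, h_eigen hik hik]
  rw [h_eigen hik (Nat.le_of_lt_succ (mem_range.1 hj)),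
    (hφ i).up_pow_dotProduct_eq_zero (hφ j) hne.symm, mul_zero]

lemma upperSum_empty_of_harmonic_decomposition (hφ : ∀ j, IsHarmonic j (φ j))
    (hf : f = ∑ j ∈ range (k + 1), (up ^ (k - j)) (φ j)) :
    upperSum f ∅ = upperSum ((up ^ k) (φ 0)) ∅ := by
  rw [hf, map_sum, Finset.sum_apply]
  exact sum_eq_single_of_mem 0 (by simp) fun j _ hj =>
    (hφ j).upperSum_up_pow_eq_zero (by rw [card_empty]; lia) _

lemma upperSum_empty_sq_of_harmonic_decomposition (hφ : ∀ j, IsHarmonic j (φ j))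
    (hf : f = ∑ j ∈ range (k + 1), (up ^ (k - j)) (φ j)) (hk : k ≤ Fintype.card α) :
    upperSum f ∅ ^ 2 = (Fintype.card α).choose k * ((up ^ k) (φ 0) ⬝ᵥ (up ^ k) (φ 0)) := by
  simpa [upperSum_empty_of_harmonic_decomposition hφ hf] using
    (hφ 0).sum_upperSum_up_pow_sq (m := k) (by lia)

lemma sum_upperSum_singleton_sq_of_harmonic_decomposition (hφ : ∀ j, IsHarmonic j (φ j))
    (hf : f = ∑ j ∈ range (k + 1), (up ^ (k - j)) (φ j)) (hk : 1 ≤ k)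
    (hkα : k + 1 ≤ Fintype.card α) :
    ∑ i, (upperSum f {i} - k * upperSum f ∅ / Fintype.card α) ^ 2 =
      (Fintype.card α - 2).choose (k - 1) *
        ((up ^ (k - 1)) (φ 1) ⬝ᵥ (up ^ (k - 1)) (φ 1)) := by
  have h_single (i : α) :
      upperSum f {i} = upperSum ((up ^ k) (φ 0)) {i} + upperSum ((up ^ (k - 1)) (φ 1)) {i} := by
    rw [hf, map_sum, Finset.sum_apply]
    refine sum_eq_add_of_mem 0 1 (by simp) (by simp; lia) (by simp) fun j _ hj => ?_
    exact (hφ j).upperSum_up_pow_eq_zero (by rw [card_singleton]; lia) _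
  have h_diff (i : α) : upperSum f {i} - k * upperSum f ∅ / Fintype.card α =
      upperSum ((up ^ (k - 1)) (φ 1)) {i} := by
    rw [h_single, upperSum_empty_of_harmonic_decomposition hφ hf, sub_eq_iff_eq_add',
      add_left_inj, eq_div_iff (by norm_cast; lia), mul_comm]
    exact card_mul_upperSum_up_pow_singleton (hφ 0).sized (by lia) i
  have h_sq := (hφ 1).sum_upperSum_up_pow_sq (m := k - 1) (by lia)
  rw [powersetCard_one, sum_map] at h_sq
  simp only [h_diff]
  exact h_sq

end Decomposition

lemma choose_sub_sub_le_choose {n r t : ℕ} (hr : r ≤ n) (ht : t ≤ r) :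
    (n - t).choose (r - t) ≤ n.choose r := by
  rw [← Nat.choose_symm hr, ← Nat.choose_symm (Nat.sub_le_sub_right hr t),
    Nat.sub_sub_sub_cancel_right ht]
  exact Nat.choose_le_choose _ (n.sub_le t)

lemma neg_choose_le_neg_one_pow_mul_choose {n k j : ℕ} (hn : 2 * k ≤ n) (hj : 2 ≤ j)
    (hjk : j ≤ k) :
    -((n - k - 3).choose (k - 3) : ℝ) ≤ (-1) ^ j * (n - k - j).choose (k - j) := by
  obtain hj' | hj' := j.even_or_odd
  · rw [hj'.neg_one_pow, one_mul]
    exact (neg_nonpos.2 (Nat.cast_nonneg _)).trans (Nat.cast_nonneg _)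
  · have hj3 : 3 ≤ j := by
      obtain ⟨i, rfl⟩ := hj'
      lia
    rw [hj'.neg_one_pow, neg_one_mul, neg_le_neg_iff, Nat.cast_le]
    have := choose_sub_sub_le_choose (n := n - k - 3) (r := k - 3) (t := j - 3) (by lia) (by lia)
    rwa [show n - k - 3 - (j - 3) = n - k - j by lia, show k - 3 - (j - 3) = k - j by lia] at this

/-- A refinement of Hoffman's ratio bound for the Kneser graph: the harmonic components of degree
zero and one contribute exactly, through the total sum and the deviation of the vertex degrees. -/
theorem le_dotProduct_disjSum (hf : (support f).Sized k) (hk : 3 ≤ k)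
    (hkα : 2 * k ≤ Fintype.card α) {V : ℝ}
    (hV : ∑ i, (upperSum f {i} - k * upperSum f ∅ / Fintype.card α) ^ 2 = V) :
    (Fintype.card α - k).choose k * (upperSum f ∅ ^ 2 / (Fintype.card α).choose k) -
      (Fintype.card α - k - 1).choose (k - 1) * (V / (Fintype.card α - 2).choose (k - 1)) -
      (Fintype.card α - k - 3).choose (k - 3) *
        (f ⬝ᵥ f - upperSum f ∅ ^ 2 / (Fintype.card α).choose k -
          V / (Fintype.card α - 2).choose (k - 1)) ≤
    f ⬝ᵥ disjSum f := by
  obtain ⟨φ, hφ, hfφ⟩ := exists_harmonic_decomposition hf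
  let energy (j : ℕ) : ℝ := (up ^ (k - j)) (φ j) ⬝ᵥ (up ^ (k - j)) (φ j)
  have h_energy (j : ℕ) : 0 ≤ energy j := sum_nonneg fun A _ => mul_self_nonneg _
  have h_zero : upperSum f ∅ ^ 2 / (Fintype.card α).choose k = energy 0 := by
    rw [upperSum_empty_sq_of_harmonic_decomposition hφ hfφ (by lia)]
    exact mul_div_cancel_left₀ _ (mod_cast (Nat.choose_pos (by lia)).ne')
  have h_one : V / (Fintype.card α - 2).choose (k - 1) = energy 1 := by
    rw [← hV,
      sum_upperSum_singleton_sq_of_harmonic_decomposition hφ hfφ (by lia) (by lia)]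
    exact mul_div_cancel_left₀ _ (mod_cast (Nat.choose_pos (by lia)).ne')
  have h_split (c : ℕ → ℝ) : ∑ j ∈ range (k + 1), c j = c 0 + c 1 + ∑ j ∈ Ico 2 (k + 1), c j := by
    rw [range_eq_Ico, sum_eq_sum_Ico_succ_bot (by lia), sum_eq_sum_Ico_succ_bot (by lia),
      zero_add, one_add_one_eq_two, add_assoc]
  have h_tail : -((Fintype.card α - k - 3).choose (k - 3) : ℝ) * ∑ j ∈ Ico 2 (k + 1), energy j ≤
      ∑ j ∈ Ico 2 (k + 1), (-1) ^ j * (Fintype.card α - k - j).choose (k - j) * energy j := by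
    rw [mul_sum]
    refine sum_le_sum fun j hj => mul_le_mul_of_nonneg_right ?_ (h_energy j)
    rw [mem_Ico] at hj
    exact neg_choose_le_neg_one_pow_mul_choose hkα hj.1 (by lia)
  rw [h_zero, h_one, dotProduct_self_of_harmonic_decomposition hφ hfφ,
    dotProduct_disjSum_of_harmonic_decomposition hφ hfφ, h_split, h_split]
  simp only [energy, pow_zero, pow_one, Nat.sub_zero] at h_tail ⊢
  linarith

/-- The degree of a vertex in a set family. -/
def degree (F : Finset (Finset α)) (i : α) : ℕ := #{A ∈ F | i ∈ A}

theorem card_sq_le_of_intersecting {F : Finset (Finset α)} (hF : (F : Set (Finset α)).Sized k)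
    (hint : (F : Set (Finset α)).Intersecting) (hk : 3 ≤ k) (hkα : 2 * k ≤ Fintype.card α) {V : ℝ}
    (hV : ∑ i, (degree F i - k * #F / Fintype.card α : ℝ) ^ 2 = V) :
    (Fintype.card α - k).choose k * ((#F : ℝ) ^ 2 / (Fintype.card α).choose k) ≤
      (Fintype.card α - k - 1).choose (k - 1) * (V / (Fintype.card α - 2).choose (k - 1)) +
      (Fintype.card α - k - 3).choose (k - 3) *
        (#F - (#F : ℝ) ^ 2 / (Fintype.card α).choose k -
          V / (Fintype.card α - 2).choose (k - 1)) := by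
  let f : Finset α → ℝ := fun A => if A ∈ F then 1 else 0
  have hf : (support f).Sized k := fun A hA => hF (by_contra fun hAF => hA (if_neg hAF))
  have h_self : f ⬝ᵥ f = #F := by simp [f, dotProduct]
  have h_empty : upperSum f ∅ = #F := by simp [f, upperSum_apply]
  have h_single (i : α) : upperSum f {i} = degree F i := by
    simp [f, upperSum_apply, degree, filter_inter]
  have h_disj : f ⬝ᵥ disjSum f = 0 := by
    refine sum_eq_zero fun A _ => ?_
    by_cases hA : A ∈ F
    · refine mul_eq_zero_of_right _ (sum_eq_zero fun B hB => if_neg fun hBF => ?_)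
      exact hint hA hBF (mem_filter.1 hB).2
    · rw [show f A = 0 from if_neg hA, zero_mul]
  have h_ratio := le_dotProduct_disjSum hf hk hkα (V := V) (by simpa only [h_single, h_empty])
  rw [h_self, h_empty, h_disj] at h_ratio
  linarith

end Spectral

section Choose

lemma cast_choose_succ_mul (N r : ℕ) :
    (N.choose (r + 1) : ℝ) * (r + 1) = N.choose r * (N - r) := by
  obtain h | h := le_or_gt r N
  · rw [← Nat.cast_sub h]
    exact_mod_cast Nat.choose_succ_right_eq N r
  · simp [Nat.choose_eq_zero_of_lt h, Nat.choose_eq_zero_of_lt (h.trans r.lt_succ_self)]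

lemma cast_choose_mul_succ (N r : ℕ) :
    (N.choose r : ℝ) * (N + 1) = (N + 1).choose r * (N + 1 - r) := by
  obtain h | h := le_or_gt r (N + 1)
  · have := Nat.choose_mul_succ_eq N r
    rify [h] at this
    exact this
  · simp [Nat.choose_eq_zero_of_lt h, Nat.choose_eq_zero_of_lt (N.lt_succ_self.trans h)]

lemma cast_succ_mul_choose (N r : ℕ) :
    ((N : ℝ) + 1) * N.choose r = (N + 1).choose (r + 1) * (r + 1) :=
  mod_cast Nat.add_one_mul_choose_eq N r

lemma choose_mul_add_pow_le (N t r : ℕ) :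
    N.choose r * (N + t) ^ r ≤ (N + t).choose r * N ^ r := by
  induction r with
  | zero => simp
  | succ r ih =>
    have h_factor : (N - r) * (N + t) ≤ (N + t - r) * N := by
      obtain h | h := Nat.lt_or_ge N r
      · simp [Nat.sub_eq_zero_of_le h.le]
      · obtain ⟨m, rfl⟩ := Nat.exists_eq_add_of_le h
        rw [Nat.add_sub_cancel_left, add_assoc r m t, Nat.add_sub_cancel_left]
        nlinarith
    refine Nat.le_of_mul_le_mul_right (c := r + 1) ?_ r.succ_pos
    calc N.choose (r + 1) * (N + t) ^ (r + 1) * (r + 1)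
        = N.choose (r + 1) * (r + 1) * (N + t) ^ (r + 1) := by ring
      _ = N.choose r * (N + t) ^ r * ((N - r) * (N + t)) := by
        rw [Nat.choose_succ_right_eq]; ring
      _ ≤ (N + t).choose r * N ^ r * ((N + t - r) * N) := Nat.mul_le_mul ih h_factor
      _ = (N + t).choose (r + 1) * (r + 1) * N ^ (r + 1) := by
        rw [Nat.choose_succ_right_eq]; ring
      _ = (N + t).choose (r + 1) * N ^ (r + 1) * (r + 1) := by ring

lemma one_add_div_pow_mul_choose_le {N : ℕ} (hN : 0 < N) (t r : ℕ) :
    (1 + t / N : ℝ) ^ r * N.choose r ≤ (N + t).choose r := by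
  have hN' : (0 : ℝ) < N := mod_cast hN
  rw [one_add_div hN'.ne', div_pow, div_mul_eq_mul_div, div_le_iff₀ (pow_pos hN' r), mul_comm]
  exact_mod_cast choose_mul_add_pow_le N t r

lemma choose_mul_add_mul_le {N : ℕ} (hN : 0 < N) (t r : ℕ) :
    (N.choose r : ℝ) * (N + r * t) ≤ (N + t).choose r * N := by
  have : (0 : ℝ) < N := mod_cast hN
  have h_bernoulli : 1 + r * (t / N : ℝ) ≤ (1 + t / N) ^ r :=
    one_add_mul_le_pow (by linarith [show (0 : ℝ) ≤ t / N by positivity]) r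
  calc (N.choose r : ℝ) * (N + r * t) = (1 + r * (t / N)) * N.choose r * N := by field_simp
    _ ≤ (1 + t / N) ^ r * N.choose r * N := by gcongr
    _ ≤ (N + t).choose r * N := by gcongr; exact one_add_div_pow_mul_choose_le hN t r

lemma choose_add_le_pow_mul_choose {N r : ℕ} {a : ℝ} (ha : 0 ≤ a)
    (h : (N : ℝ) - r ≤ a * (r + 1)) (m : ℕ) :
    (N.choose (r + m) : ℝ) ≤ a ^ m * N.choose r := by
  induction m with
  | zero => simp
  | succ m ih =>
    have h_le : (N : ℝ) - ↑(r + m) ≤ a * (↑(r + m) + 1) := by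
      push_cast
      linarith [mul_nonneg ha m.cast_nonneg (α := ℝ), m.cast_nonneg (α := ℝ)]
    refine le_of_mul_le_mul_right ?_ (show (0 : ℝ) < ↑(r + m) + 1 by positivity)
    calc (N.choose (r + (m + 1)) : ℝ) * (↑(r + m) + 1)
        = N.choose (r + m) * (N - ↑(r + m)) := cast_choose_succ_mul N (r + m)
      _ ≤ N.choose (r + m) * (a * (↑(r + m) + 1)) := by gcongr
      _ ≤ a ^ m * N.choose r * (a * (↑(r + m) + 1)) := by gcongr
      _ = a ^ (m + 1) * N.choose r * (↑(r + m) + 1) := by ring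

lemma choose_le_choose_of_two_mul_le {N a b : ℕ} (hab : a ≤ b) (hb : 2 * b ≤ N + 1) :
    N.choose a ≤ N.choose b := by
  induction b, hab using Nat.le_induction with
  | base => rfl
  | succ b _ ih =>
    refine (ih (by lia)).trans (Nat.le_of_mul_le_mul_right (c := b + 1) ?_ b.succ_pos)
    rw [Nat.choose_succ_right_eq]
    exact Nat.mul_le_mul_left _ (by lia)

lemma one_add_cubic_le_one_add_pow {w : ℝ} (hw : 0 ≤ w) (m : ℕ) :
    1 + m * w + m * (m - 1) / 2 * w ^ 2 + m * (m - 1) * (m - 2) / 6 * w ^ 3 ≤ (1 + w) ^ m := by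
  induction m with
  | zero => simp
  | succ m ih =>
    have h_nonneg : (0 : ℝ) ≤ m * (m - 1) * (m - 2) * w ^ 4 := by
      obtain _ | _ | m := m
      · simp
      · simp
      · push_cast
        rw [show ((m : ℝ) + 1 + 1) * (m + 1 + 1 - 1) * (m + 1 + 1 - 2) = (m + 2) * (m + 1) * m by
          ring]
        positivity
    rw [pow_succ]
    refine le_trans ?_ (mul_le_mul_of_nonneg_right ih (by linarith : 0 ≤ 1 + w))
    push_cast
    linarith

end Choose

section Shadow

open scoped FinsetFamily

variable {α : Type*} {n k a i t y : ℕ}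

lemma exists_isInitSeg_card_eq [Fintype α] [LinearOrder α] (r : ℕ) :
    ∀ m ≤ (Fintype.card α).choose r,
      ∃ 𝒞 : Finset (Finset α), Finset.Colex.IsInitSeg 𝒞 r ∧ #𝒞 = m
  | 0, _ => ⟨∅, Finset.Colex.isInitSeg_empty, rfl⟩
  | m + 1, hm => by
    obtain ⟨𝒞, h𝒞, h𝒞m⟩ := exists_isInitSeg_card_eq r m (Nat.le_of_succ_le hm)
    have h_ne : (powersetCard r univ \ 𝒞).Nonempty := by
      have := le_card_sdiff 𝒞 (powersetCard r (univ : Finset α))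
      rw [card_powersetCard, card_univ] at this
      exact card_pos.1 (by lia)
    obtain ⟨s, hs, hs_min⟩ := exists_min_image _ toColex h_ne
    rw [mem_sdiff, mem_powersetCard_univ] at hs
    refine ⟨insert s 𝒞, ⟨fun A hA => ?_, fun A B hA hB => ?_⟩, ?_⟩
    · obtain rfl | hA := mem_insert.1 hA
      exacts [hs.1, h𝒞.1 hA]
    · obtain rfl | hA := mem_insert.1 hA
      · refine mem_insert_of_mem (by_contra fun hB𝒞 => hB.1.not_ge (hs_min B ?_))
        exact mem_sdiff.2 ⟨mem_powersetCard_univ.2 hB.2, hB𝒞⟩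
      · exact mem_insert_of_mem (h𝒞.2 hA hB)
    · rw [card_insert_of_notMem hs.2, h𝒞m]

lemma isInitSeg_powersetCard_of_isLowerSet [LinearOrder α] {Y : Finset α}
    (hY : IsLowerSet (Y : Set α)) (r : ℕ) : Finset.Colex.IsInitSeg (powersetCard r Y) r := by
  refine ⟨Set.sized_powersetCard _ _, fun A B hA hB => ?_⟩
  rw [mem_powersetCard] at hA ⊢
  refine ⟨fun b hb => ?_, hB.2⟩
  by_contra hbY
  have hA_lt : ∀ a ∈ A, a < b := fun a ha =>
    lt_of_not_ge fun hba => hbY (hY hba (hA.1 ha))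
  exact lt_irrefl b (Finset.Colex.forall_lt_mono hB.1.le hA_lt b hb)

variable [DecidableEq α]

lemma card_mul_choose_le_card_shadow_mul_choose {𝒜 : Finset (Finset α)} {Y : Finset α}
    (h𝒜 : 𝒜 ⊆ powersetCard a Y) (hi : i ≤ a) (ha : a ≤ #Y) :
    #𝒜 * (#Y).choose (a - i) ≤ #(∂^[i] 𝒜) * (#Y).choose a := by
  have h_count : #𝒜 * a.choose (a - i) ≤ #(∂^[i] 𝒜) * (#Y - (a - i)).choose i := by
    refine card_mul_le_card_mul (fun A B => B ⊆ A) (fun A hA => ?_) fun B hB => ?_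
    · have hAa : #A = a := (mem_powersetCard.1 (h𝒜 hA)).2
      conv_lhs => rw [← hAa, ← card_powersetCard, hAa]
      refine card_le_card fun B hB => ?_
      rw [mem_powersetCard] at hB
      rw [mem_bipartiteAbove, mem_shadow_iterate_iff_exists_sdiff]
      exact ⟨⟨A, hA, hB.1, by rw [card_sdiff_of_subset hB.1]; lia⟩, hB.1⟩
    · obtain ⟨A, hA, hBA, hABi⟩ := mem_shadow_iterate_iff_exists_sdiff.1 hB
      obtain ⟨hAY, hAa⟩ := mem_powersetCard.1 (h𝒜 hA)
      have hBa : #B = a - i := by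
        have := card_sdiff_add_card_eq_card hBA
        lia
      rw [← hBa, ← card_sdiff_of_subset (hBA.trans hAY), ← card_powersetCard]
      refine card_le_card_of_injOn (· \ B) (fun C hC => ?_) fun C hC D hD hCD => ?_
      · rw [mem_coe, mem_bipartiteBelow] at hC
        obtain ⟨hCY, hCa⟩ := mem_powersetCard.1 (h𝒜 hC.1)
        rw [mem_coe, mem_powersetCard, card_sdiff_of_subset hC.2]
        exact ⟨sdiff_subset_sdiff hCY le_rfl, by lia⟩
      · rw [mem_coe, mem_bipartiteBelow] at hC hD
        rw [← sdiff_union_of_subset hC.2, show C \ B = D \ B from hCD, sdiff_union_of_subset hD.2]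
  have h_choose := Nat.choose_mul (n := #Y) (k := a) (s := a - i) (a.sub_le i)
  rw [Nat.sub_sub_self hi] at h_choose
  have h_pos : 0 < (#Y - (a - i)).choose i := Nat.choose_pos (by lia)
  refine Nat.le_of_mul_le_mul_right ?_ h_pos
  calc #𝒜 * (#Y).choose (a - i) * (#Y - (a - i)).choose i
      = (#Y).choose a * (#𝒜 * a.choose (a - i)) := by rw [mul_assoc, ← h_choose]; ring
    _ ≤ (#Y).choose a * (#(∂^[i] 𝒜) * (#Y - (a - i)).choose i) := Nat.mul_le_mul_left _ h_count
    _ = #(∂^[i] 𝒜) * (#Y).choose a * (#Y - (a - i)).choose i := by ring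

lemma card_mul_choose_le_card_shadow_mul_choose_of_card_le {𝒜 : Finset (Finset (Fin n))}
    (h𝒜 : (𝒜 : Set (Finset (Fin n))).Sized a) (hi : i ≤ a) (hay : a ≤ y) (hy : y ≤ n)
    (hcard : #𝒜 ≤ y.choose a) :
    #𝒜 * y.choose (a - i) ≤ #(∂^[i] 𝒜) * y.choose a := by
  obtain ⟨𝒞, h𝒞, h𝒞𝒜⟩ := exists_isInitSeg_card_eq (α := Fin n) a #𝒜
    (by simpa using hcard.trans (Nat.choose_le_choose a hy))
  let Y : Finset (Fin n) := univ.filter (·.val < y)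
  have hYy : #Y = y := by simpa [Y, Fin.card_filter_val_lt] using hy
  have hY := isInitSeg_powersetCard_of_isLowerSet (Y := Y)
    (fun b c hcb hb => by simp only [Y, coe_filter_univ, Set.mem_ofPred_eq] at hb ⊢; lia) a
  have h_sub : 𝒞 ⊆ powersetCard a Y := by
    obtain h | h := h𝒞.total hY
    · exact h
    · refine (eq_of_subset_of_card_le h ?_).ge
      rwa [card_powersetCard, hYy, h𝒞𝒜]
  have h_ratio := card_mul_choose_le_card_shadow_mul_choose h_sub hi (hay.trans hYy.ge)
  rw [hYy, h𝒞𝒜] at h_ratio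
  exact h_ratio.trans (Nat.mul_le_mul_right _ (iterated_kk h𝒜 h𝒞𝒜.le h𝒞))

/-- The `(k - 1)`-sets that avoid `v` and are disjoint from a member of `F` avoiding `v`: none of
them extends by `v` to a member of an intersecting family `F` of `k`-sets. -/
def blockedSets [Fintype α] (F : Finset (Finset α)) (k : ℕ) (v : α) : Finset (Finset α) :=
  {B ∈ powersetCard (k - 1) {v}ᶜ | ∃ A ∈ F.nonMemberSubfamily v, Disjoint A B}

lemma degree_eq_card_memberSubfamily (F : Finset (Finset α)) (v : α) :
    degree F v = #(F.memberSubfamily v) :=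
  (card_image_of_injOn ((erase_injOn' v).mono fun _ hA => (mem_filter.1 hA).2)).symm

lemma degree_add_card_nonMemberSubfamily (F : Finset (Finset α)) (v : α) :
    degree F v + #(F.nonMemberSubfamily v) = #F := by
  rw [degree_eq_card_memberSubfamily, card_memberSubfamily_add_card_nonMemberSubfamily]

lemma degree_add_card_blockedSets_le [Fintype α] {F : Finset (Finset α)}
    (hF : (F : Set (Finset α)).Sized k) (hint : (F : Set (Finset α)).Intersecting) (v : α) :
    degree F v + #(blockedSets F k v) ≤ (Fintype.card α - 1).choose (k - 1) := by
  have h_disj : Disjoint (F.memberSubfamily v) (blockedSets F k v) := by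
    refine disjoint_left.2 fun B hB hB' => ?_
    obtain ⟨-, A, hA, hAB⟩ := mem_filter.1 hB'
    rw [mem_nonMemberSubfamily] at hA
    rw [mem_memberSubfamily] at hB
    exact hint hA.1 hB.1 (disjoint_insert_right.2 ⟨hA.2, hAB⟩)
  have h_sub : F.memberSubfamily v ⊆ powersetCard (k - 1) {v}ᶜ := by
    intro B hB
    rw [mem_memberSubfamily] at hB
    have hB_card := card_insert_of_notMem hB.2
    rw [hF hB.1] at hB_card
    exact mem_powersetCard.2 ⟨subset_compl_singleton.2 hB.2, by lia⟩
  rw [degree_eq_card_memberSubfamily, ← card_union_of_disjoint h_disj, ← card_singleton v,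
    ← card_compl, ← card_powersetCard]
  exact card_le_card (union_subset h_sub (filter_subset _ _))

lemma sized_image_compl_insert {F : Finset (Finset (Fin n))}
    (hF : (F : Set (Finset (Fin n))).Sized k) (v : Fin n) :
    (((F.nonMemberSubfamily v).image fun A => (insert v A)ᶜ : Finset (Finset (Fin n))) :
      Set (Finset (Fin n))).Sized (n - k - 1) := by
  intro B hB
  obtain ⟨A, hA, rfl⟩ := mem_image.1 hB
  rw [mem_nonMemberSubfamily] at hA
  rw [card_compl, card_insert_of_notMem hA.2, hF hA.1, Fintype.card_fin, Nat.sub_sub]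

lemma card_image_compl_insert [Fintype α] (F : Finset (Finset α)) (v : α) :
    #((F.nonMemberSubfamily v).image fun A => (insert v A)ᶜ) = #(F.nonMemberSubfamily v) := by
  refine card_image_of_injOn fun A hA B hB hAB => ?_
  rw [mem_coe, mem_nonMemberSubfamily] at hA hB
  rw [← erase_insert hA.2, compl_injective hAB, erase_insert hB.2]

lemma blockedSets_eq_shadow {F : Finset (Finset (Fin n))}
    (hF : (F : Set (Finset (Fin n))).Sized k) (hk : 1 ≤ k) (hn : 2 * k ≤ n) (v : Fin n) :
    blockedSets F k v =
      ∂^[n - 2 * k] ((F.nonMemberSubfamily v).image fun A => (insert v A)ᶜ) := by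
  ext B
  rw [blockedSets, mem_filter, mem_shadow_iterate_iff_exists_sdiff, exists_mem_image,
    mem_powersetCard, subset_compl_singleton]
  have h_iff (A : Finset (Fin n)) : B ⊆ (insert v A)ᶜ ↔ v ∉ B ∧ Disjoint A B := by
    rw [subset_compl_comm, insert_subset_iff, mem_compl, ← le_compl_iff_disjoint_right]
  constructor
  · rintro ⟨⟨hvB, hBk⟩, A, hA, hAB⟩
    refine ⟨A, hA, (h_iff A).2 ⟨hvB, hAB⟩, ?_⟩
    rw [card_sdiff_of_subset ((h_iff A).2 ⟨hvB, hAB⟩),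
      sized_image_compl_insert hF v (mem_image_of_mem _ hA), hBk]
    lia
  · rintro ⟨A, hA, hBA, hcard⟩
    refine ⟨⟨((h_iff A).1 hBA).1, ?_⟩, A, hA, ((h_iff A).1 hBA).2⟩
    have := card_le_card hBA
    rw [card_sdiff_of_subset hBA, sized_image_compl_insert hF v (mem_image_of_mem _ hA)] at hcard
    rw [sized_image_compl_insert hF v (mem_image_of_mem _ hA)] at this
    lia

lemma choose_le_card_blockedSets {F : Finset (Finset (Fin n))}
    (hF : (F : Set (Finset (Fin n))).Sized k) (htk : t < k) (hn : 2 * k ≤ n) (v : Fin n)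
    (h : (n - 2 - t).choose (k - 1 - t) ≤ #(F.nonMemberSubfamily v)) :
    (n - 2 - t).choose (k - 1) ≤ #(blockedSets F k v) := by
  rw [Nat.choose_symm_of_eq_add (show n - 2 - t = k - 1 - t + (n - k - 1) by lia),
    ← card_image_compl_insert] at h
  have h_shadow := kruskal_katona_lovasz_form (i := n - 2 * k) (by lia) (by lia) (by lia)
    (sized_image_compl_insert hF v) h
  rwa [← blockedSets_eq_shadow hF (by lia) hn,
    show n - k - 1 - (n - 2 * k) = k - 1 by lia] at h_shadow

lemma card_nonMemberSubfamily_mul_choose_le {F : Finset (Finset (Fin n))}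
    (hF : (F : Set (Finset (Fin n))).Sized k) (htk : t < k) (hn : 2 * k ≤ n) (v : Fin n)
    (h : #(F.nonMemberSubfamily v) ≤ (n - 2 - t).choose (k - 1 - t)) :
    #(F.nonMemberSubfamily v) * (n - k - 1).choose t ≤
      #(blockedSets F k v) * (k - 1).choose t := by
  have h_symm := Nat.choose_symm_of_eq_add (show n - 2 - t = k - 1 - t + (n - k - 1) by lia)
  have h_shadow := card_mul_choose_le_card_shadow_mul_choose_of_card_le (i := n - 2 * k)
    (sized_image_compl_insert hF v) (by lia) (show n - k - 1 ≤ n - 2 - t by lia) (by lia)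
    (by rwa [card_image_compl_insert, ← h_symm])
  rw [← blockedSets_eq_shadow hF (by lia) hn, card_image_compl_insert, ← h_symm,
    show n - k - 1 - (n - 2 * k) = k - 1 by lia] at h_shadow
  have h_choose := Nat.choose_mul (n := n - 2 - t) ((k - 1).sub_le t)
  rw [show n - 2 - t - (k - 1 - t) = n - k - 1 by lia, Nat.sub_sub_self (by lia),
    Nat.choose_symm (show t ≤ k - 1 by lia)] at h_choose
  refine Nat.le_of_mul_le_mul_right (c := (n - 2 - t).choose (k - 1 - t)) ?_
    (Nat.choose_pos (by lia))
  calc _ = #(F.nonMemberSubfamily v) *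
          ((n - 2 - t).choose (k - 1 - t) * (n - k - 1).choose t) := by ring
    _ = #(F.nonMemberSubfamily v) * (n - 2 - t).choose (k - 1) * (k - 1).choose t := by
      rw [← h_choose]; ring
    _ ≤ #(blockedSets F k v) * (n - 2 - t).choose (k - 1 - t) * (k - 1).choose t := by gcongr
    _ = _ := by ring

lemma card_nonMemberSubfamily_mul_pow_le {F : Finset (Finset (Fin n))}
    (hF : (F : Set (Finset (Fin n))).Sized k) (htk : t < k) (hn : 2 * k ≤ n) (v : Fin n)
    (h : #(F.nonMemberSubfamily v) ≤ (n - 2 - t).choose (k - 1 - t)) :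
    #(F.nonMemberSubfamily v) * (n - k - 1) ^ t ≤ #(blockedSets F k v) * (k - 1) ^ t := by
  have h_pow := choose_mul_add_pow_le (k - 1) (n - 2 * k) t
  rw [show k - 1 + (n - 2 * k) = n - k - 1 by lia] at h_pow
  refine Nat.le_of_mul_le_mul_right (c := (k - 1).choose t) ?_ (Nat.choose_pos (by lia))
  calc _ = #(F.nonMemberSubfamily v) * ((k - 1).choose t * (n - k - 1) ^ t) := by ring
    _ ≤ #(F.nonMemberSubfamily v) * ((n - k - 1).choose t * (k - 1) ^ t) := by gcongr
    _ = #(F.nonMemberSubfamily v) * (n - k - 1).choose t * (k - 1) ^ t := by ring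
    _ ≤ #(blockedSets F k v) * (k - 1).choose t * (k - 1) ^ t :=
      Nat.mul_le_mul_right _ (card_nonMemberSubfamily_mul_choose_le hF htk hn v h)
    _ = _ := by ring

end Shadow

section Links

variable {α : Type*} {F : Finset (Finset α)} {X B B' : Finset α} {i v : α}
  {k r : ℕ}

lemma card_add_choose_le_of_forall_not_disjoint (hF : F ⊆ powersetCard r X) (hBX : B ⊆ X)
    (hB : ∀ A ∈ F, ¬ Disjoint A B) : #F + (#X - #B).choose r ≤ (#X).choose r := by
  classical
  have h_disj : Disjoint F (powersetCard r (X \ B)) := disjoint_left.2 fun A hA hA' =>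
    hB A hA (disjoint_of_subset_left (mem_powersetCard.1 hA').1 sdiff_disjoint)
  rw [← card_sdiff_of_subset hBX, ← card_powersetCard, ← card_powersetCard,
    ← card_union_of_disjoint h_disj]
  exact card_le_card (union_subset hF (powersetCard_mono sdiff_subset))

lemma card_add_choose_add_choose_le_of_forall_not_disjoint
    (hF : F ⊆ powersetCard (r + 1) X) (hBX : B ⊆ X) (hBX' : B' ⊆ X) (hBB' : #B = #B')
    (hne : B ≠ B') (hB : ∀ A ∈ F, ¬ Disjoint A B) (hB' : ∀ A ∈ F, ¬ Disjoint A B') :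
    #F + (#X - #B).choose (r + 1) + (#X - #B - 1).choose r ≤ (#X).choose (r + 1) := by
  classical
  obtain ⟨b, hbB, hbB'⟩ : ∃ b ∈ B, b ∉ B' :=
    not_subset.1 fun h => hne (eq_of_subset_of_card_le h hBB'.ge)
  have hbX := card_erase_add_one (hBX hbB)
  have hb := card_erase_add_one hbB
  have h_nonMember := card_add_choose_le_of_forall_not_disjoint (F := F.nonMemberSubfamily b)
    (X := X.erase b) (B := B.erase b) (r := r + 1) (fun A hA => by
      rw [mem_nonMemberSubfamily] at hA
      have := mem_powersetCard.1 (hF hA.1)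
      exact mem_powersetCard.2 ⟨subset_erase.2 ⟨this.1, hA.2⟩, this.2⟩)
    (erase_subset_erase b hBX) fun A hA hAB => by
      rw [mem_nonMemberSubfamily] at hA
      refine hB A hA.1 ?_
      rw [← insert_erase hbB]
      exact disjoint_insert_right.2 ⟨hA.2, hAB⟩
  have h_member := card_add_choose_le_of_forall_not_disjoint (F := F.memberSubfamily b)
    (X := X.erase b) (B := B') (r := r) (fun A hA => by
      rw [mem_memberSubfamily] at hA
      obtain ⟨hAX, hAr⟩ := mem_powersetCard.1 (hF hA.1)
      rw [card_insert_of_notMem hA.2] at hAr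
      exact mem_powersetCard.2
        ⟨subset_erase.2 ⟨(subset_insert b A).trans hAX, hA.2⟩, Nat.succ_injective hAr⟩)
    (subset_erase.2 ⟨hBX', hbB'⟩) fun A hA hAB =>
      hB' _ (mem_memberSubfamily.1 hA).1 (disjoint_insert_left.2 ⟨hbB', hAB⟩)
  have h_card := card_memberSubfamily_add_card_nonMemberSubfamily b F
  have h_pascal := Nat.choose_succ_succ' #(X.erase b) r
  rw [hbX] at h_pascal
  rw [show #(X.erase b) - #(B.erase b) = #X - #B by lia] at h_nonMember
  rw [show #(X.erase b) - #B' = #X - #B - 1 by lia] at h_member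
  lia

variable [DecidableEq α]

lemma degree_memberSubfamily_add_degree_nonMemberSubfamily (hi : i ≠ v) :
    degree (F.memberSubfamily v) i + degree (F.nonMemberSubfamily v) i = degree F i := by
  have h_member : (F.memberSubfamily v).memberSubfamily i =
      (F.memberSubfamily i).memberSubfamily v := by
    ext A
    simp only [mem_memberSubfamily, mem_insert, hi, hi.symm, false_or, insert_comm v i]
    tauto
  have h_nonMember : (F.nonMemberSubfamily v).memberSubfamily i =
      (F.memberSubfamily i).nonMemberSubfamily v := by
    ext A
    simp only [mem_memberSubfamily, mem_nonMemberSubfamily, mem_insert, hi.symm, false_or]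
    tauto
  simp only [degree_eq_card_memberSubfamily, h_member, h_nonMember,
    card_memberSubfamily_add_card_nonMemberSubfamily]

lemma not_disjoint_of_mem_link (hint : (F : Set (Finset α)).Intersecting) (hB : B ∈ F)
    (hvB : v ∉ B) (hiB : i ∉ B) {A : Finset α}
    (hA : A ∈ (F.memberSubfamily v).memberSubfamily i) : ¬ Disjoint A B := fun h =>
  hint (mem_memberSubfamily.1 (mem_memberSubfamily.1 hA).1).1 hB
    (disjoint_insert_left.2 ⟨hvB, disjoint_insert_left.2 ⟨hiB, h⟩⟩)

variable [Fintype α]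

lemma subset_compl_pair (hv : v ∉ X) (hi : i ∉ X) : X ⊆ {v, i}ᶜ :=
  subset_compl_comm.2 <| insert_subset (mem_compl.2 hv) <| singleton_subset_iff.2 (mem_compl.2 hi)

lemma sum_degree (hF : (F : Set (Finset α)).Sized k) : ∑ i, degree F i = k * #F := by
  simp only [degree, card_filter]
  rw [sum_comm, mul_comm, ← smul_eq_mul]
  refine sum_eq_card_nsmul fun A hA => ?_
  rw [← card_filter, filter_univ_mem, hF hA]

lemma link_subset_powersetCard (hF : (F : Set (Finset α)).Sized k) :
    (F.memberSubfamily v).memberSubfamily i ⊆ powersetCard (k - 2) {v, i}ᶜ := by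
  intro A hA
  simp only [mem_memberSubfamily, mem_insert, not_or] at hA
  have h_card := hF hA.1.1
  rw [card_insert_of_notMem (by simpa using hA.1.2), card_insert_of_notMem hA.2] at h_card
  exact mem_powersetCard.2 ⟨subset_compl_pair hA.1.2.2 hA.2, by lia⟩

lemma degree_add_choose_le (hF : (F : Set (Finset α)).Sized k)
    (hint : (F : Set (Finset α)).Intersecting) (hi : i ≠ v) (hB : B ∈ F) (hvB : v ∉ B)
    (hiB : i ∉ B) :
    degree F i + (Fintype.card α - k - 2).choose (k - 2) ≤
      (Fintype.card α - 2).choose (k - 2) + degree (F.nonMemberSubfamily v) i := by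
  have h_link := card_add_choose_le_of_forall_not_disjoint (link_subset_powersetCard hF)
    (subset_compl_pair hvB hiB)
    fun A hA => not_disjoint_of_mem_link hint hB hvB hiB hA
  rw [card_compl, card_pair hi.symm, hF hB, Nat.sub_right_comm,
    ← degree_eq_card_memberSubfamily] at h_link
  have := degree_memberSubfamily_add_degree_nonMemberSubfamily (F := F) hi
  lia

lemma degree_add_choose_add_choose_le (hF : (F : Set (Finset α)).Sized k) (hk : 3 ≤ k)
    (hint : (F : Set (Finset α)).Intersecting) (hi : i ≠ v) (hB : B ∈ F) (hvB : v ∉ B)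
    (hiB : i ∉ B) (hB' : B' ∈ F) (hvB' : v ∉ B') (hiB' : i ∉ B') (hne : B ≠ B') :
    degree F i + (Fintype.card α - k - 2).choose (k - 2) +
        (Fintype.card α - k - 3).choose (k - 3) ≤
      (Fintype.card α - 2).choose (k - 2) + degree (F.nonMemberSubfamily v) i := by
  have hk' : k - 2 = k - 3 + 1 := by lia
  have h_link := card_add_choose_add_choose_le_of_forall_not_disjoint
    (hk' ▸ link_subset_powersetCard hF)
    (subset_compl_pair hvB hiB) (subset_compl_pair hvB' hiB')
    ((hF hB).trans (hF hB').symm) hne (fun A hA => not_disjoint_of_mem_link hint hB hvB hiB hA)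
    fun A hA => not_disjoint_of_mem_link hint hB' hvB' hiB' hA
  rw [card_compl, card_pair hi.symm, hF hB, Nat.sub_right_comm, ← hk',
    ← degree_eq_card_memberSubfamily, show Fintype.card α - k - 2 - 1 = Fintype.card α - k - 3 by
      lia] at h_link
  have := degree_memberSubfamily_add_degree_nonMemberSubfamily (F := F) hi
  lia

lemma exists_pair_mem_nonMemberSubfamily (hF : (F : Set (Finset α)).Sized k)
    (hint : (F : Set (Finset α)).Intersecting) (hkα : k + 2 ≤ Fintype.card α)
    (hnt : ∃ A ∈ F, v ∉ A)
    (hdeg : ∀ i, (Fintype.card α - 2).choose (k - 2) <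
      degree F i + (Fintype.card α - k - 2).choose (k - 2)) :
    ∃ B ∈ F.nonMemberSubfamily v, ∃ B' ∈ F.nonMemberSubfamily v, B ≠ B' := by
  obtain ⟨B, hB, hvB⟩ := hnt
  obtain ⟨i, hi⟩ : ∃ i, i ∉ insert v B := by
    by_contra! h
    have := card_le_card (fun i _ => h i : univ ⊆ insert v B)
    rw [card_univ, card_insert_of_notMem hvB, hF hB] at this
    lia
  rw [mem_insert, not_or] at hi
  have h_degree : 0 < degree (F.nonMemberSubfamily v) i := by
    have := degree_add_choose_le hF hint hi.1 hB hvB hi.2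
    have := hdeg i
    lia
  obtain ⟨B', hB'⟩ := card_pos.1 h_degree
  rw [mem_filter] at hB'
  exact ⟨B, mem_nonMemberSubfamily.2 ⟨hB, hvB⟩, B', hB'.1, fun h => hi.2 (h ▸ hB'.2)⟩

/-- Count incidences: the degrees sum to `k * #F`, and the degree of `v` is at most the number of
`(k - 1)`-sets that are not blocked. -/
lemma pred_mul_card_blockedSets_lt (hF : (F : Set (Finset α)).Sized k)
    (hint : (F : Set (Finset α)).Intersecting) (hk : 2 ≤ k) (hkα : 2 ≤ Fintype.card α)
    (hdeg : ∀ i, (Fintype.card α - 2).choose (k - 2) <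
      degree F i + (Fintype.card α - k - 2).choose (k - 2)) (v : α) :
    (k - 1) * #(blockedSets F k v) < k * #(F.nonMemberSubfamily v) +
      (Fintype.card α - 1) * (Fintype.card α - k - 2).choose (k - 2) := by
  have h_sum := sum_degree hF
  have h_lower := card_nsmul_le_sum (univ.erase v)
    (fun i => degree F i + (Fintype.card α - k - 2).choose (k - 2)) _ fun i _ => hdeg i
  rw [sum_add_distrib, sum_const, card_erase_of_mem (mem_univ _), card_univ, smul_eq_mul,
    smul_eq_mul] at h_lower
  rw [← add_sum_erase _ _ (mem_univ v), ← degree_add_card_nonMemberSubfamily F v] at h_sum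
  have h_blocked := Nat.mul_le_mul_left (k - 1) (degree_add_card_blockedSets_le hF hint v)
  obtain ⟨m, hm⟩ : ∃ m, Fintype.card α = m + 2 := ⟨_, (Nat.sub_add_cancel hkα).symm⟩
  obtain ⟨l, rfl⟩ : ∃ l, k = l + 2 := ⟨_, (Nat.sub_add_cancel hk).symm⟩
  have h_choose := Nat.add_one_mul_choose_eq m l
  simp only [hm, Nat.add_sub_cancel, Nat.add_succ_sub_one] at *
  nlinarith

lemma choose_lt_degree_nonMemberSubfamily (hF : (F : Set (Finset α)).Sized k) (hk : 3 ≤ k)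
    (hint : (F : Set (Finset α)).Intersecting)
    (hdeg : ∀ i, (Fintype.card α - 2).choose (k - 2) <
      degree F i + (Fintype.card α - k - 2).choose (k - 2))
    (hB : B ∈ F.nonMemberSubfamily v) (hB' : B' ∈ F.nonMemberSubfamily v) (hne : B ≠ B')
    (hi : i ∉ insert v (B ∪ B')) :
    (Fintype.card α - k - 3).choose (k - 3) < degree (F.nonMemberSubfamily v) i := by
  rw [mem_nonMemberSubfamily] at hB hB'
  simp only [mem_insert, mem_union, not_or] at hi
  have := degree_add_choose_add_choose_le hF hk hint hi.1 hB.1 hB.2 hi.2.1 hB'.1 hB'.2 hi.2.2 hne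
  have := hdeg i
  lia

lemma choose_lt_card_nonMemberSubfamily (hF : (F : Set (Finset α)).Sized k) (hk : 3 ≤ k)
    (hint : (F : Set (Finset α)).Intersecting) (hkα : 2 * k + 2 ≤ Fintype.card α)
    (hnt : ∃ A ∈ F, v ∉ A)
    (hdeg : ∀ i, (Fintype.card α - 2).choose (k - 2) <
      degree F i + (Fintype.card α - k - 2).choose (k - 2)) :
    (Fintype.card α - k - 3).choose (k - 3) < #(F.nonMemberSubfamily v) ∧
    (Fintype.card α - 1 - 2 * k) * (Fintype.card α - k - 3).choose (k - 3) ≤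
      k * #(F.nonMemberSubfamily v) := by
  obtain ⟨B, hB, B', hB', hne⟩ :=
    exists_pair_mem_nonMemberSubfamily hF hint (by lia) hnt hdeg
  have hG : ((F.nonMemberSubfamily v : Finset (Finset α)) : Set (Finset α)).Sized k :=
    hF.mono (coe_subset.2 (filter_subset _ _))
  have h_degree : ∀ i ∈ (insert v (B ∪ B'))ᶜ,
      (Fintype.card α - k - 3).choose (k - 3) < degree (F.nonMemberSubfamily v) i := fun i hi =>
    choose_lt_degree_nonMemberSubfamily hF hk hint hdeg hB hB' hne (mem_compl.1 hi)
  have h_card : Fintype.card α - 1 - 2 * k ≤ #(insert v (B ∪ B'))ᶜ := by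
    rw [card_compl]
    have := card_insert_le v (B ∪ B')
    have := card_union_le B B'
    have := hG hB
    have := hG hB'
    lia
  constructor
  · obtain ⟨i, hi⟩ := card_pos.1 (h_card.trans_lt' (by lia))
    exact (h_degree i hi).trans_le (card_filter_le _ _)
  · calc (Fintype.card α - 1 - 2 * k) * (Fintype.card α - k - 3).choose (k - 3)
        ≤ #(insert v (B ∪ B'))ᶜ * (Fintype.card α - k - 3).choose (k - 3) := by gcongr
      _ ≤ ∑ i ∈ (insert v (B ∪ B'))ᶜ, degree (F.nonMemberSubfamily v) i :=
        card_nsmul_le_sum _ _ _ fun i hi => (h_degree i hi).le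
      _ ≤ ∑ i, degree (F.nonMemberSubfamily v) i := sum_le_sum_of_subset (subset_univ _)
      _ = k * #(F.nonMemberSubfamily v) := sum_degree hG

end Links

section Numerics

variable {n k γ S R c : ℝ}

lemma pred_mul_pred_mul_lt (hk : 2 < k) (hn : k + 2 < n)
    (hS : (k - 1) * S < k * γ + (n - 1) * R) (hc : c ≤ γ) (hcR : c * (n - k - 2) = R * (k - 2)) :
    (k - 1) * (k - 2) * S < (k * (k - 2) + (n - 1) * (n - k - 2)) * γ := by
  calc (k - 1) * (k - 2) * S = (k - 2) * ((k - 1) * S) := by ring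
    _ < (k - 2) * (k * γ + (n - 1) * R) := by gcongr
    _ = k * (k - 2) * γ + (n - 1) * (n - k - 2) * c := by linear_combination (1 - n) * hcR
    _ ≤ k * (k - 2) * γ + (n - 1) * (n - k - 2) * γ := by
      gcongr
      exact mul_nonneg (by linarith) (by linarith)
    _ = _ := by ring

lemma mul_sq_lt_mul_sq (hk : 30 ≤ k) (hn : 4 * k ≤ n) (hγ : 0 ≤ γ)
    (hS : (k - 1) * S < k * γ + (n - 1) * R) (hc : (n - 1 - 2 * k) * c ≤ k * γ)
    (hcR : c * (n - k - 2) = R * (k - 2)) :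
    S * (k - 1) ^ 2 < γ * (n - k - 1) ^ 2 := by
  have h_poly : (k - 1) * k * ((k - 2) * (n - 1 - 2 * k) + (n - 1) * (n - k - 2)) ≤
      (k - 2) * (n - 1 - 2 * k) * (n - k - 1) ^ 2 := by
    obtain ⟨a, rfl⟩ : ∃ a, k = a + 30 := ⟨k - 30, by ring⟩
    obtain ⟨b, rfl⟩ : ∃ b, n = b + 4 * (a + 30) := ⟨n - 4 * (a + 30), by ring⟩
    have ha : 0 ≤ a := by linarith
    have hb : 0 ≤ b := by linarith
    rw [← sub_nonneg]
    ring_nf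
    positivity
  have h_pos : 0 < (k - 2) * (n - 1 - 2 * k) := mul_pos (by linarith) (by linarith)
  refine lt_of_mul_lt_mul_left ?_ h_pos.le
  calc (k - 2) * (n - 1 - 2 * k) * (S * (k - 1) ^ 2)
      = (k - 2) * (n - 1 - 2 * k) * (k - 1) * ((k - 1) * S) := by ring
    _ < (k - 2) * (n - 1 - 2 * k) * (k - 1) * (k * γ + (n - 1) * R) := by
      gcongr
      exact mul_pos h_pos (by linarith)
    _ = (k - 1) * ((k - 2) * (n - 1 - 2 * k) * k * γ +
        (n - 1) * (n - k - 2) * ((n - 1 - 2 * k) * c)) := by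
      linear_combination (1 - n) * (k - 1) * (n - 1 - 2 * k) * hcR
    _ ≤ (k - 1) * ((k - 2) * (n - 1 - 2 * k) * k * γ + (n - 1) * (n - k - 2) * (k * γ)) := by
      gcongr
      · linarith
      · exact mul_nonneg (by linarith) (by linarith)
    _ = (k - 1) * k * ((k - 2) * (n - 1 - 2 * k) + (n - 1) * (n - k - 2)) * γ := by ring
    _ ≤ (k - 2) * (n - 1 - 2 * k) * (n - k - 1) ^ 2 * γ := by gcongr
    _ = _ := by ring

lemma mul_pow_five_lt_mul_pow_five (hk : 30 ≤ k) (hn : 12 * k ≤ 5 * n) (hn' : n ≤ 4 * k)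
    (hγ : 0 ≤ γ)
    (h : (k - 1) * (k - 2) * S < (k * (k - 2) + (n - 1) * (n - k - 2)) * γ) :
    S * (k - 1) ^ 5 < γ * (n - k - 1) ^ 5 := by
  have h_ratio : 7 * (k - 1) ≤ 5 * (n - k - 1) := by linarith
  have h_poly : 125 * (k - 1) * (k * (k - 2) + (n - 1) * (n - k - 2)) ≤
      343 * (k - 2) * (n - k - 1) ^ 2 := by
    obtain ⟨a, rfl⟩ : ∃ a, k = a + 30 := ⟨k - 30, by ring⟩
    obtain ⟨b, rfl⟩ : ∃ b, n = b + 12 / 5 * (a + 30) := ⟨n - 12 / 5 * (a + 30), by ring⟩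
    have ha : 0 ≤ a := by linarith
    have hb : 0 ≤ b := by linarith
    rw [← sub_nonneg]
    ring_nf
    positivity
  have h_cube : (7 * (k - 1)) ^ 3 ≤ (5 * (n - k - 1)) ^ 3 := by gcongr; linarith
  have hk₂ : 0 < k - 2 := by linarith
  have hk₁ : 0 < k - 1 := by linarith
  refine lt_of_mul_lt_mul_left ?_ (by positivity : 0 ≤ 125 * (k - 2))
  calc 125 * (k - 2) * (S * (k - 1) ^ 5)
      = 125 * (k - 1) ^ 4 * ((k - 1) * (k - 2) * S) := by ring
    _ < 125 * (k - 1) ^ 4 * ((k * (k - 2) + (n - 1) * (n - k - 2)) * γ) := by gcongr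
    _ = (k - 1) ^ 3 * γ * (125 * (k - 1) * (k * (k - 2) + (n - 1) * (n - k - 2))) := by ring
    _ ≤ (k - 1) ^ 3 * γ * (343 * (k - 2) * (n - k - 1) ^ 2) := by gcongr
    _ = (7 * (k - 1)) ^ 3 * ((k - 2) * γ * (n - k - 1) ^ 2) := by ring
    _ ≤ (5 * (n - k - 1)) ^ 3 * ((k - 2) * γ * (n - k - 1) ^ 2) := by gcongr
    _ = _ := by ring

lemma mul_pow_lt_mul_pow_of_le_two_mul (hk : 30 ≤ k) (hn : 2 * k + 5 ≤ n)
    (hn' : 5 * n ≤ 12 * k) (hγ : 0 ≤ γ) {t : ℕ} (ht : k ≤ 2 * t + 3)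
    (h : (k - 1) * (k - 2) * S < (k * (k - 2) + (n - 1) * (n - k - 2)) * γ) :
    S * (k - 1) ^ t < γ * (n - k - 1) ^ t := by
  have hk₂ : 0 < k - 2 := by linarith
  have hk₁ : 0 < k - 1 := by linarith
  have h_poly : k * (k - 2) + (n - 1) * (n - k - 2) ≤ 5 * ((k - 1) * (k - 2)) := by
    nlinarith
  have h_five : 5 ≤ (1 + 5 / (k - 1)) ^ t := by
    set w := 5 / (k - 1) with hw
    have htw : 2.3 ≤ t * w := by rw [hw, mul_div_assoc', le_div_iff₀ hk₁]; linarith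
    have htw' : 2.1 ≤ (t - 1) * w := by rw [hw, mul_div_assoc', le_div_iff₀ hk₁]; linarith
    have ht₂ : (0 : ℝ) ≤ t - 2 := by linarith
    have h_tail : 0 ≤ t * w * ((t - 1) * w) * ((t - 2) * w) := by positivity
    have h_cubic := one_add_cubic_le_one_add_pow (by positivity : 0 ≤ w) t
    nlinarith [mul_le_mul htw htw' (by norm_num) (by positivity)]
  have h_ratio : 5 * (k - 1) ^ t ≤ (n - k - 1) ^ t := by
    calc 5 * (k - 1) ^ t ≤ (1 + 5 / (k - 1)) ^ t * (k - 1) ^ t := by gcongr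
      _ = (k + 4) ^ t := by rw [← mul_pow]; congr 1; field_simp; ring
      _ ≤ (n - k - 1) ^ t := by gcongr; linarith
  have h_lt : S < 5 * γ := by
    refine lt_of_mul_lt_mul_left (h.trans_le ?_) (mul_pos hk₁ hk₂).le
    calc _ ≤ 5 * ((k - 1) * (k - 2)) * γ := by gcongr
      _ = _ := by ring
  calc S * (k - 1) ^ t < 5 * γ * (k - 1) ^ t := by gcongr
    _ = γ * (5 * (k - 1) ^ t) := by ring
    _ ≤ _ := by gcongr

end Numerics

section ChooseNumerics

lemma mul_choose_add_mul_choose_le {N l : ℕ} (hl : 28 ≤ l) (hN : 3 * l + 4 ≤ N) :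
    ((l + 2) * (N + l + 1).choose l + (N + l + 3) * N.choose l : ℝ) ≤
      (l + 1) * (N + l).choose (l + 1) := by
  have h_succ := cast_choose_succ_mul (N + l) l
  have h_row := cast_choose_mul_succ (N + l) l
  have h_bernoulli := choose_mul_add_mul_le (show 0 < N by lia) l l
  push_cast at h_succ h_row
  have h_poly : ((l + 2) * (N + l + 1) * (N + l * l) + (N + l + 3) * (N + 1) * N : ℝ) ≤
      N * (N + 1) * (N + l * l) := by
    obtain ⟨a, rfl⟩ := Nat.exists_eq_add_of_le hl
    obtain ⟨b, rfl⟩ := Nat.exists_eq_add_of_le hN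
    push_cast
    rw [← sub_nonneg]
    ring_nf
    positivity
  refine le_of_mul_le_mul_right ?_ (by positivity : (0 : ℝ) < (N + 1) * (N + l * l))
  calc ((l + 2) * (N + l + 1).choose l + (N + l + 3) * N.choose l) *
        ((N + 1) * (N + l * l) : ℝ)
      = (l + 2) * (N + l * l) * ((N + l).choose l * (N + l + 1)) +
          (N + l + 3) * (N + 1) * (N.choose l * (N + l * l)) := by
        linear_combination -(l + 2 : ℝ) * (N + l * l) * h_row
    _ ≤ (l + 2) * (N + l * l) * ((N + l).choose l * (N + l + 1)) +
          (N + l + 3) * (N + 1) * ((N + l).choose l * N) := by gcongr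
    _ = (N + l).choose l * ((l + 2) * (N + l + 1) * (N + l * l) + (N + l + 3) * (N + 1) * N) := by
        ring
    _ ≤ (N + l).choose l * (N * (N + 1) * (N + l * l)) := by gcongr
    _ = _ := by linear_combination -(N + 1 : ℝ) * (N + l * l) * h_succ

lemma seven_mul_choose_le {N l : ℕ} (hl : 24 ≤ l) (hN : 7 * l + 32 ≤ 5 * N)
    (hN' : N ≤ 3 * l + 16) : 7 * (N.choose (l + 4) : ℝ) ≤ (N + l + 1).choose l := by
  have hl' : (24 : ℝ) ≤ l := mod_cast hl
  have hN_pos : (0 : ℝ) < N := mod_cast (show 0 < N by lia)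
  have hN'' : (N : ℝ) ≤ 3 * l + 16 := mod_cast hN'
  have h_upper : (N.choose (l + 4) : ℝ) ≤ (64 / 25) ^ 4 * N.choose l :=
    choose_add_le_pow_mul_choose (by norm_num) (by linarith) 4
  have h_ratio : (25 / 88 : ℝ) ≤ ↑(l + 1) / N := by
    rw [le_div_iff₀ hN_pos]
    push_cast
    linarith
  calc 7 * (N.choose (l + 4) : ℝ) ≤ 7 * ((64 / 25) ^ 4 * N.choose l) := by gcongr
    _ = 7 * (64 / 25) ^ 4 * N.choose l := by ring
    _ ≤ (1 + 25 / 88) ^ 24 * N.choose l := by gcongr; norm_num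
    _ ≤ (1 + 25 / 88) ^ l * N.choose l := by gcongr; norm_num
    _ ≤ (1 + ↑(l + 1) / N) ^ l * N.choose l := by gcongr
    _ ≤ (N + l + 1).choose l := one_add_div_pow_mul_choose_le (mod_cast hN_pos) (l + 1) l

lemma mul_choose_le_pred_mul_choose {d l w : ℕ} (hl : 28 ≤ l) (hd : 5 ≤ d)
    (hdl : 5 * d ≤ 2 * (l + 2)) (hw : l + 2 ≤ 2 * w) :
    (2 * l + d + 3 : ℝ) * (l + d).choose d ≤ (d - 1) * (l + d + (w + 1)).choose (d + 1) := by
  have h_succ := cast_choose_succ_mul (l + d + (w + 1)) d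
  have h_bernoulli := choose_mul_add_mul_le (show 0 < l + d by lia) (w + 1) d
  push_cast at h_succ h_bernoulli
  rify at hl hd hdl hw
  have hd₁ : (0 : ℝ) ≤ d - 1 := by linarith
  have h_poly : (d + 1) * (2 * l + d + 3) * (l + d) ≤
      (d - 1) * (l + w + 1) * (l + d + d * (w + 1) : ℝ) := by
    have h_core : (2 * l + d + 3) * (l + d) ≤ (l + 4 / 3) * (l + d + d * ((l + 4) / 2) : ℝ) := by
      nlinarith [mul_le_mul_of_nonneg_left hl (by positivity : (0 : ℝ) ≤ d * l),
        mul_le_mul_of_nonneg_right hd (by positivity : (0 : ℝ) ≤ l * l),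
        mul_le_mul_of_nonneg_left hdl (by positivity : (0 : ℝ) ≤ d)]
    have h_pred : 2 / 3 * (d + 1) ≤ (d - 1 : ℝ) := by linarith
    have h_left : 3 / 2 * l + 2 ≤ (l + w + 1 : ℝ) := by linarith
    have h_right : (l + 4) / 2 ≤ (w + 1 : ℝ) := by linarith
    calc (d + 1) * (2 * l + d + 3) * (l + d : ℝ)
          = (d + 1) * ((2 * l + d + 3) * (l + d)) := by ring
      _ ≤ (d + 1) * ((l + 4 / 3) * (l + d + d * ((l + 4) / 2) : ℝ)) := by gcongr
      _ = 2 / 3 * (d + 1) * (3 / 2 * l + 2) * (l + d + d * ((l + 4) / 2)) := by ring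
      _ ≤ (d - 1) * (l + w + 1) * (l + d + d * (w + 1)) := by gcongr
  refine le_of_mul_le_mul_right ?_ (by positivity : (0 : ℝ) < (d + 1) * (l + d))
  calc (2 * l + d + 3) * (l + d).choose d * ((d + 1) * (l + d))
      = (l + d).choose d * ((d + 1) * (2 * l + d + 3) * (l + d) : ℝ) := by ring
    _ ≤ (l + d).choose d * ((d - 1) * (l + w + 1) * (l + d + d * (w + 1))) := by gcongr
    _ = (d - 1) * (l + w + 1) * ((l + d).choose d * (l + d + d * (w + 1))) := by ring
    _ ≤ (d - 1) * (l + w + 1) * ((l + d + (w + 1)).choose d * (l + d)) := by gcongr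
    _ = _ := by linear_combination -(d - 1 : ℝ) * (l + d) * h_succ

end ChooseNumerics

section MissingMembers

variable {n k t : ℕ} {F : Finset (Finset (Fin n))} {v : Fin n}

lemma cast_pred_mul_card_blockedSets_lt (hF : (F : Set (Finset (Fin n))).Sized k)
    (hint : (F : Set (Finset (Fin n))).Intersecting) (hk : 2 ≤ k) (hn : 2 ≤ n)
    (hdeg : ∀ i, (n - 2).choose (k - 2) < degree F i + (n - k - 2).choose (k - 2)) (v : Fin n) :
    (k - 1 : ℝ) * #(blockedSets F k v) <
      k * #(F.nonMemberSubfamily v) + (n - 1) * (n - k - 2).choose (k - 2) := by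
  have h := pred_mul_card_blockedSets_lt hF hint hk (by simpa using hn) (by simpa using hdeg) v
  rw [Fintype.card_fin] at h
  rify [show 1 ≤ k by lia, show 1 ≤ n by lia] at h
  exact h

lemma choose_lt_card_nonMemberSubfamily_of_mul_pow_lt
    (hF : (F : Set (Finset (Fin n))).Sized k) (htk : t < k) (hn : 2 * k ≤ n)
    (h : (#(blockedSets F k v) : ℝ) * (k - 1) ^ t <
      #(F.nonMemberSubfamily v) * (n - k - 1) ^ t) :
    (n - 2 - t).choose (k - 1 - t) < #(F.nonMemberSubfamily v) := by
  contrapose! h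
  have h_pow := card_nonMemberSubfamily_mul_pow_le hF htk hn v h
  rify [show 1 ≤ k by lia, show k ≤ n by lia, show 1 ≤ n - k by lia] at h_pow
  exact h_pow

lemma mul_card_nonMemberSubfamily_lt (hF : (F : Set (Finset (Fin n))).Sized k) (hk : 2 ≤ k)
    (hn : 2 * k ≤ n)
    (hS : (k - 1 : ℝ) * #(blockedSets F k v) <
      k * #(F.nonMemberSubfamily v) + (n - 1) * (n - k - 2).choose (k - 2))
    (h : #(F.nonMemberSubfamily v) ≤ (n - 3).choose (k - 2)) :
    (n - 2 * k - 1 : ℝ) * #(F.nonMemberSubfamily v) < (n - 1) * (n - k - 2).choose (k - 2) := by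
  have h_pow := card_nonMemberSubfamily_mul_pow_le (t := 1) hF (by lia) hn v h
  rify [show 1 ≤ k by lia, show k ≤ n by lia, show 1 ≤ n - k by lia] at h_pow
  linarith

lemma choose_le_card_nonMemberSubfamily_of_mul_pow_lt
    (hF : (F : Set (Finset (Fin n))).Sized k) (htk : t < k) (hk : 2 ≤ k) (hn : 2 * k + 1 ≤ n)
    (hS : (k - 1 : ℝ) * #(blockedSets F k v) <
      k * #(F.nonMemberSubfamily v) + (n - 1) * (n - k - 2).choose (k - 2))
    (h_pow : (#(blockedSets F k v) : ℝ) * (k - 1) ^ t <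
      #(F.nonMemberSubfamily v) * (n - k - 1) ^ t)
    (h_choose : (n - 1 : ℝ) * (n - k - 2).choose (k - 2) ≤
      (n - 2 * k - 1) * (n - 2 - t).choose (k - 1 - t)) :
    (n - 3).choose (k - 2) ≤ #(F.nonMemberSubfamily v) := by
  by_contra! h
  have h_upper := mul_card_nonMemberSubfamily_lt hF hk (by lia) hS h.le
  have h_lower : ((n - 2 - t).choose (k - 1 - t) : ℝ) < #(F.nonMemberSubfamily v) :=
    mod_cast choose_lt_card_nonMemberSubfamily_of_mul_pow_lt hF htk (by lia) h_pow
  have hn' : (0 : ℝ) ≤ n - 2 * k - 1 := by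
    rify at hn
    linarith
  exact (h_upper.trans_le h_choose).not_ge (by gcongr)

lemma choose_le_card_nonMemberSubfamily_of_five_mul_le
    (hF : (F : Set (Finset (Fin n))).Sized k) (hk : 30 ≤ k) (hn : 2 * k + 5 ≤ n)
    (hn' : 5 * n ≤ 12 * k)
    (hS : (k - 1 : ℝ) * #(blockedSets F k v) <
      k * #(F.nonMemberSubfamily v) + (n - 1) * (n - k - 2).choose (k - 2))
    (hSγ : ((k : ℝ) - 1) * (k - 2) * #(blockedSets F k v) <
      (k * (k - 2) + (n - 1) * (n - k - 2)) * #(F.nonMemberSubfamily v)) :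
    (n - 3).choose (k - 2) ≤ #(F.nonMemberSubfamily v) := by
  obtain ⟨l, rfl⟩ : ∃ l, k = l + 2 := ⟨k - 2, by lia⟩
  obtain ⟨d, rfl⟩ : ∃ d, n = 2 * (l + 2) + d := ⟨n - 2 * (l + 2), by lia⟩
  obtain ⟨t, ht⟩ : ∃ t, t = (l + 2) / 2 - 1 := ⟨_, rfl⟩
  refine choose_le_card_nonMemberSubfamily_of_mul_pow_lt (t := t) hF (by lia) (by lia) (by lia)
    hS (mul_pow_lt_mul_pow_of_le_two_mul (mod_cast hk) (mod_cast hn) (mod_cast hn')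
      (Nat.cast_nonneg _) (mod_cast show l + 2 ≤ 2 * t + 3 by lia) hSγ) ?_
  obtain ⟨w, hw⟩ : ∃ w, l + 1 = w + t := ⟨l + 1 - t, by lia⟩
  have h_choose := mul_choose_le_pred_mul_choose (d := d) (l := l) (w := w) (by lia) (by lia)
    (by lia) (by lia)
  have h_mono : ((l + d + (w + 1)).choose (d + 1) : ℝ) ≤ (l + d + (w + 1)).choose w :=
    mod_cast choose_le_choose_of_two_mul_le (by lia) (by lia)
  rw [show 2 * (l + 2) + d - (l + 2) - 2 = l + d by lia, Nat.add_sub_cancel,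
    Nat.choose_symm_add, show 2 * (l + 2) + d - 2 - t = l + d + (w + 1) by lia,
    show l + 2 - 1 - t = w by lia]
  have hd : (0 : ℝ) ≤ d - 1 := sub_nonneg.2 (mod_cast show 1 ≤ d by lia)
  push_cast
  nlinarith

lemma choose_le_card_nonMemberSubfamily_of_twelve_mul_le
    (hF : (F : Set (Finset (Fin n))).Sized k) (hk : 30 ≤ k) (hn : 12 * k ≤ 5 * n)
    (hn' : n ≤ 4 * k)
    (hS : (k - 1 : ℝ) * #(blockedSets F k v) <
      k * #(F.nonMemberSubfamily v) + (n - 1) * (n - k - 2).choose (k - 2))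
    (hSγ : ((k : ℝ) - 1) * (k - 2) * #(blockedSets F k v) <
      (k * (k - 2) + (n - 1) * (n - k - 2)) * #(F.nonMemberSubfamily v)) :
    (n - 3).choose (k - 2) ≤ #(F.nonMemberSubfamily v) := by
  refine choose_le_card_nonMemberSubfamily_of_mul_pow_lt (t := 5) hF (by lia) (by lia) (by lia)
    hS (mul_pow_five_lt_mul_pow_five (mod_cast hk) (mod_cast hn) (mod_cast hn')
      (Nat.cast_nonneg _) hSγ) ?_
  obtain ⟨l, rfl⟩ : ∃ l, k = l + 6 := ⟨k - 6, by lia⟩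
  obtain ⟨N, rfl⟩ : ∃ N, n = N + l + 8 := ⟨n - (l + 8), by lia⟩
  have h_choose := seven_mul_choose_le (l := l) (N := N) (by lia) (by lia) (by lia)
  rw [show N + l + 8 - (l + 6) - 2 = N by lia, show l + 6 - 2 = l + 4 by lia,
    show N + l + 8 - 2 - 5 = N + l + 1 by lia, show l + 6 - 1 - 5 = l by lia]
  rify at hk hn
  push_cast
  nlinarith

lemma choose_le_card_nonMemberSubfamily_of_four_mul_le
    (hF : (F : Set (Finset (Fin n))).Sized k) (hk : 30 ≤ k) (hn : 4 * k ≤ n) {c : ℝ}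
    (hS : (k - 1 : ℝ) * #(blockedSets F k v) <
      k * #(F.nonMemberSubfamily v) + (n - 1) * (n - k - 2).choose (k - 2))
    (hc : (n - 1 - 2 * k : ℝ) * c ≤ k * #(F.nonMemberSubfamily v))
    (hcR : c * (n - k - 2) = (n - k - 2).choose (k - 2) * (k - 2)) :
    (n - 3).choose (k - 2) ≤ #(F.nonMemberSubfamily v) := by
  have h_lower : (n - 4).choose (k - 3) < #(F.nonMemberSubfamily v) :=
    choose_lt_card_nonMemberSubfamily_of_mul_pow_lt (t := 2) hF (by lia) (by lia)
      (mul_sq_lt_mul_sq (mod_cast hk) (mod_cast hn) (Nat.cast_nonneg _) hS hc hcR)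
  have h_blocked : ((n - 4).choose (k - 1) : ℝ) ≤ #(blockedSets F k v) :=
    mod_cast choose_le_card_blockedSets (t := 2) hF (by lia) (by lia) v h_lower.le
  obtain ⟨l, rfl⟩ : ∃ l, k = l + 2 := ⟨k - 2, by lia⟩
  obtain ⟨N, rfl⟩ : ∃ N, n = N + l + 4 := ⟨n - (l + 4), by lia⟩
  have h_choose := mul_choose_add_mul_choose_le (l := l) (N := N) (by lia) (by lia)
  rw [show N + l + 4 - (l + 2) - 2 = N by lia, Nat.add_sub_cancel] at hS
  rw [show N + l + 4 - 4 = N + l by lia, show l + 2 - 1 = l + 1 by lia] at h_blocked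
  rw [show N + l + 4 - 3 = N + l + 1 by lia, Nat.add_sub_cancel]
  push_cast at hS
  by_contra! h
  rify at h
  nlinarith

theorem choose_le_card_nonMemberSubfamily (hF : (F : Set (Finset (Fin n))).Sized k)
    (hint : (F : Set (Finset (Fin n))).Intersecting) (hk : 30 ≤ k) (hn : 2 * k + 5 ≤ n)
    (hnt : ∃ A ∈ F, v ∉ A)
    (hdeg : ∀ i, (n - 2).choose (k - 2) < degree F i + (n - k - 2).choose (k - 2)) :
    (n - 3).choose (k - 2) ≤ #(F.nonMemberSubfamily v) := by
  have hk' : (30 : ℝ) ≤ k := mod_cast hk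
  have hn' : (2 * k + 5 : ℝ) ≤ n := mod_cast hn
  have hS := cast_pred_mul_card_blockedSets_lt hF hint (by lia) (by lia) hdeg v
  obtain ⟨hc, hc_mul⟩ := choose_lt_card_nonMemberSubfamily hF (by lia) hint
    (by rw [Fintype.card_fin]; lia) hnt (by simpa using hdeg)
  rw [Fintype.card_fin] at hc hc_mul
  have hcR : ((n - k - 3).choose (k - 3) : ℝ) * (n - k - 2) =
      (n - k - 2).choose (k - 2) * (k - 2) := by
    have := cast_succ_mul_choose (n - k - 3) (k - 3)
    rw [show n - k - 3 + 1 = n - k - 2 by lia, show k - 3 + 1 = k - 2 by lia] at this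
    rify [show k ≤ n by lia, show 3 ≤ n - k by lia, show 3 ≤ k by lia] at this
    linarith
  have hSγ := pred_mul_pred_mul_lt (by linarith) (by linarith) hS (mod_cast hc.le) hcR
  obtain h_small | h_large := le_total (5 * n) (12 * k)
  · exact choose_le_card_nonMemberSubfamily_of_five_mul_le hF hk hn h_small hS hSγ
  obtain h_mid | h_big := le_total n (4 * k)
  · exact choose_le_card_nonMemberSubfamily_of_twelve_mul_le hF hk h_large h_mid hS hSγ
  · refine choose_le_card_nonMemberSubfamily_of_four_mul_le hF hk h_big hS ?_ hcR
    rify [show 1 ≤ n by lia, show 2 * k ≤ n - 1 by lia] at hc_mul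
    exact hc_mul

end MissingMembers

section SpectralNumerics

variable {n k g q s d τ w x : ℝ}

lemma quadratic_pos_of_three_mul_add_le (hq : 0 < q) (hs : 0 ≤ s) (hτ : 0 ≤ τ)
    (hdg : d * g < q - (s - d)) (h : 3 * q + τ ≤ s) (hx : x ≤ 1) :
    0 < q * x ^ 2 - (s * x - d * (1 - g)) * (2 - x) - τ * x * (1 - x) := by
  have h_gap : 0 < q - (s - d) - d * g := sub_pos.2 hdg
  have h_slope : 0 ≤ s - 3 * q - τ := by linarith
  have hx' : 0 ≤ 1 - x := sub_nonneg.2 hx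
  calc 0 < (q - (s - d) - d * g) + (1 - x) * ((s - 3 * q - τ) + (q - (s - d) - d * g)) +
        (1 - x) ^ 2 * (q + s + τ) := by positivity
    _ = _ := by ring

lemma quadratic_pos_of_discrim_lt (h_lead : 0 < q + s + τ)
    (h : (2 * s + d * (1 - g) + τ) ^ 2 < 4 * (q + s + τ) * (2 * d * (1 - g))) :
    0 < q * x ^ 2 - (s * x - d * (1 - g)) * (2 - x) - τ * x * (1 - x) := by
  refine pos_of_mul_pos_right (a := 4 * (q + s + τ)) ?_ (by positivity)
  calc 0 < (2 * (q + s + τ) * x - (2 * s + d * (1 - g) + τ)) ^ 2 +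
        (4 * (q + s + τ) * (2 * d * (1 - g)) - (2 * s + d * (1 - g) + τ) ^ 2) :=
      add_pos_of_nonneg_of_pos (sq_nonneg _) (sub_pos.2 h)
    _ = _ := by ring

lemma mul_sq_lt_of_mul_le_one (hs : 0 < s) (hs' : s ≤ 10 / 3) (hg : 0 ≤ g)
    (hgs : g * (1 + 14 / 15 * s + 0.42 * s ^ 2) ≤ 1) :
    s * (2.005 + (1 - g)) ^ 2 < 116 / 15 * (0.9 + s) * (1 - g) := by
  set T := 1 + 14 / 15 * s + 0.42 * s ^ 2 with hT
  have hT_pos : 0 < T := by positivity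
  have h_zero : 0 < 116 / 15 * (0.9 + s) - s * 3.005 ^ 2 := by linarith
  have h_one : 0 < 116 / 15 * (0.9 + s) * T * (T - 1) - s * (3.005 * T - 1) ^ 2 := by
    have h_quartic : 0 < 116 / 15 * (0.9 + s) * T * (14 / 15 + 0.42 * s) -
        (3.005 * T - 1) ^ 2 := by
      have h_sq : s ^ 2 ≤ 10 / 3 * s := by nlinarith
      have h_four : s ^ 4 ≤ 100 / 9 * s ^ 2 := by nlinarith
      nlinarith [pow_pos hs 3]
    calc 0 < s * (116 / 15 * (0.9 + s) * T * (14 / 15 + 0.42 * s) - (3.005 * T - 1) ^ 2) := by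
          positivity
      _ = _ := by rw [hT]; ring
  refine sub_pos.1 (pos_of_mul_pos_right (a := T ^ 2) ?_ (by positivity))
  -- The difference is concave in `g`, so it suffices to bound it at `g = 0` and `g = 1 / T`.
  have hgT : 0 ≤ 1 - g * T := sub_nonneg.2 hgs
  calc 0 < (1 - g * T) * (T ^ 2 * (116 / 15 * (0.9 + s) - s * 3.005 ^ 2)) +
        g * T * (116 / 15 * (0.9 + s) * T * (T - 1) - s * (3.005 * T - 1) ^ 2) +
        s * (1 - g * T) * (g * T) := by
        obtain hg | hg := hg.eq_or_lt
        · simp only [← hg, zero_mul, sub_zero, mul_zero, add_zero]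
          positivity
        · positivity
    _ = _ := by ring

lemma discrim_lt_of_mul_le_one (hq : 0.9 ≤ q) (hs : 0 < s) (hs' : s ≤ 10 / 3) (hd : 29 / 30 * s ≤ d)
    (hd' : d ≤ s) (hτ : 0 ≤ τ) (hτ' : τ ≤ s / 200) (hg : 0 ≤ g)
    (hgs : g * (1 + 14 / 15 * s + 0.42 * s ^ 2) ≤ 1) :
    (2 * s + d * (1 - g) + τ) ^ 2 < 4 * (q + s + τ) * (2 * d * (1 - g)) := by
  have hg' : 0 ≤ 1 - g := by
    have : 0 ≤ g * (14 / 15 * s + 0.42 * s ^ 2) := by positivity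
    linarith
  have hd_pos : 0 < d := by linarith
  calc (2 * s + d * (1 - g) + τ) ^ 2 ≤ (2 * s + s * (1 - g) + s / 200) ^ 2 := by gcongr
    _ = s * (s * (2.005 + (1 - g)) ^ 2) := by ring
    _ < s * (116 / 15 * (0.9 + s) * (1 - g)) :=
      mul_lt_mul_of_pos_left (mul_sq_lt_of_mul_le_one hs hs' hg hgs) hs
    _ = 4 * (0.9 + s + 0) * (2 * (29 / 30 * s) * (1 - g)) := by ring
    _ ≤ 4 * (q + s + τ) * (2 * d * (1 - g)) := by gcongr

/-- The cubic Taylor polynomial of `(1 + w) ^ (k - 2)`, which bounds it from below for `0 ≤ w` and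
integers `2 ≤ k`. -/
noncomputable def binomialCubic (k w : ℝ) : ℝ :=
  1 + (k - 2) * w + (k - 2) * (k - 3) / 2 * w ^ 2 + (k - 2) * (k - 3) * (k - 4) / 6 * w ^ 3

lemma sub_sub_div_le_mul_add (hk : 30 ≤ k) (hn : 2 * k + 5 ≤ n) (hw : w * (n - k - 2) = k) :
    (n - k - 2) / 0.42 ≤ (n - 2 * k) * (3 + (k - 4) * w) := by
  refine le_of_mul_le_mul_right ?_ (show 0 < n - k - 2 by linarith)
  have h_poly : (n - k - 2) * (n - k - 2) ≤
      0.42 * (n - 2 * k) * (3 * (n - k - 2) + (k - 4) * k) := by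
    obtain ⟨a, rfl⟩ : ∃ a, k = a + 30 := ⟨k - 30, by ring⟩
    obtain ⟨b, rfl⟩ : ∃ b, n = 2 * (a + 30) + b + 5 := ⟨n - 2 * (a + 30) - 5, by ring⟩
    have ha : 0 ≤ a := by linarith
    have hb : 0 ≤ b := by linarith
    rw [← sub_nonneg]
    ring_nf
    positivity
  linear_combination h_poly / 0.42 + (n - 2 * k) * (4 - k) * hw

lemma mul_mul_lt_mul_binomialCubic (hk : 30 ≤ k) (hn : 2 * k + 5 ≤ n) (h : 3 * n ≤ k ^ 2)
    (hw : w * (n - k - 2) = k) :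
    k * (k - 1) * n < (n - 2 * k) * (n - k) * binomialCubic k w := by
  have hN : 0 < n - k - 2 := by linarith
  have hw_pos : 0 < w := pos_of_mul_pos_left (by linarith) hN.le
  have hk₂ : 0 < k - 2 := by linarith
  have hk₃ : 0 < k - 3 := by linarith
  have hk₄ : 0 < k - 4 := by linarith
  have he : 0 < n - 2 * k := by linarith
  have h_quad : 2.52 * n ≤ (k - 2) * (k - 3) := by nlinarith
  have h_cube := sub_sub_div_le_mul_add hk hn hw
  calc k * (k - 1) * n < k * k * n := by
        gcongr
        · linarith
        · linarith
    _ ≤ k * k * ((k - 2) * (k - 3) / 2.52) := by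
        gcongr
        rw [le_div_iff₀ (by norm_num)]
        linarith
    _ = (k - 2) * (k - 3) / 6 * w * k * ((n - k - 2) / 0.42) := by
        linear_combination -(k - 2) * (k - 3) / 2.52 * k * hw
    _ ≤ (k - 2) * (k - 3) / 6 * w * k * ((n - 2 * k) * (3 + (k - 4) * w)) := by gcongr
    _ = (n - 2 * k) * (n - k - 2) * ((k - 2) * (k - 3) / 2 * w ^ 2 +
          (k - 2) * (k - 3) * (k - 4) / 6 * w ^ 3) := by
        linear_combination -(n - 2 * k) * ((k - 2) * (k - 3) / 2 * w +
          (k - 2) * (k - 3) * (k - 4) / 6 * w ^ 2) * hw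
    _ ≤ (n - 2 * k) * (n - k) * ((k - 2) * (k - 3) / 2 * w ^ 2 +
          (k - 2) * (k - 3) * (k - 4) / 6 * w ^ 3) := by
        gcongr ?_ * ?_
        linarith
    _ ≤ _ := by
        have h_low : 0 ≤ 1 + (k - 2) * w := by positivity
        refine mul_le_mul_of_nonneg_left ?_ (mul_nonneg he.le (by linarith))
        rw [binomialCubic]
        linarith

lemma three_mul_div_add_div_le (hk : 30 ≤ k) (hn : 2 * k + 5 ≤ n) (h : 3 * n ≤ k ^ 2) :
    3 * ((n - k) / n) + (k - 1) * (k - 2) / ((n - 2 * k) * (n - 3)) ≤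
      k ^ 2 * (n - 1) / (n * (n - k)) := by
  obtain ⟨e, rfl⟩ : ∃ e, n = 2 * k + e := ⟨n - 2 * k, by ring⟩
  have he : 5 ≤ e := by linarith
  have hn₃ : 0 < 2 * k + e - 3 := by linarith
  have h_tail : (k - 1) * (k - 2) / (e * (2 * k + e - 3)) ≤ k ^ 2 / ((2 * k + e) * e) := by
    rw [div_le_div_iff₀ (by positivity) (by positivity)]
    have h_pred : (k - 1) * (k - 2) * (2 * k + e) ≤ k ^ 2 * (2 * k + e - 3) := by nlinarith
    linear_combination e * h_pred
  have h_poly : (3 * (k + e) * e + k ^ 2) * (k + e) ≤ k ^ 2 * (2 * k + e - 1) * e := by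
    have h_sq : (k + e) ^ 2 * e ≤ (2 * k + e) * ((2 * k + e - 1) * e - (k + e)) := by
      obtain ⟨a, rfl⟩ : ∃ a, k = a + 30 := ⟨k - 30, by ring⟩
      obtain ⟨b, rfl⟩ : ∃ b, e = b + 5 := ⟨e - 5, by ring⟩
      have ha : 0 ≤ a := by linarith
      have hb : 0 ≤ b := by linarith
      rw [← sub_nonneg]
      ring_nf
      positivity
    have h_pos : 0 ≤ (2 * k + e - 1) * e - (k + e) := by nlinarith
    linear_combination 3 * h_sq + ((2 * k + e - 1) * e - (k + e)) * h
  rw [show 2 * k + e - 2 * k = e by ring, show 2 * k + e - k = k + e by ring]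
  calc 3 * ((k + e) / (2 * k + e)) + (k - 1) * (k - 2) / (e * (2 * k + e - 3))
      ≤ 3 * ((k + e) / (2 * k + e)) + k ^ 2 / ((2 * k + e) * e) := by gcongr
    _ = (3 * (k + e) * e + k ^ 2) * (k + e) / ((2 * k + e) * e * (k + e)) := by field_simp
    _ ≤ k ^ 2 * (2 * k + e - 1) * e / ((2 * k + e) * e * (k + e)) := by gcongr
    _ = _ := by field_simp

/-- The normalized gap between the lower bound (from the spectrum of the Kneser graph) and the upper
bound (from the range of the degrees) on the degree variance of an intersecting family of
`x * C(n - 1, k - 1)` sets whose degrees are at least `(1 - g) * C(n - 2, k - 2)`. -/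
noncomputable def varianceGap (n k g x : ℝ) : ℝ :=
  (n - k) / n * x ^ 2 -
    (k ^ 2 * (n - 1) / (n * (n - k)) * x - k * (k - 1) / (n - k) * (1 - g)) * (2 - x) -
    (k - 1) * (k - 2) / ((n - 2 * k) * (n - 3)) * x * (1 - x)

lemma div_sub_div_eq (hn : n ≠ 0) (hkn : n - k ≠ 0) :
    k ^ 2 * (n - 1) / (n * (n - k)) - k * (k - 1) / (n - k) = k / n := by
  field_simp
  ring

lemma varianceGap_pos_of_three_mul_le_sq (hk : 30 ≤ k) (hn : 2 * k + 5 ≤ n) (h : 3 * n ≤ k ^ 2)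
    (hw : w * (n - k - 2) = k)
    (hgw : g * binomialCubic k w ≤ 1) (hx : x ≤ 1) :
    0 < varianceGap n k g x := by
  have h_cubic := mul_mul_lt_mul_binomialCubic hk hn h hw
  set T := binomialCubic k w
  have hn_pos : 0 < n := by linarith
  have hn₁ : 0 < n - 1 := by linarith
  have hn₃ : 0 < n - 3 := by linarith
  have hk₁ : 0 < k - 1 := by linarith
  have hk₂ : 0 < k - 2 := by linarith
  have hkn : 0 < n - k := by linarith
  have hkn₂ : 0 < n - 2 * k := by linarith
  have hX : 0 < k * (k - 1) * n := mul_pos (mul_pos (by linarith) hk₁) hn_pos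
  have hT : 0 < T := pos_of_mul_pos_right (hX.trans h_cubic) (by positivity)
  have h_mul : k * (k - 1) * n * g < (n - 2 * k) * (n - k) := by
    refine lt_of_mul_lt_mul_right ?_ hT.le
    calc k * (k - 1) * n * g * T = k * (k - 1) * n * (g * T) := by ring
      _ ≤ k * (k - 1) * n := mul_le_of_le_one_right hX.le hgw
      _ < (n - 2 * k) * (n - k) * T := h_cubic
  refine quadratic_pos_of_three_mul_add_le (by positivity) (by positivity) (by positivity) ?_
    (three_mul_div_add_div_le hk hn h) hx
  rw [div_sub_div_eq hn_pos.ne' hkn.ne', ← sub_div, div_mul_eq_mul_div,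
    div_lt_div_iff₀ hkn hn_pos]
  linarith

lemma sq_mul_div_le (hk : 0 ≤ k) (hn : 10 * k ≤ n) (hn₁ : 1 ≤ n) (h : k ^ 2 ≤ 3 * n) :
    k ^ 2 * (n - 1) / (n * (n - k)) ≤ 10 / 3 := by
  rw [div_le_div_iff₀ (mul_pos (by linarith) (by linarith)) (by norm_num)]
  calc k ^ 2 * (n - 1) * 3 ≤ 3 * n * n * 3 := by
        gcongr
        linarith
    _ ≤ 10 * (n * (n - k)) := by nlinarith

lemma mul_sq_mul_div_le (hk : 30 ≤ k) (hkn : k < n) :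
    29 / 30 * (k ^ 2 * (n - 1) / (n * (n - k))) ≤ k * (k - 1) / (n - k) := by
  have hkn' : 0 < n - k := sub_pos.2 hkn
  have hn : 0 < n := by linarith
  have hk₁ : 0 ≤ k - 1 := by linarith
  calc 29 / 30 * (k ^ 2 * (n - 1) / (n * (n - k)))
      = k * (29 / 30 * k) * (n - 1) / (n * (n - k)) := by ring
    _ ≤ k * (k - 1) * n / (n * (n - k)) := by
        gcongr <;> linarith
    _ = k * (k - 1) / (n - k) := by field_simp

lemma pred_mul_pred_div_le (hk : 30 ≤ k) (hn : 10 * k ≤ n) :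
    (k - 1) * (k - 2) / ((n - 2 * k) * (n - 3)) ≤ k ^ 2 * (n - 1) / (n * (n - k)) / 200 := by
  have hn_pos : 0 < n := by linarith
  have hn₁ : 0 < n - 1 := by linarith
  have hn₃ : 0 < n - 3 := by linarith
  have hkn : 0 < n - k := by linarith
  have hkn₂ : 0 < n - 2 * k := by linarith
  have h_num : (k - 1) * (k - 2) ≤ k ^ 2 := by nlinarith
  have h_den : n * (n - k) * 200 ≤ (n - 2 * k) * (n - 3) * (n - 1) := by
    have h_left : 8 / 9 * (n - k) ≤ n - 2 * k := by linarith
    have h_right : 225 * n ≤ (n - 3) * (n - 1) := by nlinarith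
    calc n * (n - k) * 200 = 8 / 9 * (n - k) * (225 * n) := by ring
      _ ≤ (n - 2 * k) * ((n - 3) * (n - 1)) := by gcongr
      _ = _ := by ring
  rw [div_div, div_le_div_iff₀ (by positivity) (by positivity)]
  calc (k - 1) * (k - 2) * (n * (n - k) * 200)
      ≤ k ^ 2 * ((n - 2 * k) * (n - 3) * (n - 1)) := by gcongr
    _ = _ := by ring

lemma quadratic_le_binomialCubic (hk : 30 ≤ k) (hn : 2 * k + 5 ≤ n) (hw : w * (n - k - 2) = k) :
    1 + 14 / 15 * (k ^ 2 * (n - 1) / (n * (n - k))) +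
        0.42 * (k ^ 2 * (n - 1) / (n * (n - k))) ^ 2 ≤
      binomialCubic k w := by
  have hN : 0 < n - k - 2 := by linarith
  have hw_pos : 0 < w := pos_of_mul_pos_left (by linarith) hN.le
  have hn_pos : 0 < n := by linarith
  have hn₁ : 0 < n - 1 := by linarith
  have hkn : 0 < n - k := by linarith
  have hk₂ : 0 < k - 2 := by linarith
  have hk₃ : 0 < k - 3 := by linarith
  have hk₄ : 0 < k - 4 := by linarith
  set s := k ^ 2 * (n - 1) / (n * (n - k)) with hs
  have : 0 ≤ s := by positivity
  have h_linear : 14 / 15 * s ≤ (k - 2) * w := by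
    rw [hs, mul_div_assoc', div_le_iff₀ (by positivity)]
    have h_low : 14 / 15 * k ≤ k - 2 := by linarith
    have h_prod : (n - 1) * (n - k - 2) ≤ n * (n - k) := by nlinarith
    calc 14 / 15 * (k ^ 2 * (n - 1)) = 14 / 15 * k * w * ((n - 1) * (n - k - 2)) := by
          linear_combination -(14 / 15) * k * (n - 1) * hw
      _ ≤ (k - 2) * w * (n * (n - k)) := by gcongr
  have h_square : 0.42 * s ^ 2 ≤ (k - 2) * (k - 3) / 2 * w ^ 2 := by
    have h_low : 27 / 56 * (k - 2) ≤ (k - 3) / 2 := by linarith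
    calc 0.42 * s ^ 2 = 27 / 56 * (14 / 15 * s) ^ 2 := by ring
      _ ≤ 27 / 56 * ((k - 2) * w) ^ 2 := by gcongr
      _ = 27 / 56 * (k - 2) * ((k - 2) * w ^ 2) := by ring
      _ ≤ (k - 3) / 2 * ((k - 2) * w ^ 2) := by gcongr
      _ = _ := by ring
  have h_cube : 0 ≤ (k - 2) * (k - 3) * (k - 4) / 6 * w ^ 3 := by positivity
  rw [binomialCubic]
  linarith

lemma varianceGap_pos_of_sq_le_three_mul (hk : 30 ≤ k) (h : k ^ 2 ≤ 3 * n)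
    (hw : w * (n - k - 2) = k) (hg : 0 ≤ g)
    (hgw : g * binomialCubic k w ≤ 1) :
    0 < varianceGap n k g x := by
  have hn : 10 * k ≤ n := by nlinarith
  have hn_pos : 0 < n := by linarith
  have hn₁ : 0 < n - 1 := by linarith
  have hn₃ : 0 < n - 3 := by linarith
  have hk₁ : 0 < k - 1 := by linarith
  have hk₂ : 0 < k - 2 := by linarith
  have hkn : 0 < n - k := by linarith
  have hkn₂ : 0 < n - 2 * k := by linarith
  have hq : 0.9 ≤ (n - k) / n := by
    rw [le_div_iff₀ hn_pos]
    linarith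
  have hd : k * (k - 1) / (n - k) ≤ k ^ 2 * (n - 1) / (n * (n - k)) := by
    rw [← sub_nonneg, div_sub_div_eq hn_pos.ne' hkn.ne']
    positivity
  exact quadratic_pos_of_discrim_lt (by positivity) <|
    discrim_lt_of_mul_le_one hq (by positivity) (sq_mul_div_le (by linarith) hn (by linarith) h)
      (mul_sq_mul_div_le hk (by linarith)) hd (by positivity) (pred_mul_pred_div_le hk hn) hg <|
    (mul_le_mul_of_nonneg_left (quadratic_le_binomialCubic hk (by linarith) hw) hg).trans hgw

lemma varianceGap_pos (hk : 30 ≤ k) (hn : 2 * k + 5 ≤ n) (hw : w * (n - k - 2) = k) (hg : 0 ≤ g)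
    (hgw : g * binomialCubic k w ≤ 1) (hx : x ≤ 1) :
    0 < varianceGap n k g x := by
  obtain h | h := le_total (3 * n) (k ^ 2)
  · exact varianceGap_pos_of_three_mul_le_sq hk hn h hw hgw hx
  · exact varianceGap_pos_of_sq_le_three_mul hk h hw hg hgw

end SpectralNumerics

section DegreeRange

lemma cast_choose_eq_div_mul {n k : ℕ} (hn : 0 < n) (hk : 0 < k) :
    (n.choose k : ℝ) = n / k * (n - 1).choose (k - 1) := by
  obtain ⟨n, rfl⟩ := Nat.exists_eq_add_one.2 hn
  obtain ⟨k, rfl⟩ := Nat.exists_eq_add_one.2 hk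
  have := cast_succ_mul_choose n k
  push_cast
  field_simp
  exact this.symm

lemma cast_choose_sub_two_sub_two {n k : ℕ} (hn : 2 ≤ n) (hk : 2 ≤ k) :
    ((n - 2).choose (k - 2) : ℝ) = (k - 1) / (n - 1) * (n - 1).choose (k - 1) := by
  have h := cast_choose_eq_div_mul (show 0 < n - 1 by lia) (show 0 < k - 1 by lia)
  rify [show 1 ≤ n by lia, show 1 ≤ k by lia] at h
  rify at hn hk
  have hn₁ : (n - 1 : ℝ) ≠ 0 := by linarith
  have hk₁ : (k - 1 : ℝ) ≠ 0 := by linarith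
  rw [h, Nat.sub_sub, Nat.sub_sub]
  field_simp

lemma cast_choose_sub_two_sub_one {n k : ℕ} (hn : 2 ≤ n) (hk : 1 ≤ k) :
    ((n - 2).choose (k - 1) : ℝ) = (n - k) / (n - 1) * (n - 1).choose (k - 1) := by
  have h := cast_choose_mul_succ (n - 2) (k - 1)
  rw [show n - 2 + 1 = n - 1 by lia] at h
  rify [hn, hk] at h
  have hn₁ : (n - 1 : ℝ) ≠ 0 := (sub_pos.2 (Nat.one_lt_cast.2 hn)).ne'
  field_simp
  linear_combination h

lemma cast_choose_sub_three {m k : ℕ} (hm : 3 ≤ m) (hk : 3 ≤ k) :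
    ((m - 3).choose (k - 3) : ℝ) =
      (m - 1).choose (k - 1) * ((k - 1) * (k - 2) / ((m - 1) * (m - 2))) := by
  have h₁ := cast_choose_sub_two_sub_two (show 2 ≤ m by lia) (show 2 ≤ k by lia)
  have h₂ := cast_choose_sub_two_sub_two (show 2 ≤ m - 1 by lia) (show 2 ≤ k - 1 by lia)
  simp only [Nat.sub_sub] at h₂
  rify [show 1 ≤ m by lia, show 1 ≤ k by lia] at h₂
  rw [h₂, h₁, sub_sub, sub_sub, one_add_one_eq_two, ← mul_assoc, div_mul_div_comm, mul_comm,
    mul_comm (k - 2 : ℝ), mul_comm (m - 2 : ℝ)]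

lemma binomialCubic_mul_choose_le {n k : ℕ} (hk : 2 ≤ k) (hn : k + 2 < n) :
    binomialCubic k (k / (n - k - 2)) * (n - k - 2).choose (k - 2) ≤ (n - 2).choose (k - 2) := by
  have hN : ((n - k - 2 : ℕ) : ℝ) = n - k - 2 := by
    rw [Nat.sub_sub, Nat.cast_sub hn.le]
    push_cast
    ring
  have hw : (0 : ℝ) ≤ k / ↑(n - k - 2) := by positivity
  have h_pow := one_add_div_pow_mul_choose_le (show 0 < n - k - 2 by lia) k (k - 2)
  rw [show n - k - 2 + k = n - 2 by lia] at h_pow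
  rw [← hN]
  refine le_trans (mul_le_mul_of_nonneg_right ?_ (Nat.cast_nonneg _)) h_pow
  refine (le_of_eq ?_).trans (one_add_cubic_le_one_add_pow hw (k - 2))
  rw [binomialCubic, Nat.cast_sub hk]
  push_cast
  ring

lemma mul_binomialCubic_le_one {n k : ℕ} {g : ℝ} (hk : 2 ≤ k) (hn : k + 2 < n)
    (hg : (n - k - 2).choose (k - 2) = g * (n - 2).choose (k - 2)) :
    g * binomialCubic k (k / (n - k - 2)) ≤ 1 := by
  have hC_pos : (0 : ℝ) < (n - 2).choose (k - 2) := mod_cast Nat.choose_pos (by lia)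
  refine le_of_mul_le_mul_right ?_ hC_pos
  linear_combination
    binomialCubic_mul_choose_le hk hn - binomialCubic k (k / (n - k - 2)) * hg

lemma sum_sub_sq_le {ι : Type*} {s : Finset ι} {f : ι → ℝ} {a b μ : ℝ}
    (h_sum : ∑ i ∈ s, f i = #s * μ) (ha : ∀ i ∈ s, a ≤ f i) (hb : ∀ i ∈ s, f i ≤ b) :
    ∑ i ∈ s, (f i - μ) ^ 2 ≤ #s * ((μ - a) * (b - μ)) := by
  calc ∑ i ∈ s, (f i - μ) ^ 2 ≤ ∑ i ∈ s, ((a + b - 2 * μ) * f i + (μ ^ 2 - a * b)) := by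
        gcongr with i hi
        linarith [mul_nonneg (sub_nonneg.2 (ha i hi)) (sub_nonneg.2 (hb i hi))]
    _ = _ := by
        rw [sum_add_distrib, ← mul_sum, h_sum, sum_const, nsmul_eq_mul]
        ring

variable {n k : ℕ} {F : Finset (Finset (Fin n))} {E x V : ℝ}

lemma le_of_le_add_div_mul {n k : ℝ} (hn : 2 * k < n) (hn₃ : 3 < n) (hkn : 2 < n - k)
    (h : (n - k) / n * x ^ 2 ≤
      V + (k - 1) * (k - 2) / ((n - k - 1) * (n - k - 2)) * (x - k / n * x ^ 2 - V)) :
    (n - k) / n * x ^ 2 - (k - 1) * (k - 2) / ((n - 2 * k) * (n - 3)) * x * (1 - x) ≤ V := by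
  have hD : 0 < (n - k - 1) * (n - k - 2) := mul_pos (by linarith) (by linarith)
  have hUW : 0 < (n - 2 * k) * (n - 3) := mul_pos (by linarith) (by linarith)
  have hnk : (n - k) / n = 1 - k / n := by
    rw [sub_div, div_self (by linarith)]
  rw [hnk, ← sub_le_iff_le_add', div_mul_eq_mul_div, le_div_iff₀ hD] at h
  rw [hnk, sub_le_comm, mul_assoc, div_mul_eq_mul_div, le_div_iff₀ hUW]
  linear_combination h

lemma le_degreeVariance (hF : (F : Set (Finset (Fin n))).Sized k)
    (hint : (F : Set (Finset (Fin n))).Intersecting) (hk : 3 ≤ k) (hn : 2 * k + 1 ≤ n)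
    (hE : (n - 1).choose (k - 1) = E) (hx : #F = x * E)
    (hV : ∑ i, (degree F i - k * #F / n : ℝ) ^ 2 = E ^ 2 * (n - k) / (n - 1) * V) :
    (n - k) / n * x ^ 2 - (k - 1) * (k - 2) / ((n - 2 * k) * (n - 3)) * x * (1 - x) ≤ V := by
  have hn_pos : (0 : ℝ) < n := mod_cast (show 0 < n by lia)
  have hk_pos : (0 : ℝ) < k := mod_cast (show 0 < k by lia)
  have hE_pos : 0 < E := hE ▸ mod_cast Nat.choose_pos (by lia)
  have hL_pos : (0 : ℝ) < (n - k - 1).choose (k - 1) := mod_cast Nat.choose_pos (by lia)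
  have hnk_pos : (0 : ℝ) < n - k := sub_pos.2 (mod_cast show k < n by lia)
  have hn₁_pos : (0 : ℝ) < n - 1 := sub_pos.2 (mod_cast show 1 < n by lia)
  have h := card_sq_le_of_intersecting hF hint hk (by rw [Fintype.card_fin]; lia) rfl
  have h_mean : (#F : ℝ) ^ 2 / n.choose k = E * (k / n * x ^ 2) := by
    rw [hx, cast_choose_eq_div_mul (show 0 < n by lia) (show 0 < k by lia), hE]
    field_simp
  have h_var : E ^ 2 * (n - k) / (n - 1) * V / (n - 2).choose (k - 1) = E * V := by
    rw [cast_choose_sub_two_sub_one (by lia) (by lia), hE]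
    field_simp
  have h_kneser : ((n - k).choose k : ℝ) = (n - k - 1).choose (k - 1) * ((n - k) / k) := by
    rw [cast_choose_eq_div_mul (show 0 < n - k by lia) (by lia), Nat.cast_sub (by lia), mul_comm]
  have h_cancel : (n - k : ℝ) / k * (k / n) = (n - k) / n := div_mul_div_cancel₀ hk_pos.ne'
  have h_third := cast_choose_sub_three (show 3 ≤ n - k by lia) hk
  rw [Nat.cast_sub (by lia : k ≤ n)] at h_third
  rw [Fintype.card_fin, hV, h_mean, h_var, h_kneser, h_third, hx] at h
  rify at hk hn
  refine le_of_le_add_div_mul (by linarith) (by linarith) (by linarith)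
    (le_of_mul_le_mul_left (a := (n - k - 1).choose (k - 1) * E) ?_ (by positivity))
  linear_combination h - (n - k - 1).choose (k - 1) * E * x ^ 2 * h_cancel

lemma degreeVariance_le {g : ℝ} (hF : (F : Set (Finset (Fin n))).Sized k) (hkn : k < n)
    (hn : 1 < n) (hE : 0 < E) (hx : #F = x * E)
    (hlo : ∀ i, (k - 1) / (n - 1) * E * (1 - g) ≤ degree F i)
    (hhi : ∀ i, degree F i ≤ 2 * k / n * E)
    (hV : ∑ i, (degree F i - k * #F / n : ℝ) ^ 2 = E ^ 2 * (n - k) / (n - 1) * V) :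
    V ≤ (k ^ 2 * (n - 1) / (n * (n - k)) * x - k * (k - 1) / (n - k) * (1 - g)) * (2 - x) := by
  have hn_pos : (0 : ℝ) < n := mod_cast (zero_lt_one.trans hn)
  have hn₁ : (0 : ℝ) < n - 1 := sub_pos.2 (mod_cast hn)
  have hkn' : (0 : ℝ) < n - k := sub_pos.2 (mod_cast hkn)
  have h_sum : ∑ i, (degree F i : ℝ) = #(univ : Finset (Fin n)) * (k * #F / n) := by
    rw [card_univ, Fintype.card_fin, mul_div_cancel₀ _ hn_pos.ne']
    exact_mod_cast sum_degree hF
  have h_var := sum_sub_sq_le h_sum (fun i _ => hlo i) (fun i _ => hhi i)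
  rw [hV, card_univ, Fintype.card_fin, hx] at h_var
  refine le_of_mul_le_mul_left (h_var.trans_eq ?_)
    (by positivity : 0 < E ^ 2 * (n - k) / (n - 1))
  field_simp

lemma degree_le_of_le_choose_add_choose (hk : 2 ≤ k) (hn : 2 ≤ n) (hkn : k ≤ n) {v : Fin n}
    (h : degree F v ≤ (n - 2).choose (k - 2) + (n - 3).choose (k - 2)) :
    (degree F v : ℝ) ≤ 2 * k / n * (n - 1).choose (k - 1) := by
  have h_mono : (n - 3).choose (k - 2) ≤ (n - 2).choose (k - 2) :=
    Nat.choose_le_choose _ (by lia)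
  have h_ratio : ((k : ℝ) - 1) / (n - 1) ≤ k / n := by
    rify at hn hkn
    rw [div_le_div_iff₀ (by linarith) (by linarith)]
    linarith
  calc (degree F v : ℝ) ≤ 2 * (n - 2).choose (k - 2) := mod_cast (by lia)
    _ = 2 * ((k - 1) / (n - 1)) * (n - 1).choose (k - 1) := by
        rw [cast_choose_sub_two_sub_two hn hk, mul_assoc]
    _ ≤ 2 * (k / n) * (n - 1).choose (k - 1) := by gcongr
    _ = _ := by ring

lemma degree_le_choose_add_choose (hF : (F : Set (Finset (Fin n))).Sized k)
    (hint : (F : Set (Finset (Fin n))).Intersecting) (hk : 2 ≤ k) (hkn : 2 * k ≤ n) {v : Fin n}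
    (h : (n - 3).choose (k - 2) ≤ #(F.nonMemberSubfamily v)) :
    degree F v ≤ (n - 2).choose (k - 2) + (n - 3).choose (k - 2) := by
  have h_blocked : (n - 3).choose (k - 1) ≤ #(blockedSets F k v) :=
    choose_le_card_blockedSets (t := 1) hF (by lia) hkn v h
  have h_degree := degree_add_card_blockedSets_le hF hint v
  have h₁ := Nat.choose_succ_succ (n - 2) (k - 2)
  have h₂ := Nat.choose_succ_succ (n - 3) (k - 2)
  rw [Fintype.card_fin] at h_degree
  rw [Nat.succ_eq_add_one, show n - 2 + 1 = n - 1 by lia,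
    Nat.succ_eq_add_one, show k - 2 + 1 = k - 1 by lia] at h₁
  rw [Nat.succ_eq_add_one, show n - 3 + 1 = n - 2 by lia,
    Nat.succ_eq_add_one, show k - 2 + 1 = k - 1 by lia] at h₂
  lia

theorem exists_degree_add_choose_le (hF : (F : Set (Finset (Fin n))).Sized k)
    (hint : (F : Set (Finset (Fin n))).Intersecting) (hk : 30 ≤ k) (hn : 2 * k + 5 ≤ n)
    (hhi : ∀ i, degree F i ≤ (n - 2).choose (k - 2) + (n - 3).choose (k - 2)) :
    ∃ i, degree F i + (n - k - 2).choose (k - 2) ≤ (n - 2).choose (k - 2) := by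
  by_contra! hlo
  have hk' : (30 : ℝ) ≤ k := mod_cast hk
  have hn' : (2 * k + 5 : ℝ) ≤ n := mod_cast hn
  obtain ⟨E, hE⟩ : ∃ E : ℝ, (n - 1).choose (k - 1) = E := ⟨_, rfl⟩
  have hE_pos : 0 < E := hE ▸ mod_cast Nat.choose_pos (by lia)
  have hC_pos : (0 : ℝ) < (n - 2).choose (k - 2) := mod_cast Nat.choose_pos (by lia)
  obtain ⟨x, hx⟩ : ∃ x, #F = x * E := ⟨#F / E, by field_simp⟩
  obtain ⟨g, hg⟩ : ∃ g : ℝ, (n - k - 2).choose (k - 2) = g * (n - 2).choose (k - 2) :=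
    ⟨(n - k - 2).choose (k - 2) / (n - 2).choose (k - 2), by field_simp⟩
  have hg_nonneg : 0 ≤ g := nonneg_of_mul_nonneg_left (hg ▸ Nat.cast_nonneg _) hC_pos
  obtain ⟨V, hV⟩ : ∃ V : ℝ,
      ∑ i, (degree F i - k * #F / n : ℝ) ^ 2 = E ^ 2 * (n - k) / (n - 1) * V := by
    have : 0 < E ^ 2 * (n - k : ℝ) / (n - 1) :=
      div_pos (mul_pos (by positivity) (by linarith)) (by linarith)
    exact ⟨_, (mul_div_cancel₀ _ this.ne').symm⟩
  have hx_le : x ≤ 1 := by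
    refine le_of_mul_le_mul_right ?_ hE_pos
    rw [← hx, one_mul, ← hE]
    exact_mod_cast erdos_ko_rado hint hF (by lia)
  have h_lower := le_degreeVariance hF hint (by lia) (by lia) hE hx hV
  have h_upper := degreeVariance_le (g := g) hF (by lia) (by lia) hE_pos hx
    (fun i => by
      have h := (Nat.cast_le (α := ℝ)).2 (hlo i).le
      push_cast at h
      rw [hg, cast_choose_sub_two_sub_two (by lia) (by lia), hE] at h
      linarith)
    (fun i => hE ▸ degree_le_of_le_choose_add_choose (by lia) (by lia) (by lia) (hhi i)) hV
  have h_gap := varianceGap_pos hk' hn' (div_mul_cancel₀ _ (by linarith)) hg_nonneg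
    (mul_binomialCubic_le_one (by lia) (by lia) hg) hx_le
  rw [varianceGap] at h_gap
  linarith

end DegreeRange

end DegreeHM

/-- Degree version of the Hilton–Milner theorem (Theorem 5, case t = 1):
if `k ≥ 30` and `n ≥ 2k + 5`, then any non-trivial intersecting family `F`
of `k`-subsets of `[n]` satisfies `δ_1(F) ≤ C(n-2, k-2) - C(n-k-2, k-2)`. -/
theorem degree_HM (n k : ℕ) (hk : 30 ≤ k) (hn : 2 * k + 5 ≤ n)
    (F : Finset (Finset (Fin n)))
    (hcard : ∀ A ∈ F, A.card = k)
    (hint : ∀ A ∈ F, ∀ B ∈ F, (A ∩ B).Nonempty)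
    (hnontriv : ¬ ∃ i : Fin n, ∀ A ∈ F, i ∈ A) :
    ∃ i : Fin n, ((F.filter (fun A => i ∈ A)).card : ℤ) ≤
      ((n - 2).choose (k - 2) : ℤ) - ((n - k - 2).choose (k - 2) : ℤ) := by
  have hF : (F : Set (Finset (Fin n))).Sized k := fun A hA => hcard A hA
  have hint' : (F : Set (Finset (Fin n))).Intersecting := fun A hA B hB =>
    Finset.not_disjoint_iff_nonempty_inter.2 (hint A hA B hB)
  by_contra! hlarge
  have hdeg (i : Fin n) :
      (n - 2).choose (k - 2) < DegreeHM.degree F i + (n - k - 2).choose (k - 2) := by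
    have := hlarge i
    rw [DegreeHM.degree]
    lia
  have hmissing (v : Fin n) : ∃ A ∈ F, v ∉ A := by
    by_contra! hv
    exact hnontriv ⟨v, hv⟩
  have hupper (v : Fin n) :=
    DegreeHM.degree_le_choose_add_choose hF hint' (by lia) (by lia)
      (DegreeHM.choose_le_card_nonMemberSubfamily hF hint' hk hn (hmissing v) hdeg)
  obtain ⟨i, hi⟩ := DegreeHM.exists_degree_add_choose_le hF hint' hk hn hupper
  exact (hdeg i).not_ge hi
end
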